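/- (Convection–diffusion regime.) There exist constants κ, σ, C > 0, independent of ε₁ and of p, such that for all 0 < ε₁ ≤ 1 with ε₂ = 1, the solution u of the problem and the weak Galerkin solution u_p of degree p on the Spectral Boundary Layer mesh ω_BL(κ,p) satisfy |||u − u_p|||_p ≤ C e^{−σ p}. -/

import Mathlib

noncomputable section

open MeasureTheory Set

/-- A mesh `0 = x₀ < x₁ < ⋯ < x_N = 1` on the interval `I = (0,1)`. -/
structure Mesh (N : ℕ) where
  pt : Fin (N + 1) → ℝ
  mono : StrictMono pt
  left : pt 0 = 0
  right : pt (Fin.last N) = 1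

namespace Mesh

variable {N : ℕ}

/-- The left endpoint `x_{j-1}` of the `j`-th cell `I_j`. -/
def xl (m : Mesh N) (j : Fin N) : ℝ := m.pt j.castSucc

/-- The right endpoint `x_j` of the `j`-th cell `I_j`. -/
def xr (m : Mesh N) (j : Fin N) : ℝ := m.pt j.succ

/-- The width `h_j` of the `j`-th cell. -/
def width (m : Mesh N) (j : Fin N) : ℝ := m.xr j - m.xl j

end Mesh

/-- `f` coincides (everywhere) with a polynomial of degree at most `p`. -/
def IsPolyDeg (f : ℝ → ℝ) (p : ℕ) : Prop :=
  ∃ q : Polynomial ℝ, q.natDegree ≤ p ∧ ∀ t, f t = q.eval t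

/-- `D` is the weak derivative of degree `p` of the weak function with interior part `v0`
and boundary values `vl`, `vr` on the cell `(a,b)`. -/
def IsWeakDerivOn (a b : ℝ) (p : ℕ) (v0 : ℝ → ℝ) (vl vr : ℝ) (D : ℝ → ℝ) : Prop :=
  IsPolyDeg D p ∧ ∀ q : Polynomial ℝ, q.natDegree ≤ p →
    (∫ t in a..b, D t * q.eval t) =
      -(∫ t in a..b, v0 t * q.derivative.eval t) + vr * q.eval b - vl * q.eval a

/-- `D` is the (cellwise) weak derivative `D_p v` of the weak function `v = (v0, vb)`. -/
def IsWeakDeriv {N : ℕ} (m : Mesh N) (p : ℕ) (v0 : Fin N → ℝ → ℝ)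
    (vb : Fin (N + 1) → ℝ) (D : Fin N → ℝ → ℝ) : Prop :=
  ∀ j, IsWeakDerivOn (m.xl j) (m.xr j) p (v0 j) (vb j.castSucc) (vb j.succ) (D j)

/-- `D` is the weak convection derivative of degree `p` on the cell `(a,b)`,
with convection coefficient `bb`. -/
def IsWeakConvDerivOn (bb : ℝ → ℝ) (a b : ℝ) (p : ℕ) (v0 : ℝ → ℝ) (vl vr : ℝ)
    (D : ℝ → ℝ) : Prop :=
  IsPolyDeg D p ∧ ∀ q : Polynomial ℝ, q.natDegree ≤ p →
    (∫ t in a..b, D t * q.eval t) =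
      -(∫ t in a..b, v0 t * deriv (fun s => bb s * q.eval s) t)
      + vr * (bb b * q.eval b) - vl * (bb a * q.eval a)

/-- `D` is the (cellwise) weak convection derivative `D_p^c v` of `v = (v0, vb)`. -/
def IsWeakConvDeriv {N : ℕ} (m : Mesh N) (bb : ℝ → ℝ) (p : ℕ) (v0 : Fin N → ℝ → ℝ)
    (vb : Fin (N + 1) → ℝ) (D : Fin N → ℝ → ℝ) : Prop :=
  ∀ j, IsWeakConvDerivOn bb (m.xl j) (m.xr j) p (v0 j) (vb j.castSucc) (vb j.succ) (D j)

/-- The stabilisation bilinear form `S(u,v)`. -/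
def Sform {N : ℕ} (m : Mesh N) (σ : Fin N → ℝ)
    (u0 : Fin N → ℝ → ℝ) (ub : Fin (N + 1) → ℝ)
    (v0 : Fin N → ℝ → ℝ) (vb : Fin (N + 1) → ℝ) : ℝ :=
  ∑ j : Fin N, σ j * ((u0 j (m.xr j) - ub j.succ) * (v0 j (m.xr j) - vb j.succ)
    + (u0 j (m.xl j) - ub j.castSucc) * (v0 j (m.xl j) - vb j.castSucc))

/-- The convection stabilisation bilinear form `S_c(u,v)`. -/
def Scform {N : ℕ} (m : Mesh N) (ε₂ : ℝ) (bb : ℝ → ℝ)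
    (u0 : Fin N → ℝ → ℝ) (ub : Fin (N + 1) → ℝ)
    (v0 : Fin N → ℝ → ℝ) (vb : Fin (N + 1) → ℝ) : ℝ :=
  ∑ j : Fin N, ε₂ * bb (m.xr j) * (u0 j (m.xr j) - ub j.succ) * (v0 j (m.xr j) - vb j.succ)

/-- The squared jump seminorm `|v|_J²`. -/
def Jsemi2 {N : ℕ} (m : Mesh N) (ε₂ : ℝ) (bb : ℝ → ℝ)
    (v0 : Fin N → ℝ → ℝ) (vb : Fin (N + 1) → ℝ) : ℝ :=
  ∑ j : Fin N, (if j.succ = Fin.last N then (1 : ℝ) / 2 else 1) * ε₂ * bb (m.xr j) *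
    (v0 j (m.xr j) - vb j.succ) ^ 2

/-- The squared WG energy norm `|||v|||_p²`, where `Dv` is the weak derivative `D_{p-1} v`. -/
def normP2 {N : ℕ} (m : Mesh N) (ε₁ ε₂ : ℝ) (bb : ℝ → ℝ) (σ : Fin N → ℝ)
    (v0 : Fin N → ℝ → ℝ) (vb : Fin (N + 1) → ℝ) (Dv : Fin N → ℝ → ℝ) : ℝ :=
  ε₁ * (∑ j : Fin N, ∫ t in (m.xl j)..(m.xr j), (Dv j t) ^ 2)
    + (∑ j : Fin N, ∫ t in (m.xl j)..(m.xr j), (v0 j t) ^ 2)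
    + Sform m σ v0 vb v0 vb + Scform m ε₂ bb v0 vb v0 vb + Jsemi2 m ε₂ bb v0 vb

/-- The squared WG norm `|||v|||²` (with the broken classical derivative). -/
def normT2 {N : ℕ} (m : Mesh N) (ε₁ ε₂ : ℝ) (bb : ℝ → ℝ) (σ : Fin N → ℝ)
    (v0 : Fin N → ℝ → ℝ) (vb : Fin (N + 1) → ℝ) : ℝ :=
  ε₁ * (∑ j : Fin N, ∫ t in (m.xl j)..(m.xr j), (deriv (v0 j) t) ^ 2)
    + (∑ j : Fin N, ∫ t in (m.xl j)..(m.xr j), (v0 j t) ^ 2)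
    + Sform m σ v0 vb v0 vb + Scform m ε₂ bb v0 vb v0 vb + Jsemi2 m ε₂ bb v0 vb

/-- The WG bilinear form `A_p(u,v)`; `Du = D_{p-1}u`, `Dcu = D_p^c u`, `Dv = D_{p-1}v`. -/
def Aform {N : ℕ} (m : Mesh N) (ε₁ ε₂ : ℝ) (bb rr : ℝ → ℝ) (σ : Fin N → ℝ)
    (u0 : Fin N → ℝ → ℝ) (ub : Fin (N + 1) → ℝ) (Du Dcu : Fin N → ℝ → ℝ)
    (v0 : Fin N → ℝ → ℝ) (vb : Fin (N + 1) → ℝ) (Dv : Fin N → ℝ → ℝ) : ℝ :=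
  ε₁ * (∑ j : Fin N, ∫ t in (m.xl j)..(m.xr j), Du j t * Dv j t)
    + ε₂ * (∑ j : Fin N, ∫ t in (m.xl j)..(m.xr j), Dcu j t * v0 j t)
    + (∑ j : Fin N, ∫ t in (m.xl j)..(m.xr j), rr t * u0 j t * v0 j t)
    + Sform m σ u0 ub v0 vb + Scform m ε₂ bb u0 ub v0 vb

/-- `u` solves the two-parameter singularly perturbed boundary-value problem
`-ε₁ u'' + ε₂ b u' + r u = f` on `(0,1)`, `u(0) = u(1) = 0`. -/
def SolvesBVP (ε₁ ε₂ : ℝ) (bb rr ff u : ℝ → ℝ) : Prop :=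
  u 0 = 0 ∧ u 1 = 0 ∧
    ∀ x ∈ Set.Icc (0 : ℝ) 1,
      -ε₁ * deriv (deriv u) x + ε₂ * bb x * deriv u x + rr x * u x = ff x

/-- `P` is the interpolant `I y` of `y` on the cell `(a,b)`. -/
def IsInterpOn (a b : ℝ) (p : ℕ) (y P : ℝ → ℝ) : Prop :=
  IsPolyDeg P p ∧ P a = y a ∧ P b = y b ∧
    ∀ q : Polynomial ℝ, q.natDegree ≤ p →
      (∫ t in a..b, (deriv P t - deriv y t) * q.derivative.eval t) = 0

/-- `P` is the (cellwise) interpolant `I y` of `y` on the mesh `m`. -/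
def IsInterp {N : ℕ} (m : Mesh N) (p : ℕ) (y : ℝ → ℝ) (P : Fin N → ℝ → ℝ) : Prop :=
  ∀ j, IsInterpOn (m.xl j) (m.xr j) p y (P j)

/-- Glue cellwise functions into a single function on `I` (cells taken left-closed). -/
def glue {N : ℕ} (m : Mesh N) (v0 : Fin N → ℝ → ℝ) : ℝ → ℝ :=
  fun t => ∑ j : Fin N, Set.indicator (Set.Ico (m.xl j) (m.xr j)) (v0 j) t

/-- The standard penalty parameters `σ_j = ε₁ p² / h_j`. -/
def stdPen {N : ℕ} (m : Mesh N) (ε₁ : ℝ) (p : ℕ) : Fin N → ℝ :=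
  fun j => ε₁ * (p : ℝ) ^ 2 / m.width j

/-- Membership of the interior part in the broken Sobolev space `H¹(ω)`. -/
def MemM {N : ℕ} (m : Mesh N) (v0 : Fin N → ℝ → ℝ) : Prop :=
  ∀ j, DifferentiableOn ℝ (v0 j) (Set.Icc (m.xl j) (m.xr j))

/-- `(up0, upb)`, with weak derivatives `Du = D_{p-1} u_p` and `Dcu = D_p^c u_p`, is a
weak Galerkin solution of degree `p` on the mesh `m`. -/
def IsWGsol {N : ℕ} (m : Mesh N) (ε₁ ε₂ : ℝ) (bb rr ff : ℝ → ℝ) (p : ℕ)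
    (up0 : Fin N → ℝ → ℝ) (upb : Fin (N + 1) → ℝ) (Du Dcu : Fin N → ℝ → ℝ) : Prop :=
  (∀ j, IsPolyDeg (up0 j) p) ∧ upb 0 = 0 ∧ upb (Fin.last N) = 0 ∧
    IsWeakDeriv m (p - 1) up0 upb Du ∧ IsWeakConvDeriv m bb p up0 upb Dcu ∧
    ∀ (w0 : Fin N → ℝ → ℝ) (wb : Fin (N + 1) → ℝ),
      (∀ j, IsPolyDeg (w0 j) p) → wb 0 = 0 → wb (Fin.last N) = 0 →
      ∀ Dw : Fin N → ℝ → ℝ, IsWeakDeriv m (p - 1) w0 wb Dw →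
        Aform m ε₁ ε₂ bb rr (stdPen m ε₁ p) up0 upb Du Dcu w0 wb Dw
          = ∑ j : Fin N, ∫ t in (m.xl j)..(m.xr j), ff t * w0 j t

/-- Broken `L²` norm over the mesh of a cellwise-given function. -/
def brokenL2 {N : ℕ} (m : Mesh N) (f : Fin N → ℝ → ℝ) : ℝ :=
  Real.sqrt (∑ j : Fin N, ∫ t in (m.xl j)..(m.xr j), (f j t) ^ 2)

/-- `L²(a,b)` norm. -/
def intL2 (a b : ℝ) (f : ℝ → ℝ) : ℝ := Real.sqrt (∫ t in a..b, (f t) ^ 2)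

/-- Analyticity of the data: `‖g⁽ⁿ⁾‖_{∞,[0,1]} ≲ n! γ_g^n`. -/
def AnalyticData (g : ℝ → ℝ) : Prop :=
  ContDiff ℝ (⊤ : ℕ∞) g ∧ ∃ C γg : ℝ, 0 < C ∧ 0 < γg ∧
    ∀ n : ℕ, ∀ x ∈ Set.Icc (0 : ℝ) 1, |iteratedDeriv n g x| ≤ C * n.factorial * γg ^ n

/-- The characteristic values `μ₀` (`sgn = -1`) and `μ₁` (`sgn = 1`). -/
def muVal (sgn ε₁ ε₂ : ℝ) (bb rr : ℝ → ℝ) : ℝ :=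
  sInf ((fun x => (sgn * ε₂ * bb x + Real.sqrt (ε₂ ^ 2 * (bb x) ^ 2 + 4 * ε₁ * rr x))
      / (2 * ε₁)) '' Set.Icc 0 1)

def mu0 (ε₁ ε₂ : ℝ) (bb rr : ℝ → ℝ) : ℝ := muVal (-1) ε₁ ε₂ bb rr

def mu1 (ε₁ ε₂ : ℝ) (bb rr : ℝ → ℝ) : ℝ := muVal 1 ε₁ ε₂ bb rr

/-- The Spectral Boundary Layer mesh in the reaction-convection-diffusion regime. -/
def IsSBLmeshRCD {N : ℕ} (κ : ℝ) (p : ℕ) (ε₁ ε₂ : ℝ) (bb rr : ℝ → ℝ) (m : Mesh N) : Prop :=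
  ((1 : ℝ) / 2 ≤ κ * p * ε₁ ∧ N = 1) ∨
    (κ * p * ε₂ < 1 / 2 ∧ N = 3 ∧
      m.pt 1 = κ * p / mu0 ε₁ ε₂ bb rr ∧ m.pt 2 = 1 - κ * p / mu1 ε₁ ε₂ bb rr)

/-- The Spectral Boundary Layer mesh in the reaction-diffusion regime. -/
def IsSBLmeshRD {N : ℕ} (κ : ℝ) (p : ℕ) (ε₁ : ℝ) (m : Mesh N) : Prop :=
  ((1 : ℝ) / 2 ≤ κ * p * ε₁ ∧ N = 1) ∨
    (κ * p * ε₁ < 1 / 2 ∧ N = 3 ∧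
      m.pt 1 = κ * p * Real.sqrt ε₁ ∧ m.pt 2 = 1 - κ * p * Real.sqrt ε₁)

/-- The Spectral Boundary Layer mesh in the convection-diffusion regime. -/
def IsSBLmeshCD {N : ℕ} (κ : ℝ) (p : ℕ) (ε₁ : ℝ) (m : Mesh N) : Prop :=
  ((1 : ℝ) / 2 ≤ κ * p * ε₁ ∧ N = 1) ∨
    (κ * p * ε₁ ≤ 1 / 2 ∧ N = 2 ∧ m.pt 1 = 1 - κ * p * ε₁)

/-- Cauchy–Schwarz for continuous functions on an interval. -/
theorem sq_integral_mul_le {f g : ℝ → ℝ} (hf : Continuous f) (hg : Continuous g) {a b : ℝ}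
    (hab : a ≤ b) :
    (∫ t in a..b, f t * g t) ^ 2 ≤ (∫ t in a..b, f t ^ 2) * ∫ t in a..b, g t ^ 2 := by
  have h : ∀ x : ℝ, 0 ≤ (∫ t in a..b, g t ^ 2) * (x * x) + (-2 * ∫ t in a..b, f t * g t) * x
      + ∫ t in a..b, f t ^ 2 := by
    intro x
    have h0 : 0 ≤ ∫ t in a..b, (f t - x * g t) ^ 2 :=
      intervalIntegral.integral_nonneg hab fun t _ => sq_nonneg _
    have h1 : (∫ t in a..b, (f t - x * g t) ^ 2)
        = (∫ t in a..b, g t ^ 2) * (x * x) + (-2 * ∫ t in a..b, f t * g t) * x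
      + ∫ t in a..b, f t ^ 2 := by
      have e : ∀ t, (f t - x * g t) ^ 2 = g t ^ 2 * (x * x) + f t * g t * (-2 * x) + f t ^ 2 :=
        fun t => by ring
      simp only [e]
      rw [intervalIntegral.integral_add, intervalIntegral.integral_add,
        intervalIntegral.integral_mul_const, intervalIntegral.integral_mul_const]
      · ring
      all_goals exact Continuous.intervalIntegrable (by fun_prop) _ _
    rwa [h1] at h0
  have := discrim_le_zero h
  rw [discrim] at this
  nlinarith

theorem abs_integral_mul_le {f g : ℝ → ℝ} (hf : Continuous f) (hg : Continuous g) {a b : ℝ}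
    (hab : a ≤ b) :
    |∫ t in a..b, f t * g t| ≤ √(∫ t in a..b, f t ^ 2) * √(∫ t in a..b, g t ^ 2) := by
  rw [← Real.sqrt_mul (intervalIntegral.integral_nonneg hab fun t _ => sq_nonneg _)]
  exact Real.abs_le_sqrt (sq_integral_mul_le hf hg hab)

/-- A bounded factor in an integral against an `L²` function. -/
theorem abs_integral_mul_le_of_bound {f g : ℝ → ℝ} (hf : Continuous f) (hg : Continuous g)
    {a b M : ℝ} (hab : a ≤ b) (hM : 0 ≤ M) (h : ∀ t ∈ Icc a b, |f t| ≤ M) :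
    |∫ t in a..b, f t * g t| ≤ M * √(b - a) * √(∫ t in a..b, g t ^ 2) := by
  refine (abs_integral_mul_le hf hg hab).trans ?_
  gcongr
  rw [← Real.sqrt_sq hM, ← Real.sqrt_mul (sq_nonneg M)]
  refine Real.sqrt_le_sqrt ?_
  have : (∫ t in a..b, f t ^ 2) ≤ ∫ t in a..b, M ^ 2 := by
    refine intervalIntegral.integral_mono_on hab (Continuous.intervalIntegrable (by fun_prop) _ _)
      (by simp) fun t ht => ?_
    exact sq_le_sq' (by linarith [neg_abs_le (f t), h t ht]) (by linarith [le_abs_self (f t), h t ht])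
  simpa [mul_comm] using this

open Polynomial in
theorem Polynomial.integral_derivative_mul (P Q : ℝ[X]) (a b : ℝ) :
    (∫ t in a..b, P.derivative.eval t * Q.eval t) =
      P.eval b * Q.eval b - P.eval a * Q.eval a - ∫ t in a..b, P.eval t * Q.derivative.eval t := by
  have := intervalIntegral.integral_deriv_mul_eq_sub (a := a) (b := b)
    (u := fun t => P.eval t) (v := fun t => Q.eval t) (u' := fun t => P.derivative.eval t)
    (v' := fun t => Q.derivative.eval t)
    (fun x _ => P.hasDerivAt x) (fun x _ => Q.hasDerivAt x)
    (P.derivative.continuous.intervalIntegrable _ _)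
    (Q.derivative.continuous.intervalIntegrable _ _)
  rw [← this, intervalIntegral.integral_add]
  · ring
  · exact Continuous.intervalIntegrable (by fun_prop) _ _
  · exact Continuous.intervalIntegrable (by fun_prop) _ _

open Polynomial in
theorem Polynomial.eval_iterate_derivative_eq (F : ℝ[X]) (k : ℕ) (x : ℝ) :
    (derivative^[k] F).eval x = k.factorial * (taylor x F).coeff k := by
  rw [taylor_coeff, ← Polynomial.factorial_smul_hasseDeriv]
  simp [nsmul_eq_mul]

open Polynomial in
/-- The sharp trace inequality for polynomials at the right end of the unit interval. -/
theorem Polynomial.sq_eval_one_le (n : ℕ) (q : ℝ[X]) (hq : q.natDegree ≤ n) :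
    q.eval 1 ^ 2 ≤ ((n : ℝ) + 1) ^ 2 * ∫ t in (0 : ℝ)..1, q.eval t ^ 2 := by
  set F : ℝ[X] := X ^ (n + 1) * (X - 1) ^ n with hF
  have T1 : taylor 1 F = (X + 1) ^ (n + 1) * X ^ n := by
    simp [hF]
  have T0 : taylor 0 F = X ^ (n + 1) * (X - 1) ^ n := by
    rw [hF, taylor_zero]
  have z1 : ∀ k < n, (derivative^[k] F).eval 1 = 0 := fun k hk => by
    rw [eval_iterate_derivative_eq, T1, coeff_mul_X_pow', if_neg (by omega), mul_zero]
  have z0 : ∀ k ≤ n, (derivative^[k] F).eval 0 = 0 := fun k hk => by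
    rw [eval_iterate_derivative_eq, T0, coeff_X_pow_mul', if_neg (by omega), mul_zero]
  have n1 : (derivative^[n] F).eval 1 = n.factorial := by
    rw [eval_iterate_derivative_eq, T1, coeff_mul_X_pow', if_pos le_rfl, Nat.sub_self]
    simp [coeff_X_add_one_pow]
  have n2 : (derivative^[n + 1] F).eval 1 = (n + 1).factorial * (n + 1) := by
    rw [eval_iterate_derivative_eq, T1, coeff_mul_X_pow', if_pos (by omega), Nat.add_sub_cancel_left]
    simp [coeff_X_add_one_pow]
  have orth : ∀ k ≤ n, ∀ Q : ℝ[X], derivative^[k] Q = 0 →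
      ∫ t in (0 : ℝ)..1, (derivative^[k] F).eval t * Q.eval t = 0 := by
    intro k
    induction k with
    | zero => intro _ Q hQ; simp at hQ; simp [hQ]
    | succ k ih =>
      intro hk Q hQ
      rw [Function.iterate_succ_apply', integral_derivative_mul, z1 k (by omega), z0 k (by omega),
        ih (by omega) _ (by simpa [Function.iterate_succ_apply] using hQ)]
      simp
  have rep : ∀ Q : ℝ[X], Q.natDegree ≤ n →
      ∫ t in (0 : ℝ)..1, (derivative^[n + 1] F).eval t * Q.eval t = n.factorial * Q.eval 1 := by
    intro Q hQ
    rw [Function.iterate_succ_apply', integral_derivative_mul, n1, z0 n le_rfl, orth n le_rfl]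
    · simp
    · rw [← Function.iterate_succ_apply]
      exact iterate_derivative_eq_zero (by omega)
  have dK : (derivative^[n + 1] F).natDegree ≤ n := by
    refine (natDegree_iterate_derivative F (n + 1)).trans ?_
    have : F.natDegree ≤ n + 1 + n := by
      rw [hF]
      refine natDegree_mul_le.trans (add_le_add ?_ ?_)
      · simp
      · have h1 : (X - 1 : ℝ[X]).natDegree = 1 := by simpa using natDegree_X_sub_C (1 : ℝ)
        refine natDegree_pow_le.trans (by rw [h1, mul_one])
    omega
  have cs := sq_integral_mul_le (derivative^[n + 1] F).continuous q.continuous zero_le_one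
  have sqK := rep _ dK
  simp only [sq (eval _ (derivative^[n + 1] F))] at cs
  rw [rep q hq, sqK, n2, Nat.factorial_succ] at cs
  push_cast at cs
  have hpos : (0 : ℝ) < (n.factorial : ℝ) ^ 2 := by positivity
  refine le_of_mul_le_mul_left ?_ hpos
  nlinarith [cs]

open Polynomial in
theorem Polynomial.sq_eval_endpoints_le {n : ℕ} {q : ℝ[X]} (hq : q.natDegree ≤ n) {a b : ℝ}
    (hab : a < b) :
    q.eval b ^ 2 ≤ ((n : ℝ) + 1) ^ 2 / (b - a) * (∫ t in a..b, q.eval t ^ 2) ∧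
      q.eval a ^ 2 ≤ ((n : ℝ) + 1) ^ 2 / (b - a) * (∫ t in a..b, q.eval t ^ 2) := by
  have hba : 0 < b - a := sub_pos.2 hab
  have dg : ∀ c d : ℝ, (q.comp (C c * X + C d)).natDegree ≤ n := fun c d => by
    refine natDegree_comp_le.trans ?_
    have := natDegree_linear_le (a := c) (b := d)
    nlinarith
  constructor
  · have h := sq_eval_one_le n _ (dg (b - a) a)
    have e := intervalIntegral.mul_integral_comp_mul_add (a := 0) (b := 1)
      (f := fun t => q.eval t ^ 2) (b - a) a
    simp only [eval_comp, eval_add, eval_mul, eval_C, eval_X, mul_one, sub_add_cancel, mul_zero,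
      zero_add] at h e
    rw [← e]
    refine h.trans (le_of_eq ?_)
    field_simp
  · have h := sq_eval_one_le n _ (dg (a - b) b)
    have e := intervalIntegral.mul_integral_comp_mul_add (a := 0) (b := 1)
      (f := fun t => q.eval t ^ 2) (a - b) b
    simp only [eval_comp, eval_add, eval_mul, eval_C, eval_X, mul_one, sub_add_cancel, mul_zero,
      zero_add] at h e
    rw [intervalIntegral.integral_symm, ← e]
    refine h.trans (le_of_eq ?_)
    field_simp
    ring

theorem abs_sub_taylor_le {g : ℝ → ℝ} (hg : ContDiff ℝ (⊤ : ℕ∞) g) {B : ℝ} (m : ℕ)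
    (hB : ∀ y ∈ Icc (0 : ℝ) 1, |iteratedDeriv m g y| ≤ B) {x c : ℝ} (hx : x ∈ Icc (0 : ℝ) 1)
    (hc : c ∈ Icc (0 : ℝ) 1) :
    |g x - ∑ i ∈ Finset.range m, iteratedDeriv i g c / i.factorial * (x - c) ^ i|
      ≤ B * (|x - c| ^ m / m.factorial) := by
  rcases m with _ | k
  · simpa using hB x hx
  rcases eq_or_ne c x with rfl | hne
  · rw [Finset.sum_range_succ']
    simp
  obtain ⟨y, hy, h⟩ := taylor_mean_remainder_lagrange_iteratedDeriv (f := g) (n := k) hne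
    (hg.contDiffOn.of_le (by exact_mod_cast le_top))
  have hmem : y ∈ Icc (0 : ℝ) 1 := by
    have h1 : y ∈ uIcc c x := Ioo_subset_Icc_self hy
    exact (ordConnected_Icc.uIcc_subset hc hx) h1
  have e : taylorWithinEval g k (uIcc c x) c x
      = ∑ i ∈ Finset.range (k + 1), iteratedDeriv i g c / i.factorial * (x - c) ^ i := by
    rw [taylor_within_apply]
    refine Finset.sum_congr rfl fun i _ => ?_
    rw [iteratedDerivWithin_eq_iteratedDeriv (uniqueDiffOn_uIcc hne)
      (hg.contDiffAt.of_le (by exact_mod_cast le_top)) left_mem_uIcc, smul_eq_mul]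
    ring
  rw [← e, h, abs_div, abs_mul, abs_pow, Nat.abs_cast, mul_div_assoc]
  gcongr
  exact hB y hmem

theorem sum_binomial_mul_exp_le (n : ℕ) {x s : ℝ} (hx : x ∈ Icc (0 : ℝ) 1) (hs : |s| ≤ 1) :
    ∑ k ∈ Finset.range (n + 1), x ^ k * (1 - x) ^ (n - k) * (n.choose k : ℝ)
      * Real.exp (s * (k - n * x)) ≤ Real.exp (n * s ^ 2) := by
  have e : ∀ k ∈ Finset.range (n + 1), x ^ k * (1 - x) ^ (n - k) * (n.choose k : ℝ)
      * Real.exp (s * (k - n * x)) = Real.exp (-(s * (n * x))) *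
        ((x * Real.exp s) ^ k * (1 - x) ^ (n - k) * (n.choose k : ℝ)) := by
    intro k _
    rw [show s * ((k : ℝ) - n * x) = k * s + -(s * (n * x)) by ring, Real.exp_add, mul_pow,
      ← Real.exp_nat_mul]
    ring
  rw [Finset.sum_congr rfl e, ← Finset.mul_sum, ← add_pow]
  have h1 : x * Real.exp s + (1 - x) ≤ Real.exp (x * (s + s ^ 2)) := by
    have h2 := abs_le.1 (Real.abs_exp_sub_one_sub_id_le hs)
    have h3 := Real.add_one_le_exp (x * (s + s ^ 2))
    nlinarith [hx.1]
  have h0 : 0 ≤ x * Real.exp s + (1 - x) := by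
    have := hx.1; have := hx.2; have := Real.exp_pos s; nlinarith [mul_nonneg hx.1 this.le]
  calc _ ≤ Real.exp (-(s * (n * x))) * Real.exp (x * (s + s ^ 2)) ^ n := by gcongr
    _ = Real.exp (n * s ^ 2 * x) := by
      rw [← Real.exp_nat_mul, ← Real.exp_add]; ring_nf
    _ ≤ _ := by
      refine Real.exp_le_exp.2 ?_
      have : (0 : ℝ) ≤ n * s ^ 2 := by positivity
      nlinarith [hx.2]

open Polynomial in
/-- Blending Taylor polynomials at equispaced points with Bernstein weights. -/
theorem exists_polynomial_near (n m : ℕ) (hn : 1 ≤ n) {θ B : ℝ} (hθ : 0 < θ) (hθ1 : θ ≤ 1)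
    {g : ℝ → ℝ} (hg : ContDiff ℝ (⊤ : ℕ∞) g)
    (hB : ∀ y ∈ Icc (0 : ℝ) 1, |iteratedDeriv m g y| ≤ B) :
    ∃ P : ℝ[X], P.natDegree ≤ n + m - 1 ∧
      ∀ x ∈ Icc (0 : ℝ) 1, |P.eval x - g x| ≤ 2 * B * Real.exp (n * θ ^ 2) / (θ * n) ^ m := by
  have hn0 : (0 : ℝ) < n := by exact_mod_cast hn
  have hB0 : 0 ≤ B := (abs_nonneg _).trans (hB 0 (by simp))
  refine ⟨∑ k ∈ Finset.range (n + 1), (X ^ k * (1 - X) ^ (n - k) * C (n.choose k : ℝ)) *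
    ∑ i ∈ Finset.range m, C (iteratedDeriv i g (k / n) / i.factorial) * (X - C ((k : ℝ) / n)) ^ i,
    ?_, ?_⟩
  · refine natDegree_sum_le_of_forall_le _ _ fun k hk => ?_
    rcases m with _ | m
    · simp
    refine natDegree_mul_le.trans ?_
    have h1 : (X ^ k * (1 - X) ^ (n - k) * C (n.choose k : ℝ) : ℝ[X]).natDegree ≤ n := by
      refine (natDegree_mul_C_le _ _).trans (natDegree_mul_le.trans ?_)
      have h2 : ((1 - X : ℝ[X]) ^ (n - k)).natDegree ≤ (n - k) * 1 :=
        natDegree_pow_le_of_le _ ((natDegree_sub_le _ _).trans (by simp))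
      have h3 : (X ^ k : ℝ[X]).natDegree ≤ k := natDegree_X_pow_le k
      have := Finset.mem_range.1 hk
      omega
    have h2 : (∑ i ∈ Finset.range (m + 1), C (iteratedDeriv i g (k / n) / i.factorial)
        * (X - C ((k : ℝ) / n)) ^ i : ℝ[X]).natDegree ≤ m := by
      refine natDegree_sum_le_of_forall_le _ _ fun i hi => ?_
      refine (natDegree_C_mul_le _ _).trans ?_
      refine (natDegree_pow_le_of_le i (natDegree_X_sub_C_le _)).trans ?_
      have := Finset.mem_range.1 hi
      omega
    omega
  · intro x hx
    have hx1 : 0 ≤ 1 - x := by linarith [hx.2]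
    have hsum : ∑ k ∈ Finset.range (n + 1), x ^ k * (1 - x) ^ (n - k) * (n.choose k : ℝ) = 1 := by
      rw [← add_pow]; simp
    have e : (∑ k ∈ Finset.range (n + 1), (X ^ k * (1 - X) ^ (n - k) * C (n.choose k : ℝ)) *
        ∑ i ∈ Finset.range m, C (iteratedDeriv i g (k / n) / i.factorial)
          * (X - C ((k : ℝ) / n)) ^ i : ℝ[X]).eval x - g x
        = ∑ k ∈ Finset.range (n + 1), (x ^ k * (1 - x) ^ (n - k) * (n.choose k : ℝ)) *
          (∑ i ∈ Finset.range m, iteratedDeriv i g (k / n) / i.factorial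
          * (x - (k : ℝ) / n) ^ i - g x) := by
      simp only [mul_sub, Finset.sum_sub_distrib, ← Finset.sum_mul, hsum, one_mul]
      simp [eval_finsetSum]
    rw [e]
    have key : ∀ k ∈ Finset.range (n + 1), |(x ^ k * (1 - x) ^ (n - k) * (n.choose k : ℝ)) *
          (∑ i ∈ Finset.range m, iteratedDeriv i g (k / n) / i.factorial
          * (x - (k : ℝ) / n) ^ i - g x)| ≤ B / (θ * n) ^ m *
          (x ^ k * (1 - x) ^ (n - k) * (n.choose k : ℝ) * Real.exp (θ * (k - n * x))
          + x ^ k * (1 - x) ^ (n - k) * (n.choose k : ℝ) * Real.exp (-θ * (k - n * x))) := by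
      intro k hk
      have hk' : (k : ℝ) / n ∈ Icc (0 : ℝ) 1 := by
        have : (k : ℝ) ≤ n := by exact_mod_cast Nat.lt_succ_iff.1 (Finset.mem_range.1 hk)
        exact ⟨by positivity, (div_le_one hn0).2 this⟩
      have hw : 0 ≤ x ^ k * (1 - x) ^ (n - k) * (n.choose k : ℝ) := by
        have := hx.1; positivity
      have h1 := abs_sub_taylor_le hg m hB hx hk'
      have h2 : |x - (k : ℝ) / n| ^ m / m.factorial ≤ 1 / (θ * n) ^ m *
          (Real.exp (θ * (k - n * x)) + Real.exp (-θ * (k - n * x))) := by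
        have h3 := Real.pow_div_factorial_le_exp (θ * |k - n * x|) (by positivity) m
        have h4 : |x - (k : ℝ) / n| = 1 / (θ * n) * (θ * |k - n * x|) := by
          have : x - (k : ℝ) / n = - (1 / n * (k - n * x)) := by field_simp; ring
          rw [this, abs_neg, abs_mul, abs_of_pos (by positivity : (0 : ℝ) < 1 / n)]
          field_simp
        have h5 : Real.exp (θ * |k - n * x|) ≤
            Real.exp (θ * (k - n * x)) + Real.exp (-θ * (k - n * x)) := by
          rcases abs_cases ((k : ℝ) - n * x) with ⟨h, _⟩ | ⟨h, _⟩ <;> rw [h]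
          · linarith [Real.exp_pos (-θ * (k - n * x))]
          · rw [mul_neg, ← neg_mul]; linarith [Real.exp_pos (θ * (k - n * x))]
        rw [h4, mul_pow, mul_div_assoc, one_div_pow]
        gcongr
        exact h3.trans h5
      rw [abs_mul, abs_of_nonneg hw, abs_sub_comm]
      calc _ ≤ (x ^ k * (1 - x) ^ (n - k) * (n.choose k : ℝ)) * (B * (1 / (θ * n) ^ m *
          (Real.exp (θ * (k - n * x)) + Real.exp (-θ * (k - n * x))))) := by
            gcongr
            exact h1.trans (by gcongr)
        _ = _ := by ring
    refine (Finset.abs_sum_le_sum_abs _ _).trans ((Finset.sum_le_sum key).trans ?_)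
    rw [← Finset.mul_sum, Finset.sum_add_distrib]
    have m1 := sum_binomial_mul_exp_le n hx (s := θ) (by rwa [abs_of_pos hθ])
    have m2 := sum_binomial_mul_exp_le n hx (s := -θ) (by rwa [abs_neg, abs_of_pos hθ])
    rw [neg_sq] at m2
    calc _ ≤ B / (θ * n) ^ m * (Real.exp (n * θ ^ 2) + Real.exp (n * θ ^ 2)) := by gcongr
      _ = _ := by ring

open Polynomial in
theorem Polynomial.exists_derivative_eq (P : ℝ[X]) {n : ℕ} (hP : P.natDegree ≤ n) :
    ∃ Q : ℝ[X], Q.natDegree ≤ n + 1 ∧ Q.derivative = P ∧ Q.eval 0 = 0 := by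
  refine ⟨∑ i ∈ Finset.range (n + 1), C (P.coeff i / (i + 1)) * X ^ (i + 1), ?_, ?_, ?_⟩
  · refine natDegree_sum_le_of_forall_le _ _ fun i hi => ?_
    refine (natDegree_C_mul_X_pow_le _ _).trans ?_
    have := Finset.mem_range.1 hi
    omega
  · rw [derivative_sum]
    conv_rhs => rw [P.as_sum_range' (n + 1) (by omega)]
    refine Finset.sum_congr rfl fun i _ => ?_
    rw [derivative_C_mul_X_pow, C_mul_X_pow_eq_monomial]
    congr 1
    push_cast
    field_simp
  · simp [eval_finsetSum]

open Polynomial in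
/-- Exponential approximation, with endpoint interpolation, of functions whose derivatives of
order up to `α p + 1` grow at most like `(K (α p + 1))ⁿ`. -/
theorem exists_polynomial_interp (K : ℝ) (hK : 1 ≤ K) :
    ∃ α C₁ : ℝ, 0 < α ∧ α ≤ 1 / 4 ∧ 0 < C₁ ∧ ∀ p : ℕ, 1 ≤ p → ∀ s : ℝ → ℝ,
      ContDiff ℝ (⊤ : ℕ∞) s → ∀ a b : ℝ, a < b → ∀ C₀ : ℝ,
      (∀ n : ℕ, (n : ℝ) ≤ α * p + 1 → ∀ x ∈ Icc a b,
        |iteratedDeriv n s x| * (b - a) ^ n ≤ C₀ * (K * (α * p + 1)) ^ n) →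
      ∃ q : ℝ[X], q.natDegree ≤ p ∧ q.eval a = s a ∧ q.eval b = s b ∧ ∀ x ∈ Icc a b,
        |q.derivative.eval x - deriv s x| ≤ C₁ * C₀ * Real.exp (-(α / 2) * p) / (b - a) ∧
        |q.eval x - s x| ≤ C₁ * C₀ * Real.exp (-(α / 2) * p) := by
  have e2 : (1 : ℝ) ≤ Real.exp 2 := Real.one_le_exp (by norm_num)
  set θ : ℝ := Real.exp (-2) / (4 * K) with hθ
  have hθ0 : 0 < θ := by positivity
  have hθ1 : θ ≤ 1 / 4 := by
    rw [hθ, div_le_iff₀ (by positivity), Real.exp_neg]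
    have : (Real.exp 2)⁻¹ ≤ 1 := inv_le_one_of_one_le₀ e2
    linarith
  refine ⟨θ ^ 2, 8 * Real.exp 2 * K, by positivity, by nlinarith, by positivity, ?_⟩
  intro p hp s hs a b hab C₀ hC
  set α := θ ^ 2 with hα
  have hα4 : α ≤ 1 / 4 := by nlinarith
  have hp0 : (1 : ℝ) ≤ p := by exact_mod_cast hp
  have hh : 0 < b - a := sub_pos.2 hab
  have hC0 : 0 ≤ C₀ := by
    have := hC 0 (by simp; positivity) a ⟨le_rfl, hab.le⟩
    simp at this
    exact (abs_nonneg _).trans this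
  set m := ⌊α * p⌋₊ with hm
  have hm1 : (m : ℝ) ≤ α * p := Nat.floor_le (by positivity)
  have hm2 : α * p - 1 ≤ m := (Nat.sub_one_lt_floor _).le
  have hmp : (m : ℝ) ≤ p / 4 := by nlinarith
  have hmp' : m < p := by
    have : (m : ℝ) < p := by linarith
    exact_mod_cast this
  set g : ℝ → ℝ := fun t => (b - a) * deriv s ((b - a) * t + a) with hgdef
  have hs' : ContDiff ℝ (⊤ : ℕ∞) (deriv s) := ((contDiff_infty_iff_deriv).1 hs).2
  have hg : ContDiff ℝ (⊤ : ℕ∞) g := by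
    refine contDiff_const.mul (hs'.comp (by fun_prop))
  have gder : ∀ y, iteratedDeriv m g y = (b - a) ^ (m + 1) *
      iteratedDeriv (m + 1) s ((b - a) * y + a) := by
    intro y
    have h1 : iteratedDeriv m (fun t => deriv s ((b - a) * t + a)) y
        = (b - a) ^ m * iteratedDeriv m (deriv s) ((b - a) * y + a) := by
      have h2 := iteratedDeriv_comp_const_mul (n := m) (f := fun z => deriv s (z + a))
        ((hs'.comp (contDiff_id.add contDiff_const)).of_le (by exact_mod_cast le_top)) (b - a)
      have h3 := congrFun h2 y
      rw [iteratedDeriv_comp_add_const] at h3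
      simpa using h3
    rw [hgdef, iteratedDeriv_const_mul_field, h1, iteratedDeriv_succ']
    ring
  have hB : ∀ y ∈ Icc (0 : ℝ) 1, |iteratedDeriv m g y| ≤ C₀ * (K * (α * p + 1)) ^ (m + 1) := by
    intro y hy
    rw [gder, abs_mul, abs_of_pos (by positivity), mul_comm]
    refine hC (m + 1) (by push_cast; linarith) _ ⟨?_, ?_⟩
    · nlinarith [hy.1]
    · nlinarith [hy.2]
  obtain ⟨P, hPd, hP⟩ := exists_polynomial_near (p - m) m (by omega) hθ0 (by linarith) hg hB
  have hdeg : p - m + m - 1 = p - 1 := by omega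
  rw [hdeg] at hPd
  set δ : ℝ := 4 * Real.exp 2 * K * C₀ * Real.exp (-(α / 2) * p) with hδ
  have hPδ : ∀ x ∈ Icc (0 : ℝ) 1, |P.eval x - g x| ≤ δ := by
    intro x hx
    refine (hP x hx).trans ?_
    have hn : (p : ℝ) / 2 ≤ ((p - m : ℕ) : ℝ) := by
      rw [Nat.cast_sub hmp'.le]; linarith
    have hnp : ((p - m : ℕ) : ℝ) ≤ p := by exact_mod_cast Nat.sub_le _ _
    have hpow : (K * (α * p + 1)) ^ m / (θ * ((p - m : ℕ) : ℝ)) ^ m ≤ Real.exp (-2) ^ m := by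
      rcases Nat.eq_zero_or_pos m with h0 | h0
      · simp [h0]
      rw [← div_pow]
      have : (1 : ℝ) ≤ m := by exact_mod_cast h0
      have hpos : 0 < θ * ((p - m : ℕ) : ℝ) := mul_pos hθ0 (by linarith)
      gcongr
      rw [div_le_iff₀ hpos]
      have h4 : Real.exp (-2) = θ * (4 * K) := by rw [hθ]; field_simp
      calc K * (α * p + 1) ≤ K * (2 * (α * p)) := by gcongr; linarith
        _ = Real.exp (-2) * (θ * (p / 2)) := by rw [h4, hα]; ring
        _ ≤ _ := by gcongr
    have hexp : Real.exp (((p - m : ℕ) : ℝ) * θ ^ 2) ≤ Real.exp (α * p) := by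
      refine Real.exp_le_exp.2 ?_
      rw [← hα, mul_comm]; gcongr
    have hlin : α * p + 1 ≤ 2 * Real.exp (α / 2 * p) := by
      nlinarith [Real.add_one_le_exp (α / 2 * p)]
    have h2 : Real.exp (-2) ^ m ≤ Real.exp (2 - 2 * (α * p)) := by
      rw [← Real.exp_nat_mul]
      refine Real.exp_le_exp.2 ?_
      linarith
    calc _ = 2 * C₀ * (K * (α * p + 1)) * ((K * (α * p + 1)) ^ m / (θ * ((p - m : ℕ) : ℝ)) ^ m) *
          Real.exp (((p - m : ℕ) : ℝ) * θ ^ 2) := by ring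
      _ ≤ 2 * C₀ * (K * (2 * Real.exp (α / 2 * p))) * Real.exp (2 - 2 * (α * p)) *
          Real.exp (α * p) := by
            gcongr
            exact hpow.trans h2
      _ = 4 * K * C₀ * (Real.exp (α / 2 * p) * Real.exp (2 - 2 * (α * p)) * Real.exp (α * p)) := by
            ring
      _ = δ := by
            rw [hδ, ← Real.exp_add, ← Real.exp_add,
              show α / 2 * p + (2 - 2 * (α * p)) + α * p = 2 + -(α / 2) * p by ring, Real.exp_add]
            ring
  have hδ0 : 0 ≤ δ := by positivity
  set c := ∫ t in (0 : ℝ)..1, (g t - P.eval t) with hc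
  have hcδ : |c| ≤ δ := by
    have := intervalIntegral.norm_integral_le_of_norm_le_const (a := 0) (b := 1)
      (f := fun t => g t - P.eval t) (C := δ) (fun x hx => by
        rw [uIoc_of_le zero_le_one] at hx
        rw [Real.norm_eq_abs, abs_sub_comm]; exact hPδ x ⟨hx.1.le, hx.2⟩)
    simpa using this
  obtain ⟨Q, hQd, hQ', hQ0⟩ := Polynomial.exists_derivative_eq (P + C c) (n := p - 1)
    ((natDegree_add_C).le.trans hPd)
  have hQ1 : Q.eval 1 = s b - s a := by
    have i1 : ∫ t in (0 : ℝ)..1, Q.derivative.eval t = Q.eval 1 - Q.eval 0 :=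
      intervalIntegral.integral_eq_sub_of_hasDerivAt (fun x _ => Q.hasDerivAt x)
        (Q.derivative.continuous.intervalIntegrable _ _)
    have i2 : ∫ t in (0 : ℝ)..1, g t = s b - s a := by
      have := intervalIntegral.integral_eq_sub_of_hasDerivAt (a := 0) (b := 1)
        (f := fun t => s ((b - a) * t + a)) (f' := g) (fun x _ => by
          have h1 : HasDerivAt (fun t : ℝ => (b - a) * t + a) (b - a) x := by
            simpa using ((hasDerivAt_id x).const_mul (b - a)).add_const a
          have h2 : HasDerivAt s (deriv s ((b - a) * x + a)) ((b - a) * x + a) :=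
            (hs.differentiable (by simp) _).hasDerivAt
          have h3 := h2.comp x h1
          exact h3.congr_deriv (mul_comm _ _)) (hg.continuous.intervalIntegrable _ _)
      simpa using this
    rw [hQ0, sub_zero] at i1
    rw [← i1, hQ', ← i2]
    simp only [eval_add, eval_C]
    rw [intervalIntegral.integral_add (P.continuous.intervalIntegrable _ _) (by simp), hc,
      intervalIntegral.integral_sub (hg.continuous.intervalIntegrable _ _)
        (P.continuous.intervalIntegrable _ _)]
    simp
  have hlind : ((C (b - a)⁻¹ * X + C (-(a / (b - a)))) : ℝ[X]).natDegree ≤ 1 := natDegree_linear_le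
  set q : ℝ[X] := C (s a) + Q.comp (C (b - a)⁻¹ * X + C (-(a / (b - a)))) with hq
  have hqe : ∀ x, q.eval x = s a + Q.eval ((x - a) / (b - a)) := by
    intro x
    simp only [hq, eval_add, eval_C, eval_comp, eval_mul, eval_X]
    congr 2
    field_simp
    ring
  have hqd : ∀ x, q.derivative.eval x
      = (b - a)⁻¹ * (P.eval ((x - a) / (b - a)) + c) := by
    intro x
    simp only [hq, derivative_add, derivative_C, derivative_comp, zero_add, eval_mul, eval_comp,
      hQ', eval_add, eval_C, eval_X, derivative_mul, derivative_X, eval_one, eval_zero]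
    rw [show (b - a)⁻¹ * x + -(a / (b - a)) = (x - a) / (b - a) by field_simp; ring]
    ring
  have hqa : q.eval a = s a := by rw [hqe]; simp [hQ0]
  have hder : ∀ x ∈ Icc a b, |q.derivative.eval x - deriv s x| ≤ 2 * δ / (b - a) := by
    intro x hx
    have hy : (x - a) / (b - a) ∈ Icc (0 : ℝ) 1 :=
      ⟨div_nonneg (by linarith [hx.1]) hh.le, (div_le_one hh).2 (by linarith [hx.2])⟩
    have h1 := hPδ _ hy
    have h2 : g ((x - a) / (b - a)) = (b - a) * deriv s x := by
      simp only [hgdef]; congr 2; field_simp; ring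
    rw [h2] at h1
    have h3 : q.derivative.eval x - deriv s x =
        (b - a)⁻¹ * ((P.eval ((x - a) / (b - a)) - (b - a) * deriv s x) + c) := by
      rw [hqd]; field_simp; ring
    rw [h3, abs_mul, abs_of_pos (inv_pos.2 hh), div_eq_inv_mul (2 * δ)]
    exact mul_le_mul_of_nonneg_left ((abs_add_le _ _).trans (by linarith)) (inv_pos.2 hh).le
  have hfin : 8 * Real.exp 2 * K * C₀ * Real.exp (-(α / 2) * p) = 2 * δ := by rw [hδ]; ring
  rw [hfin]
  refine ⟨q, ?_, hqa, ?_, fun x hx => ⟨hder x hx, ?_⟩⟩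
  · refine (natDegree_C_add).le.trans (natDegree_comp_le.trans ?_)
    calc _ ≤ (p - 1 + 1) * 1 := Nat.mul_le_mul hQd hlind
      _ = p := by omega
  · rw [hqe, div_self hh.ne', hQ1]; ring
  · have hmv := (convex_Icc a b).norm_image_sub_le_of_norm_hasDerivWithin_le
      (f := fun x => q.eval x - s x) (f' := fun x => q.derivative.eval x - deriv s x)
      (fun y _ => ((q.hasDerivAt y).sub (hs.differentiable (by simp) y).hasDerivAt).hasDerivWithinAt)
      (fun y hy => hder y hy) ⟨le_rfl, hab.le⟩ hx
    simp only [hqa, sub_self, sub_zero, Real.norm_eq_abs] at hmv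
    refine hmv.trans ?_
    rw [abs_of_nonneg (by linarith [hx.1]), div_mul_eq_mul_div, div_le_iff₀ hh]
    gcongr
    linarith [hx.2]

/-- The convection-diffusion operator with diffusion coefficient `ε`. -/
def convDiffOp (ε : ℝ) (b r y : ℝ → ℝ) (x : ℝ) : ℝ :=
  -ε * deriv (deriv y) x + b x * deriv y x + r x * y x

/-- `y` is smooth and its derivatives on `[0,1]` satisfy analytic-type bounds. -/
def AnalyticBound (B G : ℝ) (y : ℝ → ℝ) : Prop :=
  ContDiff ℝ (⊤ : ℕ∞) y ∧
    ∀ n : ℕ, ∀ x ∈ Icc (0 : ℝ) 1, |iteratedDeriv n y x| ≤ B * n.factorial * G ^ n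

theorem deriv_deriv_nonneg_of_isLocalMin {y : ℝ → ℝ} {x : ℝ} (hc : ContinuousAt y x)
    (h : IsLocalMin y x) : 0 ≤ deriv (deriv y) x := by
  by_contra! hneg
  have hmax := isLocalMax_of_deriv_deriv_neg hneg h.deriv_eq_zero hc
  have heq : y =ᶠ[nhds x] fun _ => y x := by
    filter_upwards [h, hmax] with z hz1 hz2 using le_antisymm hz2 hz1
  have h2 : deriv (deriv y) x = 0 := by
    rw [heq.deriv.deriv_eq]; simp
  exact hneg.ne h2

theorem ContDiff.deriv_infty {y : ℝ → ℝ} (hy : ContDiff ℝ (⊤ : ℕ∞) y) :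
    ContDiff ℝ (⊤ : ℕ∞) (deriv y) := (contDiff_infty_iff_deriv.1 hy).2

theorem ContDiff.hasDerivAt_infty {y : ℝ → ℝ} (hy : ContDiff ℝ (⊤ : ℕ∞) y) (x : ℝ) :
    HasDerivAt y (deriv y x) x := (hy.differentiable (by simp) x).hasDerivAt

theorem convDiffOp_add {ε : ℝ} {b r y z : ℝ → ℝ} (hy : ContDiff ℝ (⊤ : ℕ∞) y)
    (hz : ContDiff ℝ (⊤ : ℕ∞) z) (x : ℝ) :
    convDiffOp ε b r (fun t => y t + z t) x = convDiffOp ε b r y x + convDiffOp ε b r z x := by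
  have h1 : deriv (fun t => y t + z t) = fun t => deriv y t + deriv z t := by
    ext t; exact ((hy.hasDerivAt_infty t).add (hz.hasDerivAt_infty t)).deriv
  have h2 : deriv (deriv (fun t => y t + z t)) x = deriv (deriv y) x + deriv (deriv z) x := by
    rw [h1]; exact ((hy.deriv_infty.hasDerivAt_infty x).add (hz.deriv_infty.hasDerivAt_infty x)).deriv
  rw [convDiffOp, h2, h1, convDiffOp, convDiffOp]; ring

theorem convDiffOp_const_mul {ε : ℝ} {b r y : ℝ → ℝ} (c : ℝ) (hy : ContDiff ℝ (⊤ : ℕ∞) y) (x : ℝ) :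
    convDiffOp ε b r (fun t => c * y t) x = c * convDiffOp ε b r y x := by
  have h1 : deriv (fun t => c * y t) = fun t => c * deriv y t := by
    ext t; exact ((hy.hasDerivAt_infty t).const_mul c).deriv
  have h2 : deriv (deriv (fun t => c * y t)) x = c * deriv (deriv y) x := by
    rw [h1]; exact ((hy.deriv_infty.hasDerivAt_infty x).const_mul c).deriv
  rw [convDiffOp, h2, h1, convDiffOp]; ring

theorem convDiffOp_sub {ε : ℝ} {b r y z : ℝ → ℝ} (hy : ContDiff ℝ (⊤ : ℕ∞) y)
    (hz : ContDiff ℝ (⊤ : ℕ∞) z) (x : ℝ) :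
    convDiffOp ε b r (fun t => y t - z t) x = convDiffOp ε b r y x - convDiffOp ε b r z x := by
  have h := convDiffOp_add (ε := ε) (b := b) (r := r) hy (contDiff_const.mul hz : ContDiff ℝ (⊤ : ℕ∞) (fun t => (-1 : ℝ) * z t)) x
  rw [convDiffOp_const_mul _ hz] at h
  simp only [neg_one_mul, ← sub_eq_add_neg] at h
  exact h

theorem convDiffOp_id {ε : ℝ} {b r : ℝ → ℝ} (x : ℝ) :
    convDiffOp ε b r (fun t => t) x = b x + r x * x := by
  simp [convDiffOp]

theorem nonneg_of_convDiffOp_pos {ε a c : ℝ} (hε : 0 < ε) {b r y : ℝ → ℝ}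
    (hy : ContDiff ℝ (⊤ : ℕ∞) y) (hr : ∀ x ∈ Icc a c, 0 ≤ r x)
    (ha : 0 ≤ y a) (hc : 0 ≤ y c) (h : ∀ x ∈ Icc a c, 0 < convDiffOp ε b r y x) :
    ∀ x ∈ Icc a c, 0 ≤ y x := by
  intro x hx
  obtain ⟨z, hz, hmin⟩ := isCompact_Icc.exists_isMinOn ⟨x, hx⟩ hy.continuous.continuousOn
  refine le_trans ?_ (hmin hx)
  by_contra! hneg
  have hza : a ≠ z := by rintro rfl; linarith
  have hzc : z ≠ c := by rintro rfl; linarith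
  have hloc : IsLocalMin y z :=
    hmin.isLocalMin (Icc_mem_nhds (lt_of_le_of_ne hz.1 hza) (lt_of_le_of_ne hz.2 hzc))
  have h1 := deriv_deriv_nonneg_of_isLocalMin hy.continuous.continuousAt hloc
  have h2 := h z hz
  rw [convDiffOp, hloc.deriv_eq_zero] at h2
  nlinarith [mul_nonneg (hr z hz) (neg_nonneg.2 hneg.le), mul_nonneg hε.le h1]

theorem nonneg_of_convDiffOp_nonneg {ε a c β : ℝ} (hε : 0 < ε) (hβ : 0 < β) {b r y : ℝ → ℝ}
    (hy : ContDiff ℝ (⊤ : ℕ∞) y) (ha0 : 0 ≤ a) (hb : ∀ x ∈ Icc a c, β ≤ b x)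
    (hr : ∀ x ∈ Icc a c, 0 ≤ r x)
    (ha : 0 ≤ y a) (hc : 0 ≤ y c) (h : ∀ x ∈ Icc a c, 0 ≤ convDiffOp ε b r y x) :
    ∀ x ∈ Icc a c, 0 ≤ y x := by
  intro x hx
  have key : ∀ δ > 0, 0 ≤ y x + δ * x := by
    intro δ hδ
    have hlin : ContDiff ℝ (⊤ : ℕ∞) (fun t : ℝ => δ * t) := contDiff_const.mul contDiff_id
    refine nonneg_of_convDiffOp_pos (b := b) (y := fun t => y t + δ * t) hε (hy.add hlin) hr
      (by positivity) (add_nonneg hc (mul_nonneg hδ.le (ha0.trans (hx.1.trans hx.2)))) ?_ x hx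
    intro t ht
    rw [convDiffOp_add hy hlin, convDiffOp_const_mul δ contDiff_fun_id, convDiffOp_id]
    have h1 := hb t ht
    have h2 := mul_nonneg (hr t ht) (ha0.trans ht.1)
    have : 0 < δ * (b t + r t * t) := mul_pos hδ (by linarith)
    linarith [h t ht]
  by_contra! hneg
  have hx0 : 0 ≤ x := ha0.trans hx.1
  have := key (-y x / (2 * (x + 1))) (by apply div_pos <;> linarith)
  have h3 : -y x / (2 * (x + 1)) * x ≤ -y x / 2 := by
    rw [div_mul_eq_mul_div, div_le_div_iff₀ (by linarith) (by norm_num)]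
    nlinarith
  linarith

/-- Comparison principle. -/
theorem abs_le_of_abs_convDiffOp_le {ε a c β : ℝ} (hε : 0 < ε) (hβ : 0 < β) {b r y ψ : ℝ → ℝ}
    (hy : ContDiff ℝ (⊤ : ℕ∞) y) (hψ : ContDiff ℝ (⊤ : ℕ∞) ψ) (ha0 : 0 ≤ a)
    (hb : ∀ x ∈ Icc a c, β ≤ b x) (hr : ∀ x ∈ Icc a c, 0 ≤ r x)
    (ha : |y a| ≤ ψ a) (hc : |y c| ≤ ψ c)
    (h : ∀ x ∈ Icc a c, |convDiffOp ε b r y x| ≤ convDiffOp ε b r ψ x) :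
    ∀ x ∈ Icc a c, |y x| ≤ ψ x := by
  intro x hx
  have h1 := nonneg_of_convDiffOp_nonneg (y := fun t => ψ t - y t) hε hβ (hψ.sub hy) ha0 hb hr
    (sub_nonneg.2 (le_of_abs_le ha)) (sub_nonneg.2 (le_of_abs_le hc)) (fun t ht => by
      rw [convDiffOp_sub hψ hy]; exact sub_nonneg.2 (le_of_abs_le (h t ht))) x hx
  have h2 := nonneg_of_convDiffOp_nonneg (y := fun t => ψ t + y t) hε hβ (hψ.add hy) ha0 hb hr
    (by linarith [neg_le_of_abs_le ha]) (by linarith [neg_le_of_abs_le hc]) (fun t ht => by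
      rw [convDiffOp_add hψ hy]; linarith [neg_le_of_abs_le (h t ht)]) x hx
  exact abs_le.2 ⟨by linarith, by linarith⟩

/-- Bound on the flux `ε y'` in terms of bounds for `y` and for the residual. -/
theorem eps_mul_abs_deriv_le {ε a c B Y F : ℝ} (hε : 0 < ε) (hac : a < c) {b r y : ℝ → ℝ}
    (hy : ContDiff ℝ (⊤ : ℕ∞) y) (hbs : ContDiff ℝ (⊤ : ℕ∞) b)
    (hb : ∀ x ∈ Icc a c, |b x| ≤ B) (hb' : ∀ x ∈ Icc a c, |deriv b x| ≤ B)
    (hr : ∀ x ∈ Icc a c, |r x| ≤ B) (hY : ∀ x ∈ Icc a c, |y x| ≤ Y)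
    (hF : ∀ x ∈ Icc a c, |convDiffOp ε b r y x| ≤ F) :
    ∀ x ∈ Icc a c, ε * |deriv y x| ≤ 2 * ε * Y / (c - a) + 2 * B * Y + (c - a) * (2 * B * Y + F) := by
  intro x hx
  have hh : 0 < c - a := sub_pos.2 hac
  obtain ⟨ξ, hξ, hs⟩ := exists_deriv_eq_slope y hac hy.continuous.continuousOn
    (hy.differentiable (by simp)).differentiableOn
  have hξ' : ξ ∈ Icc a c := ⟨hξ.1.le, hξ.2.le⟩
  have hB0 : 0 ≤ B := (abs_nonneg _).trans (hb x hx)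
  have hY0 : 0 ≤ Y := (abs_nonneg _).trans (hY x hx)
  have hF0 : 0 ≤ F := (abs_nonneg _).trans (hF x hx)
  have hmul : ∀ {u v U V : ℝ}, |u| ≤ U → |v| ≤ V → |u * v| ≤ U * V := by
    intro u v U V hu hv
    rw [abs_mul]
    exact mul_le_mul hu hv (abs_nonneg _) ((abs_nonneg _).trans hu)
  have hmv := (convex_Icc a c).norm_image_sub_le_of_norm_hasDerivWithin_le
    (f := fun t => ε * deriv y t - b t * y t)
    (f' := fun t => ε * deriv (deriv y) t - (deriv b t * y t + b t * deriv y t))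
    (C := 2 * B * Y + F)
    (fun t _ => (((hy.deriv_infty.hasDerivAt_infty t).const_mul ε).sub
      ((hbs.hasDerivAt_infty t).mul (hy.hasDerivAt_infty t))).hasDerivWithinAt)
    (fun t ht => by
      have e : ε * deriv (deriv y) t - (deriv b t * y t + b t * deriv y t) =
        (r t * y t - deriv b t * y t) - convDiffOp ε b r y t := by rw [convDiffOp]; ring
      rw [Real.norm_eq_abs, e]
      have h1 := abs_sub (r t * y t - deriv b t * y t) (convDiffOp ε b r y t)
      have h2 := abs_sub (r t * y t) (deriv b t * y t)
      linarith [hmul (hr t ht) (hY t ht), hmul (hb' t ht) (hY t ht), hF t ht])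
    hξ' hx
  rw [Real.norm_eq_abs, Real.norm_eq_abs] at hmv
  have hd : |x - ξ| ≤ c - a := abs_le.2 ⟨by linarith [hx.1, hξ'.2], by linarith [hx.2, hξ'.1]⟩
  have h1 : |ε * deriv y ξ| ≤ 2 * ε * Y / (c - a) := by
    rw [hs, abs_mul, abs_div, abs_of_pos hε, abs_of_pos hh, ← mul_div_assoc,
      show 2 * ε * Y = ε * (2 * Y) by ring]
    gcongr
    have := abs_sub (y c) (y a)
    nlinarith [hY c ⟨hac.le, le_rfl⟩, hY a ⟨le_rfl, hac.le⟩]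
  have h2 := hmul (hb x hx) (hY x hx)
  have h3 := hmul (hb ξ hξ') (hY ξ hξ')
  have h4 : (2 * B * Y + F) * |x - ξ| ≤ (2 * B * Y + F) * (c - a) := by gcongr
  have e : ε * |deriv y x| = |ε * deriv y x| := by rw [abs_mul, abs_of_pos hε]
  rw [e]
  have e2 : ε * deriv y x = (ε * deriv y x - b x * y x - (ε * deriv y ξ - b ξ * y ξ)) +
    ε * deriv y ξ + (b x * y x - b ξ * y ξ) := by ring
  rw [e2]
  have t1 := abs_add_three (ε * deriv y x - b x * y x - (ε * deriv y ξ - b ξ * y ξ))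
    (ε * deriv y ξ) (b x * y x - b ξ * y ξ)
  have t2 := abs_sub (b x * y x) (b ξ * y ξ)
  linarith
  
theorem iteratedDeriv_eqOn_Icc {y z : ℝ → ℝ} (hy : ContDiff ℝ (⊤ : ℕ∞) y)
    (hz : ContDiff ℝ (⊤ : ℕ∞) z) {a c : ℝ} (hac : a < c) (h : EqOn y z (Icc a c)) (n : ℕ) :
    EqOn (iteratedDeriv n y) (iteratedDeriv n z) (Icc a c) := by
  intro x hx
  rw [← iteratedDerivWithin_eq_iteratedDeriv (uniqueDiffOn_Icc hac)
      (hy.contDiffAt.of_le (by exact_mod_cast le_top)) hx,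
    ← iteratedDerivWithin_eq_iteratedDeriv (uniqueDiffOn_Icc hac)
      (hz.contDiffAt.of_le (by exact_mod_cast le_top)) hx]
  exact iteratedDerivWithin_congr h hx

theorem abs_iteratedDeriv_mul_le {g y : ℝ → ℝ} (hg : ContDiff ℝ (⊤ : ℕ∞) g)
    (hy : ContDiff ℝ (⊤ : ℕ∞) y) {x B G X K C : ℝ} {n N₀ j : ℕ} (hB : 0 ≤ B) (hG : 0 ≤ G)
    (hK : 0 < K) (hKG : 2 * G ≤ K) (hC : 0 ≤ C)
    (hX : (N₀ : ℝ) ≤ X) (hX0 : 0 < X) (hn : n ≤ N₀)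
    (hgb : ∀ k, |iteratedDeriv k g x| ≤ B * k.factorial * G ^ k)
    (hyb : ∀ k ≤ n, |iteratedDeriv k y x| ≤ C * (K * X) ^ (k + j)) :
    |iteratedDeriv n (fun t => g t * y t) x| ≤ 2 * B * C * (K * X) ^ (n + j) := by
  rw [show (fun t => g t * y t) = g * y from rfl,
    iteratedDeriv_mul (hg.contDiffAt.of_le (by exact_mod_cast le_top))
      (hy.contDiffAt.of_le (by exact_mod_cast le_top))]
  refine (Finset.abs_sum_le_sum_abs _ _).trans ?_
  have hterm : ∀ k ∈ Finset.range (n + 1),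
      |(n.choose k : ℝ) * iteratedDeriv k g x * iteratedDeriv (n - k) y x|
        ≤ B * C * (K * X) ^ (n + j) * (1 / 2) ^ k := by
    intro k hk
    have hkn : k ≤ n := Nat.lt_succ_iff.1 (Finset.mem_range.1 hk)
    have h1 : (n.choose k : ℝ) * k.factorial ≤ X ^ k := by
      have : n.choose k * k.factorial ≤ n ^ k := by
        rw [mul_comm, ← Nat.descFactorial_eq_factorial_mul_choose]
        exact Nat.descFactorial_le_pow n k
      calc (n.choose k : ℝ) * k.factorial ≤ (n : ℝ) ^ k := by exact_mod_cast this
        _ ≤ X ^ k := by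
          gcongr
          exact le_trans (by exact_mod_cast hn) hX
    rw [abs_mul, abs_mul, Nat.abs_cast]
    calc (n.choose k : ℝ) * |iteratedDeriv k g x| * |iteratedDeriv (n - k) y x|
        ≤ (n.choose k : ℝ) * (B * k.factorial * G ^ k) * (C * (K * X) ^ (n - k + j)) := by
          gcongr
          · exact hgb k
          · exact hyb _ (Nat.sub_le _ _)
      _ = B * C * (K * X) ^ (n - k + j) * G ^ k * ((n.choose k : ℝ) * k.factorial) := by ring
      _ ≤ B * C * (K * X) ^ (n - k + j) * (K / 2) ^ k * X ^ k := by
          gcongr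
          linarith
      _ = B * C * ((K * X) ^ (n - k + j) * (K * X) ^ k) * (1 / 2) ^ k := by
          rw [div_pow, mul_pow K X k, div_pow]; ring
      _ = _ := by rw [← pow_add]; congr 3; omega
  refine (Finset.sum_le_sum hterm).trans ?_
  rw [← Finset.mul_sum]
  have hgeo : ∑ k ∈ Finset.range (n + 1), (1 / 2 : ℝ) ^ k ≤ 2 := sum_geometric_two_le _
  have : 0 ≤ B * C * (K * X) ^ (n + j) := by positivity
  nlinarith

/-- Derivative bounds for solutions of the singularly perturbed equation. -/
theorem abs_iteratedDeriv_le_of_convDiffOp_eq {B G β : ℝ} (hB : 0 < B) (hG : 0 < G) (hβ : 0 < β)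
    {b r f : ℝ → ℝ} (hb : AnalyticBound B G b) (hr : AnalyticBound B G r)
    (hf : AnalyticBound B G f) (hbβ : ∀ x ∈ Icc (0 : ℝ) 1, β ≤ b x)
    (hr0 : ∀ x ∈ Icc (0 : ℝ) 1, 0 ≤ r x) :
    ∃ C K : ℝ, 0 < C ∧ 1 ≤ K ∧ ∀ ε : ℝ, 0 < ε → ε ≤ 1 → ∀ u : ℝ → ℝ, ContDiff ℝ (⊤ : ℕ∞) u →
      u 0 = 0 → u 1 = 0 → (∀ x ∈ Icc (0 : ℝ) 1, convDiffOp ε b r u x = f x) →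
      ∀ (N₀ : ℕ) (X : ℝ), (N₀ : ℝ) ≤ X → 1 / ε ≤ X → ∀ n ≤ N₀, ∀ x ∈ Icc (0 : ℝ) 1,
        |iteratedDeriv n u x| ≤ C * (K * X) ^ n := by
  set B₁ := B * (1 + G) with hB₁
  have hB₁B : B ≤ B₁ := by nlinarith
  set Y := B / β with hY
  have hY0 : 0 < Y := by positivity
  set C := B + 2 * Y + 4 * B₁ * Y + B with hCdef
  have hBY : 0 < B₁ * Y := by positivity
  have hC : 0 < C := by positivity
  set K := 1 + 2 * G + 4 * B with hK
  have hK1 : 1 ≤ K := by nlinarith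
  refine ⟨C, K, hC, hK1, ?_⟩
  intro ε hε hε1 u hu hu0 hu1 hLu N₀ X hN₀ hX
  have b0 : ∀ {g : ℝ → ℝ}, AnalyticBound B G g → ∀ x ∈ Icc (0 : ℝ) 1, |g x| ≤ B := by
    intro g hg x hx; simpa using hg.2 0 x hx
  have b1 : ∀ {g : ℝ → ℝ}, AnalyticBound B G g → ∀ x ∈ Icc (0 : ℝ) 1, |deriv g x| ≤ B * G := by
    intro g hg x hx; simpa using hg.2 1 x hx
  have huY : ∀ x ∈ Icc (0 : ℝ) 1, |u x| ≤ Y := by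
    intro x hx
    have := abs_le_of_abs_convDiffOp_le (ψ := fun t => Y * t) hε hβ hu
      (contDiff_const.mul contDiff_id) le_rfl hbβ hr0 (by simp [hu0]) (by simp [hu1, hY0.le])
      (fun t ht => by
        rw [hLu t ht, convDiffOp_const_mul Y contDiff_fun_id, convDiffOp_id]
        refine (b0 hf t ht).trans ?_
        have h1 : B = Y * β := by rw [hY]; field_simp
        rw [h1]
        gcongr
        nlinarith [hbβ t ht, mul_nonneg (hr0 t ht) ht.1]) x hx
    nlinarith [hx.2]
  have hu' : ∀ x ∈ Icc (0 : ℝ) 1, ε * |deriv u x| ≤ C := by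
    intro x hx
    have := eps_mul_abs_deriv_le (B := B₁) (Y := Y) (F := B) hε zero_lt_one hu hb.1
      (fun t ht => (b0 hb t ht).trans hB₁B) (fun t ht => (b1 hb t ht).trans (by nlinarith))
      (fun t ht => (b0 hr t ht).trans hB₁B) huY (fun t ht => by rw [hLu t ht]; exact b0 hf t ht)
      x hx
    refine this.trans ?_
    have : ε * Y ≤ Y := by nlinarith
    rw [hCdef]; simp only [sub_zero, div_one, one_mul]
    nlinarith
  have hX1 : 1 ≤ X := le_trans ((one_le_div hε).2 hε1) hX
  have hX0 : 0 < X := by linarith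
  have hKX : 1 ≤ K * X := by nlinarith
  intro n
  induction n using Nat.strong_induction_on with
  | _ n ih =>
  intro hn x hx
  match n, ih, hn with
  | 0, _, _ => simp only [iteratedDeriv_zero, pow_zero, mul_one]; exact (huY x hx).trans (by nlinarith)
  | 1, _, _ =>
    rw [iteratedDeriv_one, pow_one]
    have h1 := hu' x hx
    have h2 : |deriv u x| ≤ C * (1 / ε) := by
      rw [mul_one_div, le_div_iff₀ hε]; linarith
    refine h2.trans ?_
    gcongr
    nlinarith
  | n + 2, ih, hn =>
    have hs2 := hu.deriv_infty.deriv_infty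
    have heq := iteratedDeriv_eqOn_Icc (y := fun t => ε * deriv (deriv u) t)
      (z := fun t => (b t * deriv u t + r t * u t) - f t) (contDiff_const.mul hs2)
      (((hb.1.mul hu.deriv_infty).add (hr.1.mul hu)).sub hf.1) zero_lt_one
      (fun t ht => by have := hLu t ht; rw [convDiffOp] at this; simp only; linarith) n hx
    have hca : ∀ {g : ℝ → ℝ}, ContDiff ℝ (⊤ : ℕ∞) g → ContDiffAt ℝ n g x := fun hg =>
      hg.contDiffAt.of_le (by exact_mod_cast le_top)
    rw [iteratedDeriv_const_mul_field,
      iteratedDeriv_fun_sub (hca ((hb.1.mul hu.deriv_infty).add (hr.1.mul hu))) (hca hf.1),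
      iteratedDeriv_fun_add (hca (hb.1.mul hu.deriv_infty)) (hca (hr.1.mul hu)),
      ← iteratedDeriv_succ', ← iteratedDeriv_succ'] at heq
    have hK0 : 0 < K := by linarith
    have hKG : 2 * G ≤ K := by nlinarith
    have e1 := abs_iteratedDeriv_mul_le (n := n) (N₀ := N₀) (j := 1) hb.1 hu.deriv_infty hB.le hG.le hK0
      hKG hC.le hN₀ hX0 (by omega) (fun k => hb.2 k x hx) (fun k hk => by
        rw [← iteratedDeriv_succ']; exact ih (k + 1) (by omega) (by omega) x hx)
    have e2 := abs_iteratedDeriv_mul_le (n := n) (N₀ := N₀) (j := 0) hr.1 hu hB.le hG.le hK0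
      hKG hC.le hN₀ hX0 (by omega) (fun k => hr.2 k x hx) (fun k hk =>
        ih k (by omega) (by omega) x hx)
    have e3 : |iteratedDeriv n f x| ≤ C * (K * X) ^ (n + 1) := by
      refine (hf.2 n x hx).trans ?_
      have hfac : (n.factorial : ℝ) ≤ X ^ n := by
        calc (n.factorial : ℝ) ≤ (n : ℝ) ^ n := by exact_mod_cast Nat.factorial_le_pow n
          _ ≤ X ^ n := by
            gcongr
            refine le_trans ?_ hN₀
            exact_mod_cast (by omega : n ≤ N₀)
      calc B * n.factorial * G ^ n ≤ C * X ^ n * K ^ n := by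
            gcongr
            · nlinarith
            · nlinarith
        _ = C * (K * X) ^ n := by rw [mul_pow]; ring
        _ ≤ C * (K * X) ^ (n + 1) := by
            gcongr
            omega
    have e2' : 2 * B * C * (K * X) ^ (n + 0) ≤ 2 * B * C * (K * X) ^ (n + 1) := by
      gcongr
      omega
    have hsum : ε * |iteratedDeriv (n + 2) u x| ≤ (4 * B + 1) * C * (K * X) ^ (n + 1) := by
      rw [← abs_of_pos hε, ← abs_mul, heq]
      refine (abs_sub _ _).trans ?_
      have := abs_add_le (iteratedDeriv n (fun t => b t * deriv u t) x)
        (iteratedDeriv n (fun t => r t * u t) x)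
      linarith
    have h5 : |iteratedDeriv (n + 2) u x| ≤ (1 / ε) * ((4 * B + 1) * C * (K * X) ^ (n + 1)) := by
      rw [one_div, ← div_eq_inv_mul, le_div_iff₀ hε]; linarith
    refine h5.trans ?_
    calc _ ≤ X * (K * C * (K * X) ^ (n + 1)) := by
          gcongr
          nlinarith
      _ = _ := by ring

theorem AnalyticBound.congr {B G : ℝ} {y z : ℝ → ℝ} (hy : AnalyticBound B G y)
    (hz : ContDiff ℝ (⊤ : ℕ∞) z) (h : EqOn z y (Icc 0 1)) : AnalyticBound B G z :=
  ⟨hz, fun n x hx => by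
    rw [iteratedDeriv_eqOn_Icc hz hy.1 zero_lt_one h n hx]; exact hy.2 n x hx⟩

theorem exists_smooth_pos_extension {b : ℝ → ℝ} (hb : ContDiff ℝ (⊤ : ℕ∞) b) {β : ℝ} (hβ : 0 < β)
    {s : Set ℝ} (hbβ : ∀ x ∈ s, β ≤ b x) :
    ∃ c : ℝ → ℝ, ContDiff ℝ (⊤ : ℕ∞) c ∧ (∀ x, 0 < c x) ∧ EqOn c b s := by
  set T : ℝ → ℝ := fun x => Real.smoothTransition ((b x - β / 2) / (β / 2)) with hT
  have hTs : ContDiff ℝ (⊤ : ℕ∞) T :=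
    Real.smoothTransition.contDiff.comp ((hb.sub contDiff_const).div_const _)
  refine ⟨fun x => β / 2 * (1 - T x) + b x * T x,
    (contDiff_const.mul (contDiff_const.sub hTs)).add (hb.mul hTs), fun x => ?_, fun x hx => ?_⟩
  · have h0 : 0 ≤ T x := Real.smoothTransition.nonneg _
    have h1 : T x ≤ 1 := Real.smoothTransition.le_one _
    rcases le_or_gt (b x) (β / 2) with h | h
    · have : T x = 0 := Real.smoothTransition.zero_of_nonpos
        (div_nonpos_of_nonpos_of_nonneg (by linarith) (by linarith))
      simp only [this]; linarith
    · nlinarith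
  · have : T x = 1 := Real.smoothTransition.one_of_one_le
      ((one_le_div (by linarith)).2 (by linarith [hbβ x hx]))
    simp [this]

theorem ContDiff.integral_infty {g : ℝ → ℝ} (hg : ContDiff ℝ (⊤ : ℕ∞) g) :
    ContDiff ℝ (⊤ : ℕ∞) (fun x => ∫ t in (0 : ℝ)..x, g t) ∧
      deriv (fun x => ∫ t in (0 : ℝ)..x, g t) = g := by
  have h : ∀ x, HasDerivAt (fun x => ∫ t in (0 : ℝ)..x, g t) (g x) x := fun x =>
    intervalIntegral.integral_hasDerivAt_right (hg.continuous.intervalIntegrable _ _)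
      (hg.continuous.stronglyMeasurableAtFilter _ _) hg.continuous.continuousAt
  have h2 : deriv (fun x => ∫ t in (0 : ℝ)..x, g t) = g := funext fun x => (h x).deriv
  refine ⟨contDiff_infty_iff_deriv.2 ⟨fun x => (h x).differentiableAt, ?_⟩, h2⟩
  rw [h2]; exact hg

theorem exists_transport_solution {b r g : ℝ → ℝ} (hb : ContDiff ℝ (⊤ : ℕ∞) b)
    (hb0 : ∀ x, 0 < b x) (hr : ContDiff ℝ (⊤ : ℕ∞) r) (hg : ContDiff ℝ (⊤ : ℕ∞) g) :
    ∃ w : ℝ → ℝ, ContDiff ℝ (⊤ : ℕ∞) w ∧ w 0 = 0 ∧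
      ∀ x, b x * deriv w x + r x * w x = g x := by
  have hbn : ∀ x, b x ≠ 0 := fun x => (hb0 x).ne'
  obtain ⟨hR, hR'⟩ := (hr.div hb hbn).integral_infty
  set R : ℝ → ℝ := fun x => ∫ t in (0 : ℝ)..x, r t / b t with hRdef
  have hs : ContDiff ℝ (⊤ : ℕ∞) (fun t => Real.exp (R t) * (g t / b t)) :=
    (hR.exp).mul (hg.div hb hbn)
  obtain ⟨hI, hI'⟩ := hs.integral_infty
  set I : ℝ → ℝ := fun x => ∫ t in (0 : ℝ)..x, Real.exp (R t) * (g t / b t) with hIdef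
  refine ⟨fun x => Real.exp (-R x) * I x, hR.neg.exp.mul hI, by simp [hIdef], fun x => ?_⟩
  have h1 : HasDerivAt R (r x / b x) x := by
    have := hR.hasDerivAt_infty x; rwa [hR'] at this
  have h2 : HasDerivAt I (Real.exp (R x) * (g x / b x)) x := by
    have := hI.hasDerivAt_infty x; rwa [hI'] at this
  have h3 := (h1.neg.exp.mul h2).deriv
  have h3' : deriv (fun x => Real.exp (-R x) * I x) x = _ := h3
  rw [h3']
  have h4 : Real.exp (-R x) * Real.exp (R x) = 1 := by rw [← Real.exp_add]; simp
  have := hbn x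
  simp only [Pi.neg_apply]
  field_simp
  linear_combination (g x) * h4

theorem choose_mul_factorial_mul_le (n k m : ℕ) (hk : k ≤ n) :
    n.choose k * k.factorial * (n - k + m).factorial ≤ (n + m).factorial := by
  rw [mul_comm (n.choose k), ← Nat.descFactorial_eq_factorial_mul_choose]
  have h1 := Nat.factorial_mul_descFactorial (n := n + m) (k := k) (by omega)
  rw [← h1, show n + m - k = n - k + m by omega, mul_comm]
  exact Nat.mul_le_mul_left _ (Nat.descFactorial_le k (Nat.le_add_right n m))

theorem leibniz_term_le {B G K D gk yk : ℝ} {n k m : ℕ} (hk : k ≤ n) (hB : 0 ≤ B) (hG : 0 ≤ G)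
    (hK : 0 < K) (hD : 0 ≤ D) (j : ℕ)
    (hg : |gk| ≤ B * k.factorial * G ^ k)
    (hy : |yk| ≤ D * K ^ (n - k + j) * (n - k + m).factorial) :
    |(n.choose k : ℝ) * gk * yk| ≤ B * D * K ^ (n + j) * (n + m).factorial * (G / K) ^ k := by
  have h1 : (n.choose k : ℝ) * k.factorial * (n - k + m).factorial ≤ (n + m).factorial := by
    exact_mod_cast choose_mul_factorial_mul_le n k m hk
  rw [abs_mul, abs_mul, Nat.abs_cast]
  calc (n.choose k : ℝ) * |gk| * |yk|
      ≤ (n.choose k : ℝ) * (B * k.factorial * G ^ k) *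
          (D * K ^ (n - k + j) * (n - k + m).factorial) := by gcongr
    _ = B * D * K ^ (n - k + j) * G ^ k *
          ((n.choose k : ℝ) * k.factorial * (n - k + m).factorial) := by ring
    _ ≤ B * D * K ^ (n - k + j) * G ^ k * (n + m).factorial := by gcongr
    _ = _ := by
      rw [show n + j = (n - k + j) + k by omega, pow_add K _ k, div_pow]
      field_simp

/-- Solution operator of the reduced transport problem, with derivative bounds that are uniform
in the size parameters `H` and `m` of the data. -/
theorem exists_transport_bound {B G β : ℝ} (hB : 0 < B) (hG : 0 < G) (hβ : 0 < β)
    {b r : ℝ → ℝ} (hb : AnalyticBound B G b) (hr : AnalyticBound B G r)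
    (hb0 : ∀ x, 0 < b x) (hbβ : ∀ x ∈ Icc (0 : ℝ) 1, β ≤ b x) :
    ∃ Λ K : ℝ, 1 ≤ Λ ∧ 1 ≤ K ∧ G ≤ K ∧ ∀ P : ℝ → ℝ, ContDiff ℝ (⊤ : ℕ∞) P →
      ∃ w : ℝ → ℝ, ContDiff ℝ (⊤ : ℕ∞) w ∧ w 0 = 0 ∧
      (∀ x, b x * deriv w x + r x * w x = deriv P x) ∧
      ∀ (H : ℝ) (m : ℕ), 0 ≤ H →
        (∀ n : ℕ, ∀ x ∈ Icc (0 : ℝ) 1, |iteratedDeriv n P x| ≤ H * K ^ n * (n + m).factorial) →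
        ∀ n : ℕ, ∀ x ∈ Icc (0 : ℝ) 1, |iteratedDeriv n w x| ≤ Λ * H * K ^ n * (n + m).factorial := by
  set L := B * (1 + G) / β with hL
  have hL0 : 0 < L := by positivity
  set Λ := 1 + 2 / β + (2 * Real.exp L + 1) / β with hΛ
  have hΛ1 : 1 ≤ Λ := by rw [hΛ]; have : 0 < 2 / β := by positivity
                         have : 0 < (2 * Real.exp L + 1) / β := by positivity
                         linarith
  have hΛ2 : 2 ≤ β * Λ := by
    have : β * Λ = β + 2 + (2 * Real.exp L + 1) := by rw [hΛ]; field_simp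
    have := Real.exp_pos L
    nlinarith
  have hΛ3 : 2 * Real.exp L + 1 ≤ β * Λ := by
    have : β * Λ = β + 2 + (2 * Real.exp L + 1) := by rw [hΛ]; field_simp
    linarith
  set K := 1 + 2 * G + 4 * B * (G + 1) / β with hK
  have hKa : 0 < 4 * B * (G + 1) / β := by positivity
  have hK1 : 1 ≤ K := by linarith
  have hKG : 2 * G ≤ K := by linarith
  have hKβ : 4 * B * (G + 1) ≤ K * β := by
    have : 4 * B * (G + 1) = 4 * B * (G + 1) / β * β := by field_simp
    rw [this]; gcongr; linarith
  have hK0 : 0 < K := by linarith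
  have hΛ0 : 0 < Λ := by linarith
  refine ⟨Λ, K, hΛ1, hK1, by linarith, fun P hP => ?_⟩
  obtain ⟨w, hw, hw0, heq⟩ := exists_transport_solution hb.1 hb0 hr.1 hP.deriv_infty
  refine ⟨w, hw, hw0, heq, fun H m hH hPb => ?_⟩
  have hbase : ∀ x ∈ Icc (0 : ℝ) 1, |w x| ≤ Λ * H * m.factorial := by
    intro x hx
    set Q := H * (m.factorial : ℝ) with hQ
    have hQ0 : 0 ≤ Q := by positivity
    have hPQ : ∀ t ∈ Icc (0 : ℝ) 1, |P t| ≤ Q := fun t ht => by simpa using hPb 0 t ht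
    have hd : ∀ t, HasDerivAt (fun t => b t * w t - P t) ((deriv b t - r t) * w t) t := fun t => by
      have := ((hb.1.hasDerivAt_infty t).mul (hw.hasDerivAt_infty t)).sub (hP.hasDerivAt_infty t)
      refine this.congr_deriv ?_
      linear_combination heq t
    have hgr := norm_le_gronwallBound_of_norm_deriv_right_le (f := fun t => b t * w t - P t)
      (f' := fun t => (deriv b t - r t) * w t) (δ := Q) (K := L) (ε := L * Q) (a := 0) (b := 1)
      (((hb.1.mul hw).sub hP).continuous.continuousOn) (fun t _ => (hd t).hasDerivWithinAt)
      (by simp only [hw0, mul_zero, zero_sub, norm_neg, Real.norm_eq_abs]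
          exact hPQ 0 ⟨le_rfl, zero_le_one⟩)
      (fun t ht => by
        have ht' : t ∈ Icc (0 : ℝ) 1 := ⟨ht.1, ht.2.le⟩
        rw [Real.norm_eq_abs, Real.norm_eq_abs, abs_mul]
        have h1 : |deriv b t - r t| ≤ B * (1 + G) := by
          have e1 := hb.2 1 t ht'
          have e2 := hr.2 0 t ht'
          simp at e1 e2
          refine (abs_sub _ _).trans ?_
          linarith
        have h2 : |w t| ≤ (|b t * w t - P t| + Q) / β := by
          rw [le_div_iff₀ hβ]
          have h3 : |b t * w t| ≤ |b t * w t - P t| + Q := by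
            have := abs_add_le (b t * w t - P t) (P t)
            rw [sub_add_cancel] at this
            linarith [hPQ t ht']
          rw [abs_mul, abs_of_pos (hb0 t)] at h3
          nlinarith [hbβ t ht', abs_nonneg (w t)]
        calc |deriv b t - r t| * |w t| ≤ B * (1 + G) * ((|b t * w t - P t| + Q) / β) := by gcongr
          _ = _ := by rw [hL]; ring) x hx
    rw [gronwallBound_of_K_ne_0 hL0.ne', Real.norm_eq_abs, sub_zero] at hgr
    have hexp : Real.exp (L * x) ≤ Real.exp L := Real.exp_le_exp.2 (by nlinarith [hx.2])
    have h1 : |b x * w x - P x| ≤ Q * (2 * Real.exp L) := by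
      refine hgr.trans ?_
      have : L * Q / L = Q := by field_simp
      rw [this]
      nlinarith
    have h2 : |b x * w x| ≤ Q * (2 * Real.exp L + 1) := by
      have := abs_add_le (b x * w x - P x) (P x)
      rw [sub_add_cancel] at this
      linarith [hPQ x hx]
    rw [abs_mul, abs_of_pos (hb0 x)] at h2
    have h3 : β * |w x| ≤ Q * (β * Λ) := by
      calc β * |w x| ≤ b x * |w x| := by gcongr; exact hbβ x hx
        _ ≤ _ := h2
        _ ≤ _ := by gcongr
    have h4 : β * |w x| ≤ β * (Λ * H * m.factorial) := by rw [hQ] at h3; linarith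
    exact le_of_mul_le_mul_left h4 hβ
  intro n
  induction n using Nat.strong_induction_on with
  | _ n ih =>
  intro x hx
  match n, ih with
  | 0, _ => simpa using hbase x hx
  | n + 1, ih =>
    have hca : ∀ {g : ℝ → ℝ}, ContDiff ℝ (⊤ : ℕ∞) g → ContDiffAt ℝ n g x := fun hg =>
      hg.contDiffAt.of_le (by exact_mod_cast le_top)
    have hfun : b * deriv w + r * w = deriv P := funext fun t => heq t
    have hn := congrArg (fun F => iteratedDeriv n F x) hfun
    rw [iteratedDeriv_add (f := b * deriv w) (g := r * w) (hca (hb.1.mul hw.deriv_infty))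
        (hca (hr.1.mul hw)),
      iteratedDeriv_mul (hca hb.1) (hca hw.deriv_infty), iteratedDeriv_mul (hca hr.1) (hca hw),
      Finset.sum_range_succ', ← iteratedDeriv_succ'] at hn
    simp only [Nat.choose_zero_right, Nat.cast_one, one_mul, iteratedDeriv_zero, Nat.sub_zero,
      ← iteratedDeriv_succ'] at hn
    set E := K ^ (n + 1) * ((n + 1 + m).factorial : ℝ) with hE
    have hE0 : 0 < E := by positivity
    have hD : 0 ≤ Λ * H := by positivity
    have hsplit : ∀ k, (G / K) ^ k ≤ (1 / 2 : ℝ) ^ k := fun k =>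
      pow_le_pow_left₀ (by positivity)
        (by rw [div_le_div_iff₀ hK0 (by norm_num)]; linarith) k
    have hS1 : |∑ k ∈ Finset.range n, (n.choose (k + 1) : ℝ) * iteratedDeriv (k + 1) b x *
        iteratedDeriv (n - (k + 1) + 1) w x| ≤ B * (Λ * H) * E * (2 * G / K) := by
      refine (Finset.abs_sum_le_sum_abs _ _).trans ?_
      calc _ ≤ ∑ k ∈ Finset.range n, B * (Λ * H) * E * (G / K) * (1 / 2 : ℝ) ^ k := by
            refine Finset.sum_le_sum fun k hk => ?_
            have hk' := Finset.mem_range.1 hk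
            have := leibniz_term_le (n := n) (k := k + 1) (m := m + 1) (by omega) hB.le hG.le hK0 hD 1
              (hb.2 (k + 1) x hx)
              (by have := ih (n - (k + 1) + 1) (by omega) x hx
                  rwa [show n - (k + 1) + 1 + m = n - (k + 1) + (m + 1) by ring] at this)
            refine this.trans ?_
            calc _ = B * (Λ * H) * E * (G / K) * (G / K) ^ k := by
                  rw [hE, show n + 1 + m = n + (m + 1) by ring]; ring
              _ ≤ _ := by
                refine mul_le_mul_of_nonneg_left (hsplit k) ?_
                positivity
        _ ≤ B * (Λ * H) * E * (G / K) * 2 := by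
            rw [← Finset.mul_sum]
            exact mul_le_mul_of_nonneg_left (sum_geometric_two_le n) (by positivity)
        _ = _ := by ring
    have hS2 : |∑ k ∈ Finset.range (n + 1), (n.choose k : ℝ) * iteratedDeriv k r x *
        iteratedDeriv (n - k) w x| ≤ B * (Λ * H) * E * (2 / K) := by
      refine (Finset.abs_sum_le_sum_abs _ _).trans ?_
      calc _ ≤ ∑ k ∈ Finset.range (n + 1), B * (Λ * H) * E * (1 / K) * (1 / 2 : ℝ) ^ k := by
            refine Finset.sum_le_sum fun k hk => ?_
            have hk' := Finset.mem_range.1 hk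
            have := leibniz_term_le (n := n) (k := k) (m := m) (by omega) hB.le hG.le hK0 hD 0
              (hr.2 k x hx) (ih (n - k) (by omega) x hx)
            refine this.trans ?_
            calc _ ≤ B * (Λ * H) * K ^ (n + 0) * (n + 1 + m).factorial * (G / K) ^ k := by
                  gcongr
                  omega
              _ = B * (Λ * H) * E * (1 / K) * (G / K) ^ k := by
                  rw [hE, pow_succ]; field_simp; simp
              _ ≤ _ := by
                refine mul_le_mul_of_nonneg_left (hsplit k) ?_
                positivity
        _ ≤ B * (Λ * H) * E * (1 / K) * 2 := by
            rw [← Finset.mul_sum]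
            exact mul_le_mul_of_nonneg_left (sum_geometric_two_le _) (by positivity)
        _ = _ := by ring
    have hS3 : |iteratedDeriv (n + 1) P x| ≤ H * E := by
      rw [hE, ← mul_assoc]; exact hPb (n + 1) x hx
    have hmain : |b x * iteratedDeriv (n + 1) w x| ≤ H * E + B * (Λ * H) * E * (2 * G / K)
        + B * (Λ * H) * E * (2 / K) := by
      have e : b x * iteratedDeriv (n + 1) w x = iteratedDeriv (n + 1) P x
        - (∑ k ∈ Finset.range n, (n.choose (k + 1) : ℝ) * iteratedDeriv (k + 1) b x *
          iteratedDeriv (n - (k + 1) + 1) w x) - ∑ k ∈ Finset.range (n + 1), (n.choose k : ℝ) *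
          iteratedDeriv k r x * iteratedDeriv (n - k) w x := by linarith
      rw [e]
      refine (abs_sub _ _).trans ?_
      linarith [abs_sub (iteratedDeriv (n + 1) P x) (∑ k ∈ Finset.range n,
        (n.choose (k + 1) : ℝ) * iteratedDeriv (k + 1) b x * iteratedDeriv (n - (k + 1) + 1) w x)]
    rw [abs_mul, abs_of_pos (hb0 x)] at hmain
    have hq : B * (2 * G / K) + B * (2 / K) ≤ β / 2 := by
      have : B * (2 * G / K) + B * (2 / K) = 2 * B * (G + 1) / K := by field_simp
      rw [this, div_le_div_iff₀ hK0 (by norm_num)]; linarith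
    have hHE : 0 ≤ H * E := by positivity
    have h4 : β * |iteratedDeriv (n + 1) w x| ≤ β * (Λ * (H * E)) := by
      calc β * |iteratedDeriv (n + 1) w x| ≤ b x * |iteratedDeriv (n + 1) w x| := by
            gcongr; exact hbβ x hx
        _ ≤ _ := hmain
        _ = H * E + Λ * (H * E) * (B * (2 * G / K) + B * (2 / K)) := by ring
        _ ≤ H * E + Λ * (H * E) * (β / 2) := by gcongr
        _ ≤ _ := by nlinarith
    have h5 := le_of_mul_le_mul_left h4 hβ
    rw [hE] at h5
    linarith

/-- The terms of the regular asymptotic expansion. -/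
theorem exists_outer_terms {B G β : ℝ} (hB : 0 < B) (hG : 0 < G) (hβ : 0 < β)
    {b r f : ℝ → ℝ} (hb : AnalyticBound B G b) (hr : AnalyticBound B G r)
    (hf : AnalyticBound B G f)
    (hb0 : ∀ x, 0 < b x) (hbβ : ∀ x ∈ Icc (0 : ℝ) 1, β ≤ b x) :
    ∃ (C A K : ℝ) (w : ℕ → ℝ → ℝ), 0 < C ∧ 1 ≤ A ∧ 1 ≤ K ∧ B ≤ C ∧
      (∀ j, ContDiff ℝ (⊤ : ℕ∞) (w j)) ∧ (∀ j, w j 0 = 0) ∧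
      (∀ x, b x * deriv (w 0) x + r x * w 0 x = f x) ∧
      (∀ j x, b x * deriv (w (j + 1)) x + r x * w (j + 1) x = deriv (deriv (w j)) x) ∧
      ∀ j n : ℕ, ∀ x ∈ Icc (0 : ℝ) 1,
        |iteratedDeriv n (w j) x| ≤ C * A ^ j * K ^ n * (n + j).factorial := by
  obtain ⟨Λ, K, hΛ, hK, hKG, hT⟩ := exists_transport_bound hB hG hβ hb hr hb0 hbβ
  choose! T hTs hT0 hTeq hTb using hT
  obtain ⟨hF, hF'⟩ := hf.1.integral_infty
  set F : ℝ → ℝ := fun x => ∫ t in (0 : ℝ)..x, f t with hFdef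
  let w : ℕ → ℝ → ℝ := fun j => Nat.rec (T F) (fun _ y => T (deriv y)) j
  have hw0 : w 0 = T F := rfl
  have hwS : ∀ j, w (j + 1) = T (deriv (w j)) := fun j => rfl
  have hws : ∀ j, ContDiff ℝ (⊤ : ℕ∞) (w j) := by
    intro j
    induction j with
    | zero => exact hTs F hF
    | succ j ih => exact hTs _ ih.deriv_infty
  have hK0 : 0 < K := by linarith
  have hFb : ∀ n : ℕ, ∀ x ∈ Icc (0 : ℝ) 1,
      |iteratedDeriv n F x| ≤ B * K ^ n * (n + 0).factorial := by
    intro n x hx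
    cases n with
    | zero =>
      simp only [iteratedDeriv_zero, pow_zero, mul_one, Nat.factorial_zero, Nat.cast_one, add_zero]
      have := intervalIntegral.norm_integral_le_of_norm_le_const (a := 0) (b := x) (f := f) (C := B)
        (fun t ht => by
          rw [uIoc_of_le hx.1] at ht
          simpa using hf.2 0 t ⟨ht.1.le, ht.2.trans hx.2⟩)
      rw [sub_zero, abs_of_nonneg hx.1] at this
      exact this.trans (by nlinarith [hx.2])
    | succ n =>
      rw [iteratedDeriv_succ', hF']
      refine (hf.2 n x hx).trans ?_
      calc B * n.factorial * G ^ n ≤ B * (n + 1 + 0).factorial * K ^ n := by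
            gcongr; omega
        _ ≤ B * (n + 1 + 0).factorial * K ^ (n + 1) := by gcongr; omega
        _ = _ := by ring
  refine ⟨Λ * B, Λ * K, K, w, by positivity, by nlinarith, hK, by nlinarith, hws, ?_, ?_, ?_, ?_⟩
  · intro j
    cases j with
    | zero => exact hT0 F hF
    | succ j => exact hT0 _ (hws j).deriv_infty
  · intro x; have := hTeq F hF x; rw [hF'] at this; exact this
  · intro j x; exact hTeq _ (hws j).deriv_infty x
  · intro j
    induction j with
    | zero =>
      intro n x hx
      rw [hw0]
      simpa using hTb F hF B 0 hB.le hFb n x hx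
    | succ j ih =>
      intro n x hx
      have := hTb _ (hws j).deriv_infty (B * (Λ * K) ^ (j + 1)) (j + 1) (by positivity)
        (fun k t ht => by
          rw [← iteratedDeriv_succ']
          refine (ih (k + 1) t ht).trans (le_of_eq ?_)
          rw [show k + 1 + j = k + (j + 1) by ring]
          ring) n x hx
      rw [hwS]
      refine this.trans (le_of_eq ?_)
      ring

theorem sum_outer_le {ε A : ℝ} (hε : 0 < ε) (hA : 1 ≤ A) {M : ℕ} (hM : (M : ℝ) ≤ 1 / (4 * A * ε)) :
    (∑ j ∈ Finset.range M, (2 * (ε * A)) ^ j * (j.factorial : ℝ) ≤ 2) ∧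
      (ε * A) ^ M * ((M + 1).factorial : ℝ) ≤ (1 / 2) ^ M := by
  have hM' : M * (ε * A) ≤ 1 / 4 := by
    rw [le_div_iff₀ (by positivity)] at hM; linarith
  have hEA : 0 < ε * A := by positivity
  have hfac : ∀ j ≤ M, (j.factorial : ℝ) ≤ (M : ℝ) ^ j := by
    intro j hj
    calc (j.factorial : ℝ) ≤ (j : ℝ) ^ j := by exact_mod_cast Nat.factorial_le_pow j
      _ ≤ _ := by gcongr
  constructor
  · refine le_trans (Finset.sum_le_sum fun j hj => ?_) (sum_geometric_two_le M)
    have hj' := (Finset.mem_range.1 hj).le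
    calc (2 * (ε * A)) ^ j * (j.factorial : ℝ) ≤ (2 * (ε * A)) ^ j * (M : ℝ) ^ j := by
          gcongr; exact hfac j hj'
      _ = (2 * (M * (ε * A))) ^ j := by rw [← mul_pow]; ring
      _ ≤ (1 / 2) ^ j := by
          gcongr; linarith
  · have h2 : ((M + 1 : ℕ) : ℝ) ≤ 2 ^ M := by exact_mod_cast Nat.lt_two_pow_self
    rw [Nat.factorial_succ, Nat.cast_mul]
    calc (ε * A) ^ M * (((M + 1 : ℕ) : ℝ) * M.factorial) ≤ (ε * A) ^ M * (2 ^ M * (M : ℝ) ^ M) := by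
          gcongr; exact hfac M le_rfl
      _ = (2 * (M * (ε * A))) ^ M := by rw [← mul_pow, ← mul_pow]; ring
      _ ≤ _ := by gcongr; linarith

/-- The truncated outer expansion: analytic uniformly in `ε`, with exponentially small residual. -/
theorem exists_outer_solution {B G β : ℝ} (hB : 0 < B) (hG : 0 < G) (hβ : 0 < β)
    {b r f : ℝ → ℝ} (hb : AnalyticBound B G b) (hr : AnalyticBound B G r)
    (hf : AnalyticBound B G f) (hbβ : ∀ x ∈ Icc (0 : ℝ) 1, β ≤ b x) :
    ∃ C K c : ℝ, 0 < C ∧ 1 ≤ K ∧ 0 < c ∧ ∀ ε : ℝ, 0 < ε → ε ≤ 1 → ∃ w : ℝ → ℝ, w 0 = 0 ∧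
      AnalyticBound C K w ∧
      ∀ x ∈ Icc (0 : ℝ) 1, |convDiffOp ε b r w x - f x| ≤ C * Real.exp (-c / ε) := by
  obtain ⟨b', hb's, hb'0, hbb'⟩ := exists_smooth_pos_extension hb.1 hβ hbβ
  obtain ⟨C, A, K, w, hC, hA, hK, hBC, hws, hw0, hweq0, hweqS, hwb⟩ :=
    exists_outer_terms hB hG hβ (hb.congr hb's hbb') hr hf hb'0
      (fun x hx => by rw [hbb' hx]; exact hbβ x hx)
  refine ⟨2 * C * K ^ 2, 2 * K, Real.log 2 / (4 * A), by positivity, by linarith,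
    div_pos (Real.log_pos one_lt_two) (by linarith), fun ε hε hε1 => ?_⟩
  have hA0 : 0 < A := by linarith
  have hK0 : 0 < K := by linarith
  set M := ⌊1 / (4 * A * ε)⌋₊ with hMdef
  have hM : (M : ℝ) ≤ 1 / (4 * A * ε) := Nat.floor_le (by positivity)
  have hM2 : 1 / (4 * A * ε) - 1 ≤ (M : ℝ) := by
    have := Nat.lt_floor_add_one (1 / (4 * A * ε)); linarith
  obtain ⟨hsum, hres⟩ := sum_outer_le hε hA hM
  have hsm : ∀ k : ℕ, ContDiff ℝ (⊤ : ℕ∞) (fun t => ∑ j ∈ Finset.range k, ε ^ j * w j t) := fun k =>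
    ContDiff.sum fun j _ => contDiff_const.mul (hws j)
  refine ⟨fun t => ∑ j ∈ Finset.range M, ε ^ j * w j t, by simp [hw0], ⟨hsm M, ?_⟩, ?_⟩
  · intro n x hx
    rw [iteratedDeriv_fun_sum (fun j _ => (contDiff_const.mul (hws j)).contDiffAt.of_le
      (by exact_mod_cast le_top))]
    refine (Finset.abs_sum_le_sum_abs _ _).trans ?_
    have hterm : ∀ j ∈ Finset.range M, |iteratedDeriv n (fun t => ε ^ j * w j t) x| ≤
        C * (2 * K) ^ n * n.factorial * ((2 * (ε * A)) ^ j * (j.factorial : ℝ)) := by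
      intro j _
      rw [iteratedDeriv_const_mul_field, abs_mul, abs_of_pos (pow_pos hε j)]
      have hfac : ((n + j).factorial : ℝ) ≤ 2 ^ (n + j) * (n.factorial * j.factorial) := by
        have h1 := Nat.add_choose_mul_factorial_mul_factorial n j
        have h2 := Nat.choose_le_two_pow (n + j) j
        rw [← h1, mul_assoc]
        exact_mod_cast Nat.mul_le_mul_right _ h2
      calc ε ^ j * |iteratedDeriv n (w j) x| ≤ ε ^ j * (C * A ^ j * K ^ n *
            (2 ^ (n + j) * (n.factorial * j.factorial))) := by
            gcongr
            refine (hwb j n x hx).trans ?_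
            gcongr
        _ = _ := by rw [mul_pow, mul_pow, mul_pow, pow_add]; ring
    refine (Finset.sum_le_sum hterm).trans ?_
    rw [← Finset.mul_sum]
    have hK2 : 1 ≤ K ^ 2 := one_le_pow₀ hK
    calc _ ≤ C * (2 * K) ^ n * n.factorial * 2 := by gcongr
      _ ≤ C * (2 * K) ^ n * n.factorial * 2 * K ^ 2 := le_mul_of_one_le_right (by positivity) hK2
      _ = _ := by ring
  · intro x hx
    have hop : ∀ j, convDiffOp ε b r (w j) x = -ε * deriv (deriv (w j)) x +
        (b' x * deriv (w j) x + r x * w j x) := by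
      intro j; rw [convDiffOp, hbb' hx]; ring
    have hkey : ∀ k : ℕ, |convDiffOp ε b r (fun t => ∑ j ∈ Finset.range k, ε ^ j * w j t) x - f x|
        ≤ C * K ^ 2 * ((ε * A) ^ k * ((k + 1).factorial : ℝ)) := by
      have htel : ∀ k : ℕ, convDiffOp ε b r (fun t => ∑ j ∈ Finset.range (k + 1), ε ^ j * w j t) x
          - f x = -(ε ^ (k + 1) * deriv (deriv (w k)) x) := by
        intro k
        induction k with
        | zero =>
          simp only [zero_add, Finset.range_one, Finset.sum_singleton, pow_zero, one_mul, pow_one]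
          rw [hop, hweq0]; ring
        | succ k ih =>
          have e : (fun t => ∑ j ∈ Finset.range (k + 1 + 1), ε ^ j * w j t) = fun t =>
              (fun t => ∑ j ∈ Finset.range (k + 1), ε ^ j * w j t) t
                + (fun t => ε ^ (k + 1) * w (k + 1) t) t := by
            ext t; rw [Finset.sum_range_succ]
          rw [e, convDiffOp_add (hsm (k + 1)) (contDiff_const.mul (hws (k + 1))),
            convDiffOp_const_mul _ (hws (k + 1)), hop, hweqS]
          rw [pow_succ ε (k + 1)]
          linear_combination ih
      intro k
      cases k with
      | zero =>
        have h0 := hf.2 0 x hx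
        simp only [iteratedDeriv_zero, Nat.factorial_zero, Nat.cast_one, pow_zero, mul_one] at h0
        have hK2 : 1 ≤ K ^ 2 := one_le_pow₀ hK
        simp [convDiffOp]
        nlinarith
      | succ k =>
        rw [htel, abs_neg, abs_mul, abs_of_pos (pow_pos hε _)]
        have h2 := hwb k 2 x hx
        rw [iteratedDeriv_succ, iteratedDeriv_one] at h2
        calc ε ^ (k + 1) * |deriv (deriv (w k)) x|
            ≤ ε ^ (k + 1) * (C * A ^ k * K ^ 2 * (2 + k).factorial) := by gcongr
          _ ≤ ε ^ (k + 1) * (C * A ^ (k + 1) * K ^ 2 * (2 + k).factorial) := by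
              gcongr
              · omega
          _ = _ := by rw [mul_pow, show 2 + k = k + 1 + 1 by ring]; ring
    refine (hkey M).trans ?_
    have h2 : (1 / 2 : ℝ) ^ M ≤ 2 * Real.exp (-(Real.log 2 / (4 * A)) / ε) := by
      have e1 : (1 / 2 : ℝ) ^ M = Real.exp (-(M * Real.log 2)) := by
        rw [Real.exp_neg, Real.exp_nat_mul, Real.exp_log two_pos, one_div, inv_pow]
      have e2 : 2 * Real.exp (-(Real.log 2 / (4 * A)) / ε)
          = Real.exp (Real.log 2 + -(Real.log 2 / (4 * A)) / ε) := by
        rw [Real.exp_add, Real.exp_log two_pos]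
      rw [e1, e2]
      refine Real.exp_le_exp.2 ?_
      have h3 : -(Real.log 2 / (4 * A)) / ε = -(Real.log 2 * (1 / (4 * A * ε))) := by field_simp
      rw [h3]
      nlinarith [Real.log_pos one_lt_two]
    calc _ ≤ C * K ^ 2 * (2 * Real.exp (-(Real.log 2 / (4 * A)) / ε)) := by
          exact mul_le_mul_of_nonneg_left (hres.trans h2) (by positivity)
      _ = _ := by ring

theorem analyticBound_linear (c : ℝ) : AnalyticBound |c| 1 (fun x => c * x) := by
  refine ⟨contDiff_const.mul contDiff_id, fun n x hx => ?_⟩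
  have hd : deriv (fun x : ℝ => c * x) = fun _ => c := by
    ext t; simp
  match n with
  | 0 =>
    simp only [iteratedDeriv_zero, Nat.factorial_zero, Nat.cast_one, pow_zero, mul_one, abs_mul,
      abs_of_nonneg hx.1]
    exact mul_le_of_le_one_right (abs_nonneg c) hx.2
  | 1 => simp
  | n + 2 =>
    rw [iteratedDeriv_succ', hd, iteratedDeriv_succ', deriv_const']
    simp only [iteratedDeriv_const, ite_self, abs_zero]
    positivity

theorem AnalyticBound.add {B₁ B₂ G : ℝ} {y z : ℝ → ℝ} (hB : 0 ≤ B₂) (hG : 1 ≤ G)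
    (hy : AnalyticBound B₁ G y) (hz : AnalyticBound B₂ 1 z) :
    AnalyticBound (B₁ + B₂) G (fun x => y x + z x) := by
  refine ⟨hy.1.add hz.1, fun n x hx => ?_⟩
  rw [iteratedDeriv_fun_add (hy.1.contDiffAt.of_le (by exact_mod_cast le_top))
    (hz.1.contDiffAt.of_le (by exact_mod_cast le_top))]
  refine (abs_add_le _ _).trans ?_
  have h1 := hy.2 n x hx
  have h2 := hz.2 n x hx
  have h3 : B₂ * n.factorial * 1 ^ n ≤ B₂ * n.factorial * G ^ n := by gcongr
  nlinarith

theorem AnalyticBound.mono {B B' G G' : ℝ} {y : ℝ → ℝ} (hy : AnalyticBound B G y) (hB0 : 0 ≤ B)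
    (hG0 : 0 ≤ G) (hB : B ≤ B') (hG : G ≤ G') : AnalyticBound B' G' y :=
  ⟨hy.1, fun n x hx => (hy.2 n x hx).trans (by
    have := hB0.trans hB
    gcongr)⟩

theorem AnalyticBound.abs_le {B G : ℝ} {y : ℝ → ℝ} (hy : AnalyticBound B G y) :
    ∀ x ∈ Icc (0 : ℝ) 1, |y x| ≤ B := fun x hx => by simpa using hy.2 0 x hx

theorem AnalyticBound.abs_deriv_le {B G : ℝ} {y : ℝ → ℝ} (hy : AnalyticBound B G y) :
    ∀ x ∈ Icc (0 : ℝ) 1, |deriv y x| ≤ B * G := fun x hx => by simpa using hy.2 1 x hx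

/-- Decomposition of the solution into an outer part and an exponential layer at `x = 1`. -/
theorem exists_layer_decomposition {B G β : ℝ} (hB : 0 < B) (hG : 0 < G) (hβ : 0 < β)
    {b r f : ℝ → ℝ} (hb : AnalyticBound B G b) (hr : AnalyticBound B G r)
    (hf : AnalyticBound B G f) (hbβ : ∀ x ∈ Icc (0 : ℝ) 1, β ≤ b x)
    (hr0 : ∀ x ∈ Icc (0 : ℝ) 1, 0 ≤ r x) :
    ∃ C K c : ℝ, 0 < C ∧ 1 ≤ K ∧ 0 < c ∧ ∀ ε : ℝ, 0 < ε → ε ≤ 1 → ∀ u : ℝ → ℝ,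
      ContDiff ℝ (⊤ : ℕ∞) u → u 0 = 0 → u 1 = 0 →
      (∀ x ∈ Icc (0 : ℝ) 1, convDiffOp ε b r u x = f x) → ∃ w : ℝ → ℝ, w 0 = 0 ∧
      AnalyticBound C K w ∧
      (∀ x ∈ Icc (0 : ℝ) 1, |convDiffOp ε b r w x - f x| ≤ C * Real.exp (-c / ε)) ∧
      ∀ x ∈ Icc (0 : ℝ) 1,
        |u x - w x| ≤ C * (Real.exp (-(β * (1 - x)) / ε) + Real.exp (-c / ε)) := by
  obtain ⟨C, K, c, hC, hK, hc, h⟩ := exists_outer_solution hB hG hβ hb hr hf hbβ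
  refine ⟨C * (1 + 1 / β), K, c, by positivity, hK, hc, fun ε hε hε1 u hu hu0 hu1 hLu => ?_⟩
  obtain ⟨w, hw0, hw, hLw⟩ := h ε hε hε1
  have hCC : C ≤ C * (1 + 1 / β) := le_mul_of_one_le_right hC.le (by
    have : 0 < 1 / β := by positivity
    linarith)
  refine ⟨w, hw0, hw.mono hC.le (by linarith) hCC le_rfl, fun x hx => (hLw x hx).trans (by gcongr),
    fun x hx => ?_⟩
  set R := C * Real.exp (-c / ε) with hR
  have hR0 : 0 < R := by positivity
  set E : ℝ → ℝ := fun t => Real.exp (β / ε * t - β / ε) with hE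
  have hEs : ContDiff ℝ (⊤ : ℕ∞) E := ((contDiff_const.mul contDiff_id).sub contDiff_const).exp
  have hE' : ∀ t, HasDerivAt E (β / ε * E t) t := fun t => by
    have h1 : HasDerivAt (fun t : ℝ => β / ε * t - β / ε) (β / ε) t := by
      simpa using ((hasDerivAt_id t).const_mul (β / ε)).sub_const (β / ε)
    exact h1.exp.congr_deriv (mul_comm _ _)
  have hd1 : deriv E = fun t => β / ε * E t := funext fun t => (hE' t).deriv
  have hd2 : ∀ t, deriv (deriv E) t = β / ε * (β / ε * E t) := fun t => by
    rw [hd1]; exact ((hE' t).const_mul _).deriv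
  have hLE : ∀ t ∈ Icc (0 : ℝ) 1, 0 ≤ convDiffOp ε b r E t := by
    intro t ht
    have hEt : 0 < E t := Real.exp_pos _
    have e : convDiffOp ε b r E t = β / ε * (b t - β) * E t + r t * E t := by
      rw [convDiffOp, hd2, hd1]; field_simp; ring
    rw [e]
    have h1 : 0 ≤ b t - β := sub_nonneg.2 (hbβ t ht)
    have h2 := hr0 t ht
    positivity
  have hlin : ContDiff ℝ (⊤ : ℕ∞) (fun t : ℝ => R / β * t) := contDiff_const.mul contDiff_id
  have hcmp := abs_le_of_abs_convDiffOp_le (y := fun t => u t - w t)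
    (ψ := fun t => C * E t + R / β * t) hε hβ
    (hu.sub hw.1) ((contDiff_const.mul hEs).add hlin) le_rfl hbβ hr0
    (by simp only [hu0, hw0, sub_zero, abs_zero, mul_zero, add_zero]
        exact mul_nonneg hC.le (Real.exp_pos _).le)
    (by
      have h1 := hw.abs_le 1 ⟨zero_le_one, le_rfl⟩
      have h2 : E 1 = 1 := by simp [hE]
      simp only [hu1, zero_sub, abs_neg, h2, mul_one]
      have : 0 < R / β := by positivity
      linarith)
    (fun t ht => by
      rw [convDiffOp_sub hu hw.1, convDiffOp_add (contDiff_const.mul hEs) hlin,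
        convDiffOp_const_mul _ hEs, convDiffOp_const_mul _ contDiff_fun_id, convDiffOp_id, hLu t ht,
        abs_sub_comm]
      refine (hLw t ht).trans ?_
      have h1 : R ≤ R / β * (b t + r t * t) := by
        rw [div_mul_eq_mul_div, le_div_iff₀ hβ]
        exact mul_le_mul_of_nonneg_left
          (by linarith [hbβ t ht, mul_nonneg (hr0 t ht) ht.1]) hR0.le
      have h2 := mul_nonneg hC.le (hLE t ht)
      linarith) x hx
  refine hcmp.trans ?_
  have e1 : E x = Real.exp (-(β * (1 - x)) / ε) := by
    simp only [hE]; congr 1; field_simp; ring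
  rw [← e1]
  have hEx : 0 < E x := Real.exp_pos _
  have h3 : R / β * x ≤ R / β := mul_le_of_le_one_right (by positivity) hx.2
  have h4 : R / β = C * (1 / β) * Real.exp (-c / ε) := by rw [hR]; ring
  have h5 : 0 < C * (1 / β) * E x := by positivity
  have h6 : 0 < C * Real.exp (-c / ε) := by positivity
  nlinarith

/-- Energy identity for functions vanishing at both end points. -/
theorem eps_integral_sq_deriv_le {ε a c γ Y F : ℝ} (hac : a ≤ c) (hγ : 0 < γ)
    {b r y : ℝ → ℝ} (hb : ContDiff ℝ (⊤ : ℕ∞) b)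
    (hy : ContDiff ℝ (⊤ : ℕ∞) y) (ha : y a = 0) (hc : y c = 0)
    (hbr : ∀ x ∈ Icc a c, γ ≤ r x - deriv b x / 2)
    (hY : ∀ x ∈ Icc a c, |y x| ≤ Y) (hF : ∀ x ∈ Icc a c, |convDiffOp ε b r y x| ≤ F) :
    ε * ∫ x in a..c, deriv y x ^ 2 ≤ (c - a) * (Y * F) := by
  have c0 := hy.continuous
  have c1 := hy.deriv_infty.continuous
  have c2 := hy.deriv_infty.deriv_infty.continuous
  have cb := hb.continuous
  have cb' := hb.deriv_infty.continuous
  have hΦ : ∀ x, HasDerivAt (fun x => ε * (deriv y x * y x) - b x * y x ^ 2 / 2)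
      (ε * (deriv (deriv y) x * y x + deriv y x * deriv y x)
        - (deriv b x * y x ^ 2 + b x * (2 * y x * deriv y x)) / 2) x := by
    intro x
    have h1 := hy.hasDerivAt_infty x
    have h2 := hy.deriv_infty.hasDerivAt_infty x
    have h3 := hb.hasDerivAt_infty x
    have h4 : HasDerivAt (fun x => y x ^ 2) (2 * y x * deriv y x) x := by
      simpa using h1.fun_pow 2
    exact ((h2.mul h1).const_mul ε).sub ((h3.mul h4).div_const 2)
  have hint := intervalIntegral.integral_eq_sub_of_hasDerivAt (a := a) (b := c)
    (fun x _ => hΦ x) (Continuous.intervalIntegrable (by fun_prop) _ _)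
  simp only [ha, hc] at hint
  have hle : ∫ x in a..c, ε * deriv y x ^ 2 ≤ ∫ x in a..c,
      ((ε * (deriv (deriv y) x * y x + deriv y x * deriv y x)
        - (deriv b x * y x ^ 2 + b x * (2 * y x * deriv y x)) / 2) + Y * F) := by
    refine intervalIntegral.integral_mono_on hac (Continuous.intervalIntegrable (by fun_prop) _ _)
      (Continuous.intervalIntegrable (by fun_prop) _ _) fun x hx => ?_
    have h1 := hbr x hx
    have h2 : |y x * convDiffOp ε b r y x| ≤ Y * F := by
      rw [abs_mul]
      exact mul_le_mul (hY x hx) (hF x hx) (abs_nonneg _) ((abs_nonneg _).trans (hY x hx))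
    have h3 := neg_le_of_abs_le h2
    rw [convDiffOp] at h3
    have h4 : 0 ≤ (r x - deriv b x / 2) * y x ^ 2 := mul_nonneg (by linarith) (sq_nonneg _)
    have h5 := le_of_abs_le h2
    rw [convDiffOp] at h5
    nlinarith
  rw [intervalIntegral.integral_add (Continuous.intervalIntegrable (by fun_prop) _ _)
    (by simp), hint, intervalIntegral.integral_const_mul] at hle
  simpa [mul_left_comm] using hle

/-- `q` is a polynomial of degree at most `p` interpolating the smooth function `s` at the end
points of `[a,c]`, with interpolation error `δ`; the residual of `s` is at most `δ`. -/
structure CellApprox (ε : ℝ) (b r f : ℝ → ℝ) (a c : ℝ) (p : ℕ) (δ : ℝ) (s : ℝ → ℝ)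
    (q : Polynomial ℝ) : Prop where
  smooth : ContDiff ℝ (⊤ : ℕ∞) s
  degree : q.natDegree ≤ p
  left : q.eval a = s a
  right : q.eval c = s c
  deriv_err : ∀ x ∈ Icc a c, |q.derivative.eval x - deriv s x| ≤ δ / (c - a)
  err : ∀ x ∈ Icc a c, |q.eval x - s x| ≤ δ
  residual : ∀ x ∈ Icc a c, |convDiffOp ε b r s x - f x| ≤ δ

set_option maxHeartbeats 1000000 in
/-- Exponentially accurate approximation of the solution on the boundary layer mesh. -/
theorem exists_boundary_layer_approx {B G β γ : ℝ} (hB : 0 < B) (hG : 0 < G) (hβ : 0 < β)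
    (hγ : 0 < γ) {b r f : ℝ → ℝ} (hb : AnalyticBound B G b) (hr : AnalyticBound B G r)
    (hf : AnalyticBound B G f) (hbβ : ∀ x ∈ Icc (0 : ℝ) 1, β ≤ b x)
    (hr0 : ∀ x ∈ Icc (0 : ℝ) 1, 0 ≤ r x)
    (hbr : ∀ x ∈ Icc (0 : ℝ) 1, γ ≤ r x - deriv b x / 2) :
    ∃ κ C c : ℝ, 0 < κ ∧ κ ≤ 1 ∧ 0 < C ∧ 0 < c ∧ ∀ ε : ℝ, 0 < ε → ε ≤ 1 → ∀ p : ℕ, 1 ≤ p →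
      ∀ u : ℝ → ℝ, ContDiff ℝ (⊤ : ℕ∞) u → u 0 = 0 → u 1 = 0 →
      (∀ x ∈ Icc (0 : ℝ) 1, convDiffOp ε b r u x = f x) →
      (1 / 2 ≤ κ * p * ε → ∃ q, CellApprox ε b r f 0 1 p (C * Real.exp (-c * p)) u q) ∧
      ∀ τ : ℝ, τ = 1 - κ * p * ε → κ * p * ε ≤ 1 / 2 → ∃ s q₁ q₂,
        CellApprox ε b r f 0 τ p (C * Real.exp (-c * p)) s q₁ ∧
        CellApprox ε b r f τ 1 p (C * Real.exp (-c * p)) u q₂ ∧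
        s 0 = 0 ∧ s τ = u τ ∧
        ε * |deriv s τ - deriv u τ| ≤ C * Real.exp (-c * p) ∧
        (∀ x ∈ Icc 0 τ, |u x - s x| ≤ C * Real.exp (-c * p)) ∧
        ε * ∫ x in (0 : ℝ)..τ, (deriv u x - deriv s x) ^ 2 ≤ (C * Real.exp (-c * p)) ^ 2 := by
  obtain ⟨Cu, Ku, hCu, hKu, hu_bd⟩ := abs_iteratedDeriv_le_of_convDiffOp_eq hB hG hβ hb hr hf hbβ hr0
  obtain ⟨Cd, Kd, cd, hCd, hKd, hcd, hdec⟩ := exists_layer_decomposition hB hG hβ hb hr hf hbβ hr0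
  obtain ⟨α, C₁, hα, hα4, hC₁, hinterp⟩ := exists_polynomial_interp (max Ku Kd)
    (le_max_of_le_left hKu)
  obtain ⟨κ, hκ⟩ : ∃ y : ℝ, y = α / 2 := ⟨_, rfl⟩
  have hκ0 : 0 < κ := by rw [hκ]; positivity
  obtain ⟨c, hc⟩ : ∃ y : ℝ, y = min (α / 2) (min (β * κ) (2 * cd * κ)) := ⟨_, rfl⟩
  have hc0 : 0 < c := by rw [hc]; positivity
  have hc1 : c ≤ α / 2 := hc ▸ min_le_left _ _
  have hc2 : c ≤ β * κ := hc ▸ (min_le_right _ _).trans (min_le_left _ _)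
  have hc3 : c ≤ 2 * cd * κ := hc ▸ (min_le_right _ _).trans (min_le_right _ _)
  obtain ⟨B₁, hB₁⟩ : ∃ y : ℝ, y = B * (1 + G) := ⟨_, rfl⟩
  have hB₁0 : 0 < B₁ := by rw [hB₁]; positivity
  have hBB₁ : B ≤ B₁ := by rw [hB₁]; nlinarith
  obtain ⟨Cs, hCs⟩ : ∃ y : ℝ, y = Cd + 4 * Cd := ⟨_, rfl⟩
  obtain ⟨F₀, hF₀⟩ : ∃ y : ℝ, y = Cd + 8 * B * Cd := ⟨_, rfl⟩
  obtain ⟨C, hC⟩ : ∃ y : ℝ, y = C₁ * Cu + C₁ * Cs + (4 * (2 * Cd) + 4 * B₁ * (2 * Cd) + F₀ + 4 * Cd) + 4 * Cd +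
      F₀ + 4 * Cd := ⟨_, rfl⟩
  have hCs0 : 0 < Cs := by rw [hCs]; positivity
  have hF₀0 : 0 < F₀ := by rw [hF₀]; positivity
  have p1 : 0 < C₁ * Cu := by positivity
  have p2 : 0 < C₁ * Cs := by positivity
  have p3 : 0 < B₁ * Cd := by positivity
  have hC0 : 0 < C := by rw [hC]; positivity
  refine ⟨κ, C, c, hκ0, by linarith, hC0, hc0, ?_⟩
  intro ε hε hε1 p hp u hu hu0 hu1 hLu
  have hp1 : (1 : ℝ) ≤ p := by exact_mod_cast hp
  obtain ⟨e, he⟩ : ∃ y : ℝ, y = Real.exp (-c * p) := ⟨_, rfl⟩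
  rw [← he]
  have he0 : 0 < e := he ▸ Real.exp_pos _
  have hκα : κ * p * ε = α * p * ε / 2 := by rw [hκ]; ring
  have hea : Real.exp (-(α / 2) * p) ≤ e := he ▸ Real.exp_le_exp.2 (by nlinarith)
  have hαp : 0 < α * p := by positivity
  have hures : ∀ x ∈ Icc (0 : ℝ) 1, |convDiffOp ε b r u x - f x| ≤ C * e := fun x hx => by
    rw [hLu x hx, sub_self, abs_zero]; positivity
  have hfloor : ((⌊α * p + 1⌋₊ : ℕ) : ℝ) ≤ α * p + 1 := Nat.floor_le (by linarith)
  have hucell : ∀ a h : ℝ, 0 < h → 0 ≤ a → a + h ≤ 1 → h ≤ (α * p + 1) * ε →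
      ∃ q, CellApprox ε b r f a (a + h) p (C * e) u q := by
    intro a h hh ha hah hhε
    have hsub : Icc a (a + h) ⊆ Icc 0 1 := Icc_subset_Icc ha hah
    obtain ⟨q, hq, hqa, hqc, hqe⟩ := hinterp p hp u hu a (a + h) (by linarith) Cu (by
      intro n hn x hx
      have := hu_bd ε hε hε1 u hu hu0 hu1 hLu ⌊α * p + 1⌋₊ ((α * p + 1) / h)
        (by rw [le_div_iff₀ hh]; nlinarith)
        (by rw [div_le_div_iff₀ hε hh]; linarith) n (Nat.le_floor hn) x (hsub hx)
      calc |iteratedDeriv n u x| * (a + h - a) ^ n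
          ≤ Cu * (Ku * ((α * p + 1) / h)) ^ n * (a + h - a) ^ n :=
            mul_le_mul_of_nonneg_right this (pow_nonneg (by linarith) _)
        _ = Cu * (Ku * (α * p + 1)) ^ n := by
            rw [add_sub_cancel_left, mul_assoc, ← mul_pow]; congr 2; field_simp
        _ ≤ _ := by gcongr; exact le_max_left _ _)
    have hle : C₁ * Cu * Real.exp (-(α / 2) * p) ≤ C * e := by
      apply mul_le_mul _ hea (Real.exp_pos _).le hC0.le
      linarith
    exact ⟨q, hu, hq, hqa, hqc, fun x hx => (hqe x hx).1.trans
      (div_le_div_of_nonneg_right hle (by linarith)), fun x hx => (hqe x hx).2.trans hle,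
      fun x hx => hures x (hsub hx)⟩
  refine ⟨fun h12 => ?_, fun τ hτ h12 => ?_⟩
  · have := hucell 0 1 one_pos le_rfl (by norm_num) (by linarith)
    simpa using this
  have hκp : 0 < κ * p * ε := by positivity
  have hτ1 : τ < 1 := by linarith
  have hτ2 : 1 / 2 ≤ τ := by linarith
  have hτ0 : 0 < τ := by linarith
  have hsub : Icc 0 τ ⊆ Icc (0 : ℝ) 1 := Icc_subset_Icc le_rfl hτ1.le
  obtain ⟨q₂, hq₂⟩ := hucell τ (κ * p * ε) hκp hτ0.le (by linarith) (by linarith)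
  rw [show τ + κ * p * ε = 1 by linarith] at hq₂
  obtain ⟨w, hw0, hw, hLw, hd⟩ := hdec ε hε hε1 u hu hu0 hu1 hLu
  have hce : Real.exp (-cd / ε) ≤ e := by
    rw [he]
    refine Real.exp_le_exp.2 ?_
    rw [div_le_iff₀ hε]
    have : c * p * ε ≤ 2 * cd * κ * p * ε := by gcongr
    nlinarith
  have hdτ : ∀ x ∈ Icc 0 τ, |u x - w x| ≤ 2 * Cd * e := by
    intro x hx
    refine (hd x (hsub hx)).trans ?_
    have : Real.exp (-(β * (1 - x)) / ε) ≤ e := by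
      rw [he]
      refine Real.exp_le_exp.2 ?_
      rw [div_le_iff₀ hε]
      have h1 : c * p * ε ≤ β * κ * p * ε := by gcongr
      have h2 : β * (κ * p * ε) ≤ β * (1 - x) := by gcongr; linarith [hx.2]
      nlinarith
    calc Cd * (Real.exp (-(β * (1 - x)) / ε) + Real.exp (-cd / ε)) ≤ Cd * (e + e) := by gcongr
      _ = _ := by ring
  have hLd : ∀ x ∈ Icc (0 : ℝ) 1, |convDiffOp ε b r (fun t => u t - w t) x| ≤ Cd * e := by
    intro x hx
    rw [convDiffOp_sub hu hw.1, hLu x hx, abs_sub_comm]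
    refine (hLw x hx).trans ?_
    gcongr
  obtain ⟨g₀, hg₀⟩ : ∃ y : ℝ, y = (u τ - w τ) / τ := ⟨_, rfl⟩
  have hg₀b : |g₀| ≤ 4 * Cd * e := by
    rw [hg₀, abs_div, abs_of_pos hτ0, div_le_iff₀ hτ0]
    have h1 := hdτ τ ⟨hτ0.le, le_rfl⟩
    have : 0 < Cd * e := by positivity
    nlinarith
  have he1 : e ≤ 1 := he ▸ Real.exp_le_one_iff.2 (by nlinarith)
  have hlin : ContDiff ℝ (⊤ : ℕ∞) (fun t : ℝ => g₀ * t) := contDiff_const.mul contDiff_id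
  set s : ℝ → ℝ := fun t => w t + g₀ * t with hs
  have hsb : AnalyticBound Cs Kd s := by
    refine (AnalyticBound.add (abs_nonneg _) hKd hw (analyticBound_linear g₀)).mono
      (by positivity) (by linarith) ?_ le_rfl
    nlinarith
  have hg : ∀ t, u t - s t = (u t - w t) - g₀ * t := fun t => by simp only [hs]; ring
  have hsd : ∀ t, deriv s t = deriv w t + g₀ := fun t => by
    have := (hw.1.hasDerivAt_infty t).add ((hasDerivAt_id t).const_mul g₀)
    rw [mul_one] at this
    exact this.deriv
  have hLlin : ∀ x ∈ Icc (0 : ℝ) 1, |convDiffOp ε b r (fun t => g₀ * t) x| ≤ 8 * B * Cd * e := by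
    intro x hx
    rw [convDiffOp_const_mul _ contDiff_fun_id, convDiffOp_id, abs_mul]
    have h1 : |b x + r x * x| ≤ 2 * B := by
      refine (abs_add_le _ _).trans ?_
      rw [abs_mul, abs_of_nonneg hx.1]
      nlinarith [hb.abs_le x hx, hr.abs_le x hx, hx.2, hx.1, abs_nonneg (r x)]
    calc |g₀| * |b x + r x * x| ≤ 4 * Cd * e * (2 * B) := by gcongr
      _ = _ := by ring
  have hsτ : s τ = u τ := by simp only [hs, hg₀]; field_simp; ring
  have hs0 : s 0 = 0 := by simp [hs, hw0]
  have husb : ∀ x ∈ Icc 0 τ, |u x - s x| ≤ 6 * Cd * e := by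
    intro x hx
    rw [hg]
    refine (abs_sub _ _).trans ?_
    rw [abs_mul, abs_of_nonneg hx.1]
    have := mul_le_of_le_one_right (abs_nonneg g₀) (hx.2.trans hτ1.le)
    linarith [hdτ x hx]
  have hLus : ∀ x ∈ Icc 0 τ, |convDiffOp ε b r (fun t => u t - s t) x| ≤ F₀ * e := by
    intro x hx
    have e1 : (fun t => u t - s t) = fun t => (fun t => u t - w t) t - (fun t => g₀ * t) t :=
      funext hg
    rw [e1, convDiffOp_sub (hu.sub hw.1) hlin]
    refine (abs_sub _ _).trans ?_
    have hF₀e : F₀ * e = Cd * e + 8 * B * Cd * e := by rw [hF₀]; ring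
    linarith [hLd x (hsub hx), hLlin x (hsub hx)]
  obtain ⟨q₁, hq, hqa, hqc, hqe⟩ := hinterp p hp s hsb.1 0 τ hτ0 Cs (by
    intro n hn x hx
    have hfac : (n.factorial : ℝ) ≤ (α * p + 1) ^ n := by
      calc (n.factorial : ℝ) ≤ (n : ℝ) ^ n := by exact_mod_cast Nat.factorial_le_pow n
        _ ≤ _ := by gcongr
    calc |iteratedDeriv n s x| * (τ - 0) ^ n ≤ |iteratedDeriv n s x| * 1 := by
          gcongr; exact pow_le_one₀ (by linarith) (by linarith)
      _ ≤ Cs * n.factorial * Kd ^ n := by rw [mul_one]; exact hsb.2 n x (hsub hx)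
      _ ≤ Cs * (α * p + 1) ^ n * Kd ^ n := by gcongr
      _ = Cs * (Kd * (α * p + 1)) ^ n := by rw [mul_pow]; ring
      _ ≤ _ := by gcongr; exact le_max_right _ _)
  have hle : C₁ * Cs * Real.exp (-(α / 2) * p) ≤ C * e := by
    apply mul_le_mul _ hea (Real.exp_pos _).le hC0.le
    linarith
  have hFC : F₀ * e ≤ C * e := by gcongr; linarith
  have h6C : 6 * Cd * e ≤ C * e := by gcongr; linarith
  refine ⟨s, q₁, q₂, ⟨hsb.1, hq, hqa, hqc, fun x hx => (hqe x hx).1.trans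
      (div_le_div_of_nonneg_right hle (by linarith)), fun x hx => (hqe x hx).2.trans hle,
      fun x hx => ?_⟩, hq₂, hs0, hsτ, ?_, fun x hx => (husb x hx).trans h6C, ?_⟩
  · have h1 := hLus x hx
    rw [convDiffOp_sub hu hsb.1, hLu x (hsub hx), abs_sub_comm] at h1
    exact h1.trans hFC
  · have hsub' : Icc (τ - ε / 2) τ ⊆ Icc 0 τ := Icc_subset_Icc (by linarith) le_rfl
    have h1 := eps_mul_abs_deriv_le (a := τ - ε / 2) (c := τ) (B := B₁) (Y := 2 * Cd * e)
      (F := Cd * e) hε (by linarith) (hu.sub hw.1) hb.1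
      (fun t ht => (hb.abs_le t (hsub (hsub' ht))).trans hBB₁)
      (fun t ht => (hb.abs_deriv_le t (hsub (hsub' ht))).trans (by nlinarith))
      (fun t ht => (hr.abs_le t (hsub (hsub' ht))).trans hBB₁)
      (fun t ht => hdτ t (hsub' ht)) (fun t ht => hLd t (hsub (hsub' ht))) τ
      ⟨by linarith, le_rfl⟩
    have e1 : deriv (fun t => u t - w t) τ = deriv u τ - deriv w τ :=
      ((hu.hasDerivAt_infty τ).sub (hw.1.hasDerivAt_infty τ)).deriv
    rw [e1, show τ - (τ - ε / 2) = ε / 2 by ring,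
      show 2 * ε * (2 * Cd * e) / (ε / 2) = 4 * (2 * Cd * e) by field_simp; ring] at h1
    have h2 : |deriv s τ - deriv u τ| ≤ |deriv u τ - deriv w τ| + |g₀| := by
      rw [hsd, show deriv w τ + g₀ - deriv u τ = g₀ - (deriv u τ - deriv w τ) by ring]
      linarith [abs_sub g₀ (deriv u τ - deriv w τ)]
    have p4 : 0 < B₁ * Cd * e := by positivity
    have p5 : 0 < Cd * e := by positivity
    have h3 : ε / 2 * (2 * B₁ * (2 * Cd * e) + Cd * e) ≤ 4 * B₁ * Cd * e + Cd * e := by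
      have := mul_le_of_le_one_left (show 0 ≤ 2 * B₁ * (2 * Cd * e) + Cd * e by positivity)
        (show ε / 2 ≤ 1 by linarith)
      linarith only [this]
    have h4 : ε * |g₀| ≤ 4 * Cd * e := (mul_le_of_le_one_left (abs_nonneg _) hε1).trans hg₀b
    have p6 : 0 < B * Cd * e := by positivity
    calc ε * |deriv s τ - deriv u τ| ≤ ε * (|deriv u τ - deriv w τ| + |g₀|) := by gcongr
      _ ≤ (4 * (2 * Cd) + 4 * B₁ * (2 * Cd) + F₀ + 4 * Cd) * e := by
          rw [hF₀]; linarith only [h1, h3, h4, p4, p5, p6]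
      _ ≤ C * e := by gcongr; linarith
  · have h1 := eps_integral_sq_deriv_le (ε := ε) (y := fun t => u t - s t) hτ0.le hγ hb.1
      (hu.sub hsb.1) (by simp [hu0, hs0]) (by simp [hsτ]) (fun x hx => hbr x (hsub hx))
      husb hLus
    have e1 : deriv (fun t => u t - s t) = fun t => deriv u t - deriv s t := funext fun t =>
      ((hu.hasDerivAt_infty t).sub (hsb.1.hasDerivAt_infty t)).deriv
    rw [e1] at h1
    refine h1.trans ?_
    have p5 : 0 < 6 * Cd * e := by positivity
    have p6 : 0 < F₀ * e := by positivity
    calc (τ - 0) * (6 * Cd * e * (F₀ * e)) ≤ 1 * (C * e * (C * e)) := by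
          gcongr; linarith
      _ = _ := by ring

/-- The contribution of a single cell to the energy norm of a discrete weak function. -/
def cellEnergy (ε : ℝ) (b : ℝ → ℝ) (a c : ℝ) (p : ℕ) (E D : Polynomial ℝ) (vl vr : ℝ) : ℝ :=
  ε * (∫ t in a..c, D.eval t ^ 2) + (∫ t in a..c, E.eval t ^ 2)
    + ε * (p : ℝ) ^ 2 / (c - a) * ((E.eval c - vr) ^ 2 + (E.eval a - vl) ^ 2)
    + b c * (E.eval c - vr) ^ 2

theorem cellEnergy_bounds {ε : ℝ} (hε : 0 < ε) {b : ℝ → ℝ} {a c : ℝ} (hac : a < c)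
    (hb : 0 ≤ b c) (p : ℕ) (E D : Polynomial ℝ) (vl vr : ℝ) :
    0 ≤ cellEnergy ε b a c p E D vl vr ∧
    (∫ t in a..c, E.eval t ^ 2) ≤ cellEnergy ε b a c p E D vl vr ∧
    ε * p ^ 2 / (c - a) * (E.eval c - vr) ^ 2 ≤ cellEnergy ε b a c p E D vl vr ∧
    ε * p ^ 2 / (c - a) * (E.eval a - vl) ^ 2 ≤ cellEnergy ε b a c p E D vl vr ∧
    b c * (E.eval c - vr) ^ 2 ≤ cellEnergy ε b a c p E D vl vr := by
  have hac' : 0 < c - a := sub_pos.2 hac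
  have h1 : 0 ≤ ε * (∫ t in a..c, D.eval t ^ 2) :=
    mul_nonneg hε.le (intervalIntegral.integral_nonneg hac.le fun t _ => sq_nonneg _)
  have h2 : 0 ≤ ∫ t in a..c, E.eval t ^ 2 :=
    intervalIntegral.integral_nonneg hac.le fun t _ => sq_nonneg _
  have h3 : 0 ≤ ε * p ^ 2 / (c - a) * (E.eval c - vr) ^ 2 := by positivity
  have h4 : 0 ≤ ε * p ^ 2 / (c - a) * (E.eval a - vl) ^ 2 := by positivity
  have h5 : 0 ≤ b c * (E.eval c - vr) ^ 2 := by positivity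
  unfold cellEnergy
  rw [mul_add]
  refine ⟨?_, ?_, ?_, ?_, ?_⟩ <;> linarith

/-- Testing a weak derivative with a polynomial, in terms of the classical derivative. -/
theorem IsWeakDerivOn.integral_eq {a c : ℝ} {n : ℕ} {E D : Polynomial ℝ} {vl vr : ℝ}
    (h : IsWeakDerivOn a c n (fun t => E.eval t) vl vr (fun t => D.eval t)) {q : Polynomial ℝ}
    (hq : q.natDegree ≤ n) :
    (∫ t in a..c, D.eval t * q.eval t) = (∫ t in a..c, E.derivative.eval t * q.eval t)
      - (E.eval c - vr) * q.eval c + (E.eval a - vl) * q.eval a := by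
  rw [h.2 q hq, Polynomial.integral_derivative_mul]
  ring

/-- The classical derivative is controlled by the weak derivative and the jumps. -/
theorem eps_integral_sq_derivative_le {ε : ℝ} (hε : 0 < ε) {b : ℝ → ℝ} {a c : ℝ} (hac : a < c)
    (hb : 0 ≤ b c) {p : ℕ} (hp : 1 ≤ p) {E D : Polynomial ℝ} (hE : E.natDegree ≤ p) {vl vr : ℝ}
    (h : IsWeakDerivOn a c (p - 1) (fun t => E.eval t) vl vr (fun t => D.eval t)) :
    ε * (∫ t in a..c, E.derivative.eval t ^ 2) ≤ 3 * cellEnergy ε b a c p E D vl vr := by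
  have hac' : 0 < c - a := sub_pos.2 hac
  have hdeg : E.derivative.natDegree ≤ p - 1 := (Polynomial.natDegree_derivative_le E).trans (by omega)
  have hid := h.integral_eq hdeg
  obtain ⟨tc, ta⟩ := Polynomial.sq_eval_endpoints_le hdeg hac
  rw [show ((p - 1 : ℕ) : ℝ) + 1 = p by exact_mod_cast Nat.sub_add_cancel hp] at tc ta
  have hcs := sq_integral_mul_le D.continuous E.derivative.continuous hac.le
  have hD : 0 ≤ ∫ t in a..c, D.eval t ^ 2 :=
    intervalIntegral.integral_nonneg hac.le fun t _ => sq_nonneg _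
  have hE2 : 0 ≤ ∫ t in a..c, E.eval t ^ 2 :=
    intervalIntegral.integral_nonneg hac.le fun t _ => sq_nonneg _
  have hI0 : 0 ≤ ∫ t in a..c, E.derivative.eval t ^ 2 :=
    intervalIntegral.integral_nonneg hac.le fun t _ => sq_nonneg _
  have hI : (∫ t in a..c, E.derivative.eval t * E.derivative.eval t)
      = ∫ t in a..c, E.derivative.eval t ^ 2 := by simp only [sq]
  rw [hI] at hid
  simp only [cellEnergy]
  generalize (∫ t in a..c, E.derivative.eval t ^ 2) = I at *
  generalize (∫ t in a..c, D.eval t * E.derivative.eval t) = X at *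
  generalize (∫ t in a..c, D.eval t ^ 2) = J at *
  generalize (∫ t in a..c, E.eval t ^ 2) = J' at *
  generalize E.eval c - vr = jr at *
  generalize E.eval a - vl = jl at *
  generalize E.derivative.eval c = dc at *
  generalize E.derivative.eval a = da at *
  have hk : ε * (p : ℝ) ^ 2 / (c - a) = ε * ((p : ℝ) ^ 2 / (c - a)) := by ring
  rw [hk]
  have hk0 : 0 ≤ (p : ℝ) ^ 2 / (c - a) := by positivity
  generalize (p : ℝ) ^ 2 / (c - a) = k at *
  have key : I ≤ 3 * (J + k * jr ^ 2 + k * jl ^ 2) := by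
    rcases hI0.eq_or_lt with h0 | h0
    · rw [← h0]; positivity
    have e1 : I = X + jr * dc - jl * da := by linarith
    have e2 : I ^ 2 ≤ 3 * (X ^ 2 + (jr * dc) ^ 2 + (jl * da) ^ 2) := by
      rw [e1]
      nlinarith [sq_nonneg (X - jr * dc), sq_nonneg (X + jl * da), sq_nonneg (jr * dc + jl * da)]
    have e3 : (jr * dc) ^ 2 ≤ jr ^ 2 * (k * I) := by
      rw [mul_pow]; gcongr
    have e4 : (jl * da) ^ 2 ≤ jl ^ 2 * (k * I) := by
      rw [mul_pow]; gcongr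
    refine le_of_mul_le_mul_right ?_ h0
    nlinarith
  have h5 : 0 ≤ b c * jr ^ 2 := by positivity
  calc ε * I ≤ ε * (3 * (J + k * jr ^ 2 + k * jl ^ 2)) := by gcongr
    _ ≤ _ := by linarith

/-- The weak convection term, tested with the error itself. -/
theorem convection_identity {b : ℝ → ℝ} (hb : ContDiff ℝ (⊤ : ℕ∞) b) (E : Polynomial ℝ)
    (a c vl vr : ℝ) :
    -(∫ t in a..c, E.eval t * deriv (fun s => b s * E.eval s) t)
      + vr * (b c * E.eval c) - vl * (b a * E.eval a)
      = -(∫ t in a..c, deriv b t * E.eval t ^ 2) / 2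
        + b c * (vr ^ 2 - (E.eval c - vr) ^ 2) / 2
        - b a * (vl ^ 2 - (E.eval a - vl) ^ 2) / 2 := by
  have hb' := hb.deriv_infty.continuous
  have hbc := hb.continuous
  have hd : ∀ t, HasDerivAt (fun s => b s * E.eval s)
      (deriv b t * E.eval t + b t * E.derivative.eval t) t := fun t =>
    (hb.hasDerivAt_infty t).mul (E.hasDerivAt t)
  have e1 : (∫ t in a..c, (deriv b t * E.eval t + b t * E.derivative.eval t) * E.eval t
      + b t * E.eval t * E.derivative.eval t)
      = b c * E.eval c * E.eval c - b a * E.eval a * E.eval a :=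
    intervalIntegral.integral_deriv_mul_eq_sub (fun t _ => hd t) (fun t _ => E.hasDerivAt t)
      (Continuous.intervalIntegrable (by fun_prop) _ _)
      (Continuous.intervalIntegrable (by fun_prop) _ _)
  have e2 : (∫ t in a..c, E.eval t * deriv (fun s => b s * E.eval s) t) * 2
      = (∫ t in a..c, (deriv b t * E.eval t + b t * E.derivative.eval t) * E.eval t
      + b t * E.eval t * E.derivative.eval t) + ∫ t in a..c, deriv b t * E.eval t ^ 2 := by
    rw [← intervalIntegral.integral_add (Continuous.intervalIntegrable (by fun_prop) _ _)
      (Continuous.intervalIntegrable (by fun_prop) _ _), ← intervalIntegral.integral_mul_const]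
    refine intervalIntegral.integral_congr fun t _ => ?_
    simp only [(hd t).deriv]
    ring
  rw [e1] at e2
  linarith

/-- Coercivity on a cell, with the telescoping boundary terms. -/
theorem cell_coercive {ε γ : ℝ} (hε : 0 < ε) {b r : ℝ → ℝ} (hb : ContDiff ℝ (⊤ : ℕ∞) b)
    (hr : Continuous r) {a c : ℝ} (hac : a < c) (hba : 0 ≤ b a) (hbc : 0 ≤ b c)
    (hbr : ∀ x ∈ Icc a c, γ ≤ r x - deriv b x / 2) (p : ℕ) (E D : Polynomial ℝ) (vl vr : ℝ) :
    min γ (1 / 2) * cellEnergy ε b a c p E D vl vr + (b c * vr ^ 2 - b a * vl ^ 2) / 2 ≤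
      ε * (∫ t in a..c, D.eval t ^ 2)
      + (-(∫ t in a..c, E.eval t * deriv (fun s => b s * E.eval s) t)
        + vr * (b c * E.eval c) - vl * (b a * E.eval a))
      + (∫ t in a..c, r t * E.eval t * E.eval t)
      + ε * (p : ℝ) ^ 2 / (c - a) * ((E.eval c - vr) ^ 2 + (E.eval a - vl) ^ 2)
      + b c * (E.eval c - vr) ^ 2 := by
  rw [convection_identity hb]
  have hac' : 0 < c - a := sub_pos.2 hac
  have hb' := hb.deriv_infty.continuous
  have hD : 0 ≤ ε * ∫ t in a..c, D.eval t ^ 2 :=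
    mul_nonneg hε.le (intervalIntegral.integral_nonneg hac.le fun t _ => sq_nonneg _)
  have hE : 0 ≤ ∫ t in a..c, E.eval t ^ 2 :=
    intervalIntegral.integral_nonneg hac.le fun t _ => sq_nonneg _
  have hJ : 0 ≤ ε * (p : ℝ) ^ 2 / (c - a) * ((E.eval c - vr) ^ 2 + (E.eval a - vl) ^ 2) := by
    positivity
  have hj : 0 ≤ b c * (E.eval c - vr) ^ 2 := by positivity
  have hja : 0 ≤ b a * (E.eval a - vl) ^ 2 := by positivity
  have hγ : γ * (∫ t in a..c, E.eval t ^ 2) ≤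
      (∫ t in a..c, r t * E.eval t * E.eval t) - (∫ t in a..c, deriv b t * E.eval t ^ 2) / 2 := by
    rw [← intervalIntegral.integral_div, ← intervalIntegral.integral_sub
      (Continuous.intervalIntegrable (by fun_prop) _ _)
      (Continuous.intervalIntegrable (by fun_prop) _ _), ← intervalIntegral.integral_const_mul]
    refine intervalIntegral.integral_mono_on hac.le
      (Continuous.intervalIntegrable (by fun_prop) _ _)
      (Continuous.intervalIntegrable (by fun_prop) _ _) fun t ht => ?_
    have := mul_le_mul_of_nonneg_right (hbr t ht) (sq_nonneg (E.eval t))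
    linarith
  have m1 : min γ (1 / 2) ≤ γ := min_le_left _ _
  have m2 : min γ (1 / 2) ≤ 1 / 2 := min_le_right _ _
  simp only [cellEnergy]
  generalize min γ (1 / 2) = μ at *
  generalize (ε * ∫ t in a..c, D.eval t ^ 2) = x₁ at *
  generalize (∫ t in a..c, E.eval t ^ 2) = x₂ at *
  generalize ε * (p : ℝ) ^ 2 / (c - a) * ((E.eval c - vr) ^ 2 + (E.eval a - vl) ^ 2) = x₃ at *
  have k1 := mul_le_mul_of_nonneg_right m2 hD
  have k2 := mul_le_mul_of_nonneg_right m1 hE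
  have k3 := mul_le_mul_of_nonneg_right m2 hJ
  have k4 := mul_le_mul_of_nonneg_right m2 hj
  linarith

/-- The residual of the interpolant on a cell, tested with a discrete weak function. -/
theorem cell_residual_identity {ε : ℝ} {b r f s : ℝ → ℝ} (hb : Continuous b)
    (hr : Continuous r) (hf : Continuous f) (hs : ContDiff ℝ (⊤ : ℕ∞) s) {a c : ℝ} {n : ℕ}
    {q E D : Polynomial ℝ} {vl vr : ℝ} (hq : q.derivative.natDegree ≤ n)
    (h : IsWeakDerivOn a c n (fun t => E.eval t) vl vr (fun t => D.eval t)) :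
    ε * (∫ t in a..c, q.derivative.eval t * D.eval t)
      + (∫ t in a..c, b t * q.derivative.eval t * E.eval t)
      + (∫ t in a..c, r t * q.eval t * E.eval t) - (∫ t in a..c, f t * E.eval t)
      = ε * (deriv s c * vr - deriv s a * vl)
        + ε * (∫ t in a..c, (q.derivative.eval t - deriv s t) * E.derivative.eval t)
        - ε * ((E.eval c - vr) * (q.derivative.eval c - deriv s c))
        + ε * ((E.eval a - vl) * (q.derivative.eval a - deriv s a))
        + (∫ t in a..c, b t * (q.derivative.eval t - deriv s t) * E.eval t)
        + (∫ t in a..c, r t * (q.eval t - s t) * E.eval t)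
        + (∫ t in a..c, (convDiffOp ε b r s t - f t) * E.eval t) := by
  have hs0 := hs.continuous
  have hs1 := hs.deriv_infty.continuous
  have hs2 := hs.deriv_infty.deriv_infty.continuous
  have e1 := h.integral_eq hq
  have e2 : (∫ t in a..c, q.derivative.eval t * D.eval t)
      = ∫ t in a..c, D.eval t * q.derivative.eval t := by simp only [mul_comm]
  have e3 : (∫ t in a..c, deriv (deriv s) t * E.eval t + deriv s t * E.derivative.eval t)
      = deriv s c * E.eval c - deriv s a * E.eval a :=
    intervalIntegral.integral_deriv_mul_eq_sub (fun t _ => hs.deriv_infty.hasDerivAt_infty t)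
      (fun t _ => E.hasDerivAt t) (Continuous.intervalIntegrable (by fun_prop) _ _)
      (Continuous.intervalIntegrable (by fun_prop) _ _)
  have e4 : ε * (∫ t in a..c, E.derivative.eval t * q.derivative.eval t)
      + (∫ t in a..c, b t * q.derivative.eval t * E.eval t)
      + (∫ t in a..c, r t * q.eval t * E.eval t)
      = ε * (∫ t in a..c, deriv (deriv s) t * E.eval t + deriv s t * E.derivative.eval t)
        + ε * (∫ t in a..c, (q.derivative.eval t - deriv s t) * E.derivative.eval t)
        + (∫ t in a..c, b t * (q.derivative.eval t - deriv s t) * E.eval t)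
        + (∫ t in a..c, r t * (q.eval t - s t) * E.eval t)
        + (∫ t in a..c, (convDiffOp ε b r s t - f t) * E.eval t)
        + (∫ t in a..c, f t * E.eval t) := by
    have i : ∀ {g : ℝ → ℝ}, Continuous g → IntervalIntegrable g volume a c :=
      fun hg => hg.intervalIntegrable _ _
    unfold convDiffOp
    simp only [← intervalIntegral.integral_const_mul]
    rw [← intervalIntegral.integral_add (i (by fun_prop)) (i (by fun_prop)),
      ← intervalIntegral.integral_add (i (by fun_prop)) (i (by fun_prop)),
      ← intervalIntegral.integral_add (i (by fun_prop)) (i (by fun_prop)),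
      ← intervalIntegral.integral_add (i (by fun_prop)) (i (by fun_prop)),
      ← intervalIntegral.integral_add (i (by fun_prop)) (i (by fun_prop)),
      ← intervalIntegral.integral_add (i (by fun_prop)) (i (by fun_prop)),
      ← intervalIntegral.integral_add (i (by fun_prop)) (i (by fun_prop))]
    refine intervalIntegral.integral_congr fun t _ => ?_
    ring
  rw [e2, e1]
  rw [e3] at e4
  linear_combination e4

/-- A bounded function against the derivative of a discrete function. -/
theorem eps_abs_integral_mul_le {ε M δ I Z h : ℝ} (hε : 0 < ε) (hM : 1 ≤ M) (hh : 0 < h)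
    (hδ : 0 ≤ δ) (hεM : ε ≤ M * h) (hI : 0 ≤ I) (hZ : 0 ≤ Z) (hIZ : ε * I ≤ 3 * Z ^ 2) :
    ε * (δ / h * √h * √I) ≤ 2 * M * δ * Z := by
  have hM0 : 0 < M := by linarith
  refine abs_le_of_sq_le_sq' ?_ (by positivity) |>.2
  rw [mul_pow, mul_pow, mul_pow, Real.sq_sqrt hh.le, Real.sq_sqrt hI]
  calc ε ^ 2 * ((δ / h) ^ 2 * h * I) = δ ^ 2 * (ε / h) * (ε * I) := by field_simp
    _ ≤ δ ^ 2 * M * (3 * Z ^ 2) := by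
        gcongr
        rwa [div_le_iff₀ hh]
    _ ≤ δ ^ 2 * (M * M) * (4 * Z ^ 2) := by
        gcongr
        · exact le_mul_of_one_le_left hM0.le hM
        · norm_num
    _ = _ := by ring

theorem eps_abs_jump_le {ε M δ j Z h y : ℝ} {p : ℕ} (hε : 0 < ε) (hM : 1 ≤ M) (hh : 0 < h)
    (hp : 1 ≤ p) (hδ : 0 ≤ δ) (hεM : ε ≤ M * h) (hZ : 0 ≤ Z)
    (hj : ε * (p : ℝ) ^ 2 / h * j ^ 2 ≤ Z ^ 2) (hy : |y| ≤ δ / h) :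
    |ε * (j * y)| ≤ M * δ * Z := by
  have hM0 : 0 < M := by linarith
  have hp1 : (1 : ℝ) ≤ p := by exact_mod_cast hp
  have hj' : ε / h * j ^ 2 ≤ Z ^ 2 := by
    refine le_trans ?_ hj
    gcongr
    exact le_mul_of_one_le_right hε.le (one_le_pow₀ hp1)
  refine abs_le_of_sq_le_sq ?_ (by positivity)
  have hy2 : y ^ 2 ≤ (δ / h) ^ 2 := by
    rw [← sq_abs y]; gcongr
  calc (ε * (j * y)) ^ 2 = ε ^ 2 * j ^ 2 * y ^ 2 := by ring
    _ ≤ ε ^ 2 * j ^ 2 * (δ / h) ^ 2 := by gcongr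
    _ = δ ^ 2 * (ε / h) * (ε / h * j ^ 2) := by field_simp
    _ ≤ δ ^ 2 * M * Z ^ 2 := by
        gcongr
        rwa [div_le_iff₀ hh]
    _ ≤ δ ^ 2 * (M * M) * Z ^ 2 := by
        gcongr
        exact le_mul_of_one_le_left hM0.le hM
    _ = _ := by ring

/-- The convective part of the consistency error on a cell. -/
theorem abs_integral_convection_le {ε B B' δ : ℝ} (hε : 0 < ε) (hB : 0 ≤ B) (hB' : 0 ≤ B')
    (hδ : 0 ≤ δ) {b s : ℝ → ℝ} (hb : ContDiff ℝ (⊤ : ℕ∞) b) (hs : ContDiff ℝ (⊤ : ℕ∞) s)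
    {a c : ℝ} (hac : a < c) (hac1 : c - a ≤ 1)
    (hbB : ∀ x ∈ Icc a c, |b x| ≤ B) (hbB' : ∀ x ∈ Icc a c, |deriv b x| ≤ B') {p : ℕ}
    (hp : 1 ≤ p) (hcase : 1 / 2 ≤ c - a ∨ c - a ≤ p * ε) {q E : Polynomial ℝ}
    (hqa : q.eval a = s a) (hqc : q.eval c = s c)
    (hqd : ∀ x ∈ Icc a c, |q.derivative.eval x - deriv s x| ≤ δ / (c - a))
    (hqe : ∀ x ∈ Icc a c, |q.eval x - s x| ≤ δ) {Z : ℝ} (hZ : 0 ≤ Z)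
    (hEZ : √(∫ t in a..c, E.eval t ^ 2) ≤ Z)
    (hinv : ε * (∫ t in a..c, E.derivative.eval t ^ 2) ≤ 3 * Z ^ 2) :
    |∫ t in a..c, b t * (q.derivative.eval t - deriv s t) * E.eval t|
      ≤ (2 * B + B') * p * δ * Z := by
  have hs0 := hs.continuous
  have hs1 := hs.deriv_infty.continuous
  have hb0 := hb.continuous
  have hb1 := hb.deriv_infty.continuous
  have hh : 0 < c - a := sub_pos.2 hac
  have hp1 : (1 : ℝ) ≤ p := by exact_mod_cast hp
  have hsq : √(c - a) ≤ 1 := Real.sqrt_le_one.2 hac1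
  rcases hcase with hc | hc
  · refine (abs_integral_mul_le_of_bound (M := B * (δ / (c - a))) (by fun_prop) E.continuous
      hac.le (by positivity) fun t ht => ?_).trans ?_
    · rw [abs_mul]
      exact mul_le_mul (hbB t ht) (hqd t ht) (abs_nonneg _) hB
    have h1 : δ / (c - a) * √(c - a) ≤ 2 * δ := by
      rw [div_mul_eq_mul_div, div_le_iff₀ hh]
      nlinarith
    calc B * (δ / (c - a)) * √(c - a) * √(∫ t in a..c, E.eval t ^ 2)
        = B * (δ / (c - a) * √(c - a)) * √(∫ t in a..c, E.eval t ^ 2) := by ring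
      _ ≤ B * (2 * δ) * Z := by gcongr
      _ = (2 * B) * 1 * δ * Z := by ring
      _ ≤ (2 * B + B') * p * δ * Z := by gcongr; linarith
  · have hd : ∀ t, HasDerivAt (fun s => b s * E.eval s)
        (deriv b t * E.eval t + b t * E.derivative.eval t) t := fun t =>
      (hb.hasDerivAt_infty t).mul (E.hasDerivAt t)
    have e1 : (∫ t in a..c, (q.derivative.eval t - deriv s t) * (b t * E.eval t)
        + (q.eval t - s t) * (deriv b t * E.eval t + b t * E.derivative.eval t))
        = (q.eval c - s c) * (b c * E.eval c) - (q.eval a - s a) * (b a * E.eval a) :=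
      intervalIntegral.integral_deriv_mul_eq_sub
        (fun t _ => (q.hasDerivAt t).sub (hs.hasDerivAt_infty t)) (fun t _ => hd t)
        (Continuous.intervalIntegrable (by fun_prop) _ _)
        (Continuous.intervalIntegrable (by fun_prop) _ _)
    rw [hqa, hqc, sub_self, sub_self, zero_mul, zero_mul, sub_self] at e1
    have e2 : (∫ t in a..c, b t * (q.derivative.eval t - deriv s t) * E.eval t)
        = (∫ t in a..c, (q.derivative.eval t - deriv s t) * (b t * E.eval t)
        + (q.eval t - s t) * (deriv b t * E.eval t + b t * E.derivative.eval t))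
        - (∫ t in a..c, (q.eval t - s t) * deriv b t * E.eval t)
        - ∫ t in a..c, (q.eval t - s t) * b t * E.derivative.eval t := by
      rw [← intervalIntegral.integral_sub (Continuous.intervalIntegrable (by fun_prop) _ _)
        (Continuous.intervalIntegrable (by fun_prop) _ _),
        ← intervalIntegral.integral_sub (Continuous.intervalIntegrable (by fun_prop) _ _)
        (Continuous.intervalIntegrable (by fun_prop) _ _)]
      refine intervalIntegral.integral_congr fun t _ => ?_
      ring
    have b1 : |∫ t in a..c, (q.eval t - s t) * deriv b t * E.eval t| ≤
        δ * B' * √(c - a) * √(∫ t in a..c, E.eval t ^ 2) :=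
      abs_integral_mul_le_of_bound (by fun_prop) E.continuous hac.le (by positivity) fun t ht => by
        rw [abs_mul]; exact mul_le_mul (hqe t ht) (hbB' t ht) (abs_nonneg _) hδ
    have b2 : |∫ t in a..c, (q.eval t - s t) * b t * E.derivative.eval t| ≤
        δ * B * √(c - a) * √(∫ t in a..c, E.derivative.eval t ^ 2) :=
      abs_integral_mul_le_of_bound (by fun_prop) E.derivative.continuous hac.le (by positivity)
        fun t ht => by
          rw [abs_mul]; exact mul_le_mul (hqe t ht) (hbB t ht) (abs_nonneg _) hδ
    have hI0 : 0 ≤ ∫ t in a..c, E.derivative.eval t ^ 2 :=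
      intervalIntegral.integral_nonneg hac.le fun t _ => sq_nonneg _
    have b3 : √(c - a) * √(∫ t in a..c, E.derivative.eval t ^ 2) ≤ 2 * p * Z := by
      refine abs_le_of_sq_le_sq' ?_ (by positivity) |>.2
      rw [mul_pow, Real.sq_sqrt hh.le, Real.sq_sqrt hI0]
      generalize (∫ t in a..c, E.derivative.eval t ^ 2) = I at *
      calc (c - a) * I ≤ p * ε * I := by gcongr
        _ = p * (ε * I) := by ring
        _ ≤ p * (3 * Z ^ 2) := by gcongr
        _ ≤ (p * p) * (4 * Z ^ 2) := by
            gcongr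
            · exact le_mul_of_one_le_left (by linarith) hp1
            · norm_num
        _ = _ := by ring
    rw [e2, e1, zero_sub]
    have b4 : δ * B' * √(c - a) * √(∫ t in a..c, E.eval t ^ 2) ≤ δ * B' * p * Z := by
      gcongr; linarith
    have b5 : δ * B * √(c - a) * √(∫ t in a..c, E.derivative.eval t ^ 2) ≤ δ * B * (2 * p * Z) := by
      rw [mul_assoc]; gcongr
    refine (abs_sub _ _).trans ?_
    rw [abs_neg]
    linarith

/-- Consistency error on a cell. -/
theorem cell_consistency {ε M B B' δ : ℝ} (hε : 0 < ε) (hM : 1 ≤ M) (hB : 0 ≤ B) (hB' : 0 ≤ B')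
    (hδ : 0 ≤ δ) {b r f s : ℝ → ℝ} (hb : ContDiff ℝ (⊤ : ℕ∞) b)
    (hr : Continuous r) (hf : Continuous f) {a c : ℝ} (hac : a < c) (hac1 : c - a ≤ 1)
    (hbB : ∀ x ∈ Icc a c, |b x| ≤ B) (hbB' : ∀ x ∈ Icc a c, |deriv b x| ≤ B')
    (hrB : ∀ x ∈ Icc a c, |r x| ≤ B) (hbc : 0 ≤ b c) (hεM : ε ≤ M * (c - a)) {p : ℕ} (hp : 1 ≤ p)
    (hcase : 1 / 2 ≤ c - a ∨ c - a ≤ p * ε) {q E D : Polynomial ℝ} {vl vr : ℝ}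
    (hq : CellApprox ε b r f a c p δ s q) (hE : E.natDegree ≤ p)
    (h : IsWeakDerivOn a c (p - 1) (fun t => E.eval t) vl vr (fun t => D.eval t)) :
    ε * (∫ t in a..c, q.derivative.eval t * D.eval t)
      + (∫ t in a..c, b t * q.derivative.eval t * E.eval t)
      + (∫ t in a..c, r t * q.eval t * E.eval t) - (∫ t in a..c, f t * E.eval t)
      ≤ ε * (deriv s c * vr - deriv s a * vl)
        + (4 * M + 3 * B + B' + 1) * p * δ * √(cellEnergy ε b a c p E D vl vr) := by
  have hdeg : q.derivative.natDegree ≤ p - 1 :=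
    (Polynomial.natDegree_derivative_le q).trans (Nat.sub_le_sub_right hq.degree 1)
  rw [cell_residual_identity hb.continuous hr hf hq.smooth hdeg h]
  have hs0 := hq.smooth.continuous
  have hs1 := hq.smooth.deriv_infty.continuous
  have hs2 := hq.smooth.deriv_infty.deriv_infty.continuous
  have hb0 := hb.continuous
  have hb1 := hb.deriv_infty.continuous
  have hh : 0 < c - a := sub_pos.2 hac
  have hp1 : (1 : ℝ) ≤ p := by exact_mod_cast hp
  have hinv := eps_integral_sq_derivative_le hε hac hbc hp hE h
  obtain ⟨hQ0, hQE, hQr, hQl, -⟩ := cellEnergy_bounds hε hac hbc p E D vl vr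
  rw [← Real.sq_sqrt hQ0] at hinv hQE hQr hQl
  have hZ : 0 ≤ √(cellEnergy ε b a c p E D vl vr) := Real.sqrt_nonneg _
  generalize √(cellEnergy ε b a c p E D vl vr) = Z at *
  have hEZ : √(∫ t in a..c, E.eval t ^ 2) ≤ Z :=
    (Real.sqrt_le_sqrt hQE).trans_eq (Real.sqrt_sq hZ)
  have hsq : √(c - a) ≤ 1 := Real.sqrt_le_one.2 hac1
  have hI0 : 0 ≤ ∫ t in a..c, E.derivative.eval t ^ 2 :=
    intervalIntegral.integral_nonneg hac.le fun t _ => sq_nonneg _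
  have t1 : ε * (∫ t in a..c, (q.derivative.eval t - deriv s t) * E.derivative.eval t)
      ≤ 2 * M * δ * Z := by
    refine le_trans ?_ (eps_abs_integral_mul_le hε hM hh hδ hεM hI0 hZ hinv)
    gcongr
    exact (le_abs_self _).trans (abs_integral_mul_le_of_bound (by fun_prop)
      E.derivative.continuous hac.le (by positivity) hq.deriv_err)
  have t2 := abs_le.1 (eps_abs_jump_le hε hM hh hp hδ hεM hZ hQr
    (hq.deriv_err c ⟨hac.le, le_rfl⟩))
  have t3 := abs_le.1 (eps_abs_jump_le hε hM hh hp hδ hεM hZ hQl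
    (hq.deriv_err a ⟨le_rfl, hac.le⟩))
  have t4 := (abs_le.1 (abs_integral_convection_le hε hB hB' hδ hb hq.smooth hac hac1 hbB hbB' hp
    hcase hq.left hq.right hq.deriv_err hq.err hZ hEZ hinv)).2
  have t5 : (∫ t in a..c, r t * (q.eval t - s t) * E.eval t) ≤ B * δ * Z := by
    refine (le_abs_self _).trans ((abs_integral_mul_le_of_bound (M := B * δ) (by fun_prop)
      E.continuous hac.le (by positivity) fun t ht => ?_).trans ?_)
    · rw [abs_mul]; exact mul_le_mul (hrB t ht) (hq.err t ht) (abs_nonneg _) hB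
    · calc B * δ * √(c - a) * √(∫ t in a..c, E.eval t ^ 2) ≤ B * δ * 1 * Z := by gcongr
        _ = _ := by ring
  have t6 : (∫ t in a..c, (convDiffOp ε b r s t - f t) * E.eval t) ≤ δ * Z := by
    refine (le_abs_self _).trans ((abs_integral_mul_le_of_bound (M := δ)
      (by unfold convDiffOp; fun_prop) E.continuous hac.le hδ hq.residual).trans ?_)
    calc δ * √(c - a) * √(∫ t in a..c, E.eval t ^ 2) ≤ δ * 1 * Z := by gcongr
      _ = _ := by ring
  have t7 : (4 * M + B + 1) * δ * Z * 1 ≤ (4 * M + B + 1) * δ * Z * p := by gcongr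
  linarith [t2.1, t3.2]

/-- The weak derivative of the difference of a conforming and a weak function. -/
theorem IsWeakDerivOn.conforming_sub {a c : ℝ} {n : ℕ} {q U DU : Polynomial ℝ} {ul ur : ℝ}
    (hq : q.derivative.natDegree ≤ n) (hDU : DU.natDegree ≤ n)
    (h : IsWeakDerivOn a c n (fun t => U.eval t) ul ur (fun t => DU.eval t)) :
    IsWeakDerivOn a c n (fun t => (q - U).eval t) (q.eval a - ul) (q.eval c - ur)
      (fun t => (q.derivative - DU).eval t) := by
  refine ⟨⟨_, (Polynomial.natDegree_sub_le_of_le hq hDU).trans (by simp), fun t => rfl⟩,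
    fun w hw => ?_⟩
  have i : ∀ {g : ℝ → ℝ}, Continuous g → IntervalIntegrable g volume a c :=
    fun hg => hg.intervalIntegrable _ _
  simp only [Polynomial.eval_sub, sub_mul]
  rw [intervalIntegral.integral_sub (i (by fun_prop)) (i (by fun_prop)),
    intervalIntegral.integral_sub (i (by fun_prop)) (i (by fun_prop)), h.2 w hw,
    Polynomial.integral_derivative_mul]
  ring

/-- The weak Galerkin residual functional on a cell. -/
def cellForm (ε : ℝ) (b r f : ℝ → ℝ) (a c : ℝ) (p : ℕ) (U DU : Polynomial ℝ) (Dc : ℝ → ℝ)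
    (ul ur : ℝ) (E D : Polynomial ℝ) (vl vr : ℝ) : ℝ :=
  ε * (∫ t in a..c, DU.eval t * D.eval t) + (∫ t in a..c, Dc t * E.eval t)
    + (∫ t in a..c, r t * U.eval t * E.eval t)
    + ε * (p : ℝ) ^ 2 / (c - a) * ((U.eval c - ur) * (E.eval c - vr)
      + (U.eval a - ul) * (E.eval a - vl))
    + b c * (U.eval c - ur) * (E.eval c - vr) - ∫ t in a..c, f t * E.eval t

/-- The error identity on a cell. -/
theorem cell_error_identity {ε : ℝ} {b r f : ℝ → ℝ} (hb : ContDiff ℝ (⊤ : ℕ∞) b)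
    (hr : Continuous r) {a c : ℝ} {p : ℕ} {q U DU : Polynomial ℝ} {Dc : ℝ → ℝ} {ul ur : ℝ}
    (hq : q.natDegree ≤ p) (hU : U.natDegree ≤ p)
    (hDc : IsWeakConvDerivOn b a c p (fun t => U.eval t) ul ur Dc) :
    ε * (∫ t in a..c, (q.derivative - DU).eval t ^ 2)
      + (-(∫ t in a..c, (q - U).eval t * deriv (fun s => b s * (q - U).eval s) t)
        + (q.eval c - ur) * (b c * (q - U).eval c) - (q.eval a - ul) * (b a * (q - U).eval a))
      + (∫ t in a..c, r t * (q - U).eval t * (q - U).eval t)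
      + ε * (p : ℝ) ^ 2 / (c - a) * (((q - U).eval c - (q.eval c - ur)) ^ 2
        + ((q - U).eval a - (q.eval a - ul)) ^ 2)
      + b c * ((q - U).eval c - (q.eval c - ur)) ^ 2
      + cellForm ε b r f a c p U DU Dc ul ur (q - U) (q.derivative - DU)
        (q.eval a - ul) (q.eval c - ur)
    = ε * (∫ t in a..c, q.derivative.eval t * (q.derivative - DU).eval t)
      + (∫ t in a..c, b t * q.derivative.eval t * (q - U).eval t)
      + (∫ t in a..c, r t * q.eval t * (q - U).eval t)
      - (∫ t in a..c, f t * (q - U).eval t) := by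
  have i : ∀ {g : ℝ → ℝ}, Continuous g → IntervalIntegrable g volume a c :=
    fun hg => hg.intervalIntegrable _ _
  have hb0 := hb.continuous
  have hb1 := hb.deriv_infty.continuous
  have hE : (q - U).natDegree ≤ p := (Polynomial.natDegree_sub_le_of_le hq hU).trans (by simp)
  have e1 := hDc.2 (q - U) hE
  have hd : ∀ t, HasDerivAt (fun s => b s * (q - U).eval s)
      (deriv b t * (q - U).eval t + b t * (q - U).derivative.eval t) t := fun t =>
    (hb.hasDerivAt_infty t).mul ((q - U).hasDerivAt t)
  have hd' : deriv (fun s => b s * (q - U).eval s) =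
      fun t => deriv b t * (q - U).eval t + b t * (q - U).derivative.eval t :=
    funext fun t => (hd t).deriv
  have e2 : (∫ t in a..c, q.derivative.eval t * (b t * (q - U).eval t)
      + q.eval t * (deriv b t * (q - U).eval t + b t * (q - U).derivative.eval t))
      = q.eval c * (b c * (q - U).eval c) - q.eval a * (b a * (q - U).eval a) :=
    intervalIntegral.integral_deriv_mul_eq_sub (fun t _ => q.hasDerivAt t) (fun t _ => hd t)
      (i (by fun_prop)) (i (by fun_prop))
  rw [hd'] at e1 ⊢
  have e3 : (∫ t in a..c, (q - U).eval t *
        (deriv b t * (q - U).eval t + b t * (q - U).derivative.eval t))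
      + (∫ t in a..c, b t * q.derivative.eval t * (q - U).eval t)
      + (∫ t in a..c, U.eval t * (deriv b t * (q - U).eval t + b t * (q - U).derivative.eval t))
      = (∫ t in a..c, q.derivative.eval t * (b t * (q - U).eval t)
      + q.eval t * (deriv b t * (q - U).eval t + b t * (q - U).derivative.eval t)) := by
    rw [← intervalIntegral.integral_add (i (by fun_prop)) (i (by fun_prop)),
      ← intervalIntegral.integral_add (i (by fun_prop)) (i (by fun_prop))]
    refine intervalIntegral.integral_congr fun t _ => ?_
    simp only [Polynomial.eval_sub]
    ring
  have e4 : (∫ t in a..c, (q.derivative - DU).eval t ^ 2)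
      + (∫ t in a..c, DU.eval t * (q.derivative - DU).eval t)
      = ∫ t in a..c, q.derivative.eval t * (q.derivative - DU).eval t := by
    rw [← intervalIntegral.integral_add (i (by fun_prop)) (i (by fun_prop))]
    refine intervalIntegral.integral_congr fun t _ => ?_
    simp only [Polynomial.eval_sub]
    ring
  have e5 : (∫ t in a..c, r t * (q - U).eval t * (q - U).eval t)
      + (∫ t in a..c, r t * U.eval t * (q - U).eval t)
      = ∫ t in a..c, r t * q.eval t * (q - U).eval t := by
    rw [← intervalIntegral.integral_add (i (by fun_prop)) (i (by fun_prop))]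
    refine intervalIntegral.integral_congr fun t _ => ?_
    simp only [Polynomial.eval_sub]
    ring
  simp only [cellForm]
  rw [e1, ← e4, ← e5]
  rw [e2] at e3
  have k1 : (q - U).eval c = q.eval c - U.eval c := Polynomial.eval_sub ..
  have k2 : (q - U).eval a = q.eval a - U.eval a := Polynomial.eval_sub ..
  linear_combination -e3
    + (ε * (p : ℝ) ^ 2 / (c - a) + b c) * ((q - U).eval c - (q.eval c - ur)) * k1
    + (ε * (p : ℝ) ^ 2 / (c - a)) * ((q - U).eval a - (q.eval a - ul)) * k2

/-- The error estimate on a cell, up to boundary terms that cancel over the mesh. -/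
theorem cell_error_le {ε M B B' γ δ : ℝ} (hε : 0 < ε) (hM : 1 ≤ M) (hB : 0 ≤ B) (hB' : 0 ≤ B')
    (hδ : 0 ≤ δ) {b r f s : ℝ → ℝ} (hb : ContDiff ℝ (⊤ : ℕ∞) b)
    (hr : Continuous r) (hf : Continuous f) {a c : ℝ} (hac : a < c) (hac1 : c - a ≤ 1)
    (hbB : ∀ x ∈ Icc a c, |b x| ≤ B) (hbB' : ∀ x ∈ Icc a c, |deriv b x| ≤ B')
    (hrB : ∀ x ∈ Icc a c, |r x| ≤ B) (hb0 : ∀ x ∈ Icc a c, 0 ≤ b x)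
    (hbr : ∀ x ∈ Icc a c, γ ≤ r x - deriv b x / 2) (hεM : ε ≤ M * (c - a)) {p : ℕ} (hp : 1 ≤ p)
    (hcase : 1 / 2 ≤ c - a ∨ c - a ≤ p * ε) {q U DU : Polynomial ℝ} {Dc : ℝ → ℝ} {ul ur : ℝ}
    (hq : CellApprox ε b r f a c p δ s q) (hU : U.natDegree ≤ p) (hDU : DU.natDegree ≤ p - 1)
    (h : IsWeakDerivOn a c (p - 1) (fun t => U.eval t) ul ur (fun t => DU.eval t))
    (hDc : IsWeakConvDerivOn b a c p (fun t => U.eval t) ul ur Dc) :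
    min γ (1 / 2) * cellEnergy ε b a c p (q - U) (q.derivative - DU) (q.eval a - ul)
        (q.eval c - ur) + (b c * (q.eval c - ur) ^ 2 - b a * (q.eval a - ul) ^ 2) / 2
      + cellForm ε b r f a c p U DU Dc ul ur (q - U) (q.derivative - DU)
        (q.eval a - ul) (q.eval c - ur)
    ≤ ε * (deriv s c * (q.eval c - ur) - deriv s a * (q.eval a - ul))
        + (4 * M + 3 * B + B' + 1) * p * δ * √(cellEnergy ε b a c p (q - U) (q.derivative - DU)
          (q.eval a - ul) (q.eval c - ur)) := by
  have hE : (q - U).natDegree ≤ p :=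
    (Polynomial.natDegree_sub_le_of_le hq.degree hU).trans (by simp)
  have hdeg : q.derivative.natDegree ≤ p - 1 :=
    (Polynomial.natDegree_derivative_le q).trans (Nat.sub_le_sub_right hq.degree 1)
  have hbc := hb0 c ⟨hac.le, le_rfl⟩
  have h1 := cell_consistency hε hM hB hB' hδ hb hr hf hac hac1 hbB hbB' hrB hbc hεM hp hcase hq hE
    (h.conforming_sub hdeg hDU)
  rw [← cell_error_identity hb hr hq.degree hU hDc] at h1
  have h2 := cell_coercive hε hb hr hac (hb0 a ⟨le_rfl, hac.le⟩) hbc hbr p (q - U)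
    (q.derivative - DU) (q.eval a - ul) (q.eval c - ur)
  linarith

/-- The weak derivatives of two weak functions with the same jumps differ by at most the
difference of the classical derivatives. -/
theorem integral_sq_sub_weakDeriv_le {a c : ℝ} (hac : a ≤ c) {n : ℕ} {u : ℝ → ℝ}
    (hu : ContDiff ℝ (⊤ : ℕ∞) u) {q U DU D : Polynomial ℝ} {ul ur : ℝ} (hqa : q.eval a = u a)
    (hqc : q.eval c = u c) (hq : q.derivative.natDegree ≤ n) (hDU : DU.natDegree ≤ n)
    (hDn : D.natDegree ≤ n)
    (h : IsWeakDerivOn a c n (fun t => U.eval t) ul ur (fun t => DU.eval t))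
    (hD : IsWeakDerivOn a c n (fun t => u t - U.eval t) (u a - ul) (u c - ur)
      (fun t => D.eval t)) :
    (∫ t in a..c, (D - (q.derivative - DU)).eval t ^ 2)
      ≤ ∫ t in a..c, (deriv u t - q.derivative.eval t) ^ 2 := by
  have i : ∀ {g : ℝ → ℝ}, Continuous g → IntervalIntegrable g volume a c :=
    fun hg => hg.intervalIntegrable _ _
  have hu0 := hu.continuous
  have hu1 := hu.deriv_infty.continuous
  set W := D - (q.derivative - DU) with hW
  have hWn : W.natDegree ≤ n :=
    (Polynomial.natDegree_sub_le_of_le hDn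
      (Polynomial.natDegree_sub_le_of_le hq hDU)).trans (by simp)
  have e1 := hD.2 W hWn
  have e2 := (h.conforming_sub hq hDU).2 W hWn
  have e3 : (∫ t in a..c, (deriv u t - q.derivative.eval t) * W.eval t
      + (u t - q.eval t) * W.derivative.eval t)
      = (u c - q.eval c) * W.eval c - (u a - q.eval a) * W.eval a :=
    intervalIntegral.integral_deriv_mul_eq_sub
      (fun t _ => (hu.hasDerivAt_infty t).sub (q.hasDerivAt t)) (fun t _ => W.hasDerivAt t)
      (i (by fun_prop)) (i (by fun_prop))
  have e4 : (∫ t in a..c, (u t - U.eval t) * W.derivative.eval t)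
      - (∫ t in a..c, (q - U).eval t * W.derivative.eval t)
      + (∫ t in a..c, (deriv u t - q.derivative.eval t) * W.eval t)
      = ∫ t in a..c, (deriv u t - q.derivative.eval t) * W.eval t
      + (u t - q.eval t) * W.derivative.eval t := by
    rw [← intervalIntegral.integral_sub (i (by fun_prop)) (i (by fun_prop)),
      ← intervalIntegral.integral_add (i (by fun_prop)) (i (by fun_prop))]
    refine intervalIntegral.integral_congr fun t _ => ?_
    simp only [Polynomial.eval_sub]
    ring
  have e5 : (∫ t in a..c, D.eval t * W.eval t)
      - (∫ t in a..c, (q.derivative - DU).eval t * W.eval t) = ∫ t in a..c, W.eval t ^ 2 := by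
    rw [← intervalIntegral.integral_sub (i (by fun_prop)) (i (by fun_prop))]
    refine intervalIntegral.integral_congr fun t _ => ?_
    simp only [hW, Polynomial.eval_sub]
    ring
  rw [hqa, hqc] at e2 e3
  have e6 : (∫ t in a..c, W.eval t ^ 2)
      = ∫ t in a..c, (deriv u t - q.derivative.eval t) * W.eval t := by
    rw [← e5, e1, e2]
    linarith
  have cs := sq_integral_mul_le (f := fun t => deriv u t - q.derivative.eval t)
    (by fun_prop) W.continuous hac
  rw [← e6] at cs
  have hW0 : 0 ≤ ∫ t in a..c, W.eval t ^ 2 :=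
    intervalIntegral.integral_nonneg hac fun t _ => sq_nonneg _
  have hX0 : 0 ≤ ∫ t in a..c, (deriv u t - q.derivative.eval t) ^ 2 :=
    intervalIntegral.integral_nonneg hac fun t _ => sq_nonneg _
  generalize (∫ t in a..c, W.eval t ^ 2) = X at *
  nlinarith

theorem integral_sq_add_le {f g : ℝ → ℝ} (hf : Continuous f) (hg : Continuous g) {a c : ℝ}
    (hac : a ≤ c) :
    (∫ t in a..c, (f t + g t) ^ 2) ≤ 2 * (∫ t in a..c, f t ^ 2) + 2 * ∫ t in a..c, g t ^ 2 := by
  have i : ∀ {g : ℝ → ℝ}, Continuous g → IntervalIntegrable g volume a c :=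
    fun hg => hg.intervalIntegrable _ _
  rw [← intervalIntegral.integral_const_mul, ← intervalIntegral.integral_const_mul,
    ← intervalIntegral.integral_add (i (by fun_prop)) (i (by fun_prop))]
  refine intervalIntegral.integral_mono_on hac (i (by fun_prop)) (i (by fun_prop)) fun t _ => ?_
  nlinarith [sq_nonneg (f t - g t)]

theorem integral_sq_le_of_abs_le {f : ℝ → ℝ} (hf : Continuous f) {a c M : ℝ} (hac : a ≤ c)
    (h : ∀ t ∈ Icc a c, |f t| ≤ M) : (∫ t in a..c, f t ^ 2) ≤ (c - a) * M ^ 2 := by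
  calc (∫ t in a..c, f t ^ 2) ≤ ∫ _ in a..c, M ^ 2 := by
        refine intervalIntegral.integral_mono_on hac (Continuous.intervalIntegrable (by fun_prop) _ _)
          (Continuous.intervalIntegrable (by fun_prop) _ _) fun t ht => ?_
        rw [← sq_abs]
        have := h t ht
        gcongr
    _ = _ := by rw [intervalIntegral.integral_const, smul_eq_mul]

/-- The energy norm of the full error on a cell, in terms of the discrete error. -/
theorem cell_norm_le {ε M δ : ℝ} (hε : 0 < ε) (hM : 1 ≤ M)
    {b r f s u : ℝ → ℝ} (hu : ContDiff ℝ (⊤ : ℕ∞) u) {a c : ℝ} (hac : a < c) (hac1 : c - a ≤ 1)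
    (hεM : ε ≤ M * (c - a)) {p : ℕ} {q U DU : Polynomial ℝ} {ul ur : ℝ}
    (hq : CellApprox ε b r f a c p δ s q) (hDU : DU.natDegree ≤ p - 1)
    (h : IsWeakDerivOn a c (p - 1) (fun t => U.eval t) ul ur (fun t => DU.eval t))
    (hsa : s a = u a) (hsc : s c = u c) (hus : ∀ x ∈ Icc a c, |u x - s x| ≤ δ)
    (hus' : ε * (∫ x in a..c, (deriv u x - deriv s x) ^ 2) ≤ δ ^ 2) {D : ℝ → ℝ}
    (hD : IsWeakDerivOn a c (p - 1) (fun t => u t - U.eval t) (u a - ul) (u c - ur) D) :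
    ε * (∫ t in a..c, D t ^ 2) + (∫ t in a..c, (u t - U.eval t) ^ 2)
      + ε * (p : ℝ) ^ 2 / (c - a) * ((u c - U.eval c - (u c - ur)) ^ 2
        + (u a - U.eval a - (u a - ul)) ^ 2)
      + 2 * (b c * (u c - U.eval c - (u c - ur)) ^ 2)
    ≤ 2 * cellEnergy ε b a c p (q - U) (q.derivative - DU) (q.eval a - ul) (q.eval c - ur)
      + 16 * M * δ ^ 2 := by
  obtain ⟨P, hP, hDP⟩ := hD.1
  obtain rfl : D = fun t => P.eval t := funext hDP
  have hs := hq.smooth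
  have hh : 0 < c - a := sub_pos.2 hac
  have hu0 := hu.continuous
  have hu1 := hu.deriv_infty.continuous
  have hs0 := hs.continuous
  have hs1 := hs.deriv_infty.continuous
  have hdeg : q.derivative.natDegree ≤ p - 1 :=
    (Polynomial.natDegree_derivative_le q).trans (Nat.sub_le_sub_right hq.degree 1)
  have h1 := integral_sq_sub_weakDeriv_le hac.le hu (hq.left.trans hsa) (hq.right.trans hsc)
    hdeg hDU hP h hD
  have h2 : (∫ t in a..c, P.eval t ^ 2) ≤ 2 * (∫ t in a..c, (q.derivative - DU).eval t ^ 2)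
      + 2 * ∫ t in a..c, (P - (q.derivative - DU)).eval t ^ 2 := by
    refine le_trans (le_of_eq ?_) (integral_sq_add_le (by fun_prop) (by fun_prop) hac.le)
    refine intervalIntegral.integral_congr fun t _ => ?_
    simp only [Polynomial.eval_sub]
    ring
  have h3 : (∫ t in a..c, (deriv u t - q.derivative.eval t) ^ 2) ≤
      2 * (∫ t in a..c, (deriv u t - deriv s t) ^ 2)
      + 2 * ∫ t in a..c, (deriv s t - q.derivative.eval t) ^ 2 := by
    refine le_trans (le_of_eq ?_) (integral_sq_add_le (by fun_prop) (by fun_prop) hac.le)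
    refine intervalIntegral.integral_congr fun t _ => ?_
    ring
  have h4 : (∫ t in a..c, (deriv s t - q.derivative.eval t) ^ 2) ≤ (c - a) * (δ / (c - a)) ^ 2 :=
    integral_sq_le_of_abs_le (by fun_prop) hac.le fun t ht => by
      rw [abs_sub_comm]; exact hq.deriv_err t ht
  have h5 : ε * ((c - a) * (δ / (c - a)) ^ 2) ≤ M * δ ^ 2 := by
    rw [show ε * ((c - a) * (δ / (c - a)) ^ 2) = ε / (c - a) * δ ^ 2 by field_simp]
    gcongr
    rwa [div_le_iff₀ hh]
  have h6 : (∫ t in a..c, (u t - U.eval t) ^ 2) ≤ 2 * (∫ t in a..c, (q - U).eval t ^ 2)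
      + 2 * ∫ t in a..c, (u t - q.eval t) ^ 2 := by
    refine le_trans (le_of_eq ?_) (integral_sq_add_le (by fun_prop) (by fun_prop) hac.le)
    refine intervalIntegral.integral_congr fun t _ => ?_
    simp only [Polynomial.eval_sub]
    ring
  have h7 : (∫ t in a..c, (u t - q.eval t) ^ 2) ≤ (c - a) * (2 * δ) ^ 2 :=
    integral_sq_le_of_abs_le (by fun_prop) hac.le fun t ht => by
      have k1 := hus t ht
      have k2 := hq.err t ht
      rw [abs_sub_comm] at k2
      calc |u t - q.eval t| = |(u t - s t) + (s t - q.eval t)| := by ring_nf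
        _ ≤ _ := (abs_add_le _ _).trans (by linarith)
  have h8 : (c - a) * (2 * δ) ^ 2 ≤ (2 * δ) ^ 2 := mul_le_of_le_one_left (sq_nonneg _) hac1
  have k1 : (q - U).eval c - (q.eval c - ur) = u c - U.eval c - (u c - ur) := by
    rw [Polynomial.eval_sub]; ring
  have k2 : (q - U).eval a - (q.eval a - ul) = u a - U.eval a - (u a - ul) := by
    rw [Polynomial.eval_sub]; ring
  simp only [cellEnergy]
  rw [k1, k2]
  have h9 : 0 ≤ ε * (p : ℝ) ^ 2 / (c - a) * ((u c - U.eval c - (u c - ur)) ^ 2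
        + (u a - U.eval a - (u a - ul)) ^ 2) := by positivity
  have h10 : δ ^ 2 ≤ M * δ ^ 2 := le_mul_of_one_le_left (sq_nonneg _) hM
  have g2 := mul_le_mul_of_nonneg_left h2 hε.le
  have g1 := mul_le_mul_of_nonneg_left h1 hε.le
  have g3 := mul_le_mul_of_nonneg_left h3 hε.le
  have g4 := mul_le_mul_of_nonneg_left h4 hε.le
  linarith

/-- The weak Galerkin equations, tested with the difference to a conforming interpolant. -/
theorem sum_cellForm_eq_zero {N : ℕ} {m : Mesh N} {ε : ℝ} {b r f : ℝ → ℝ} {p : ℕ}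
    {U DU q : Fin N → Polynomial ℝ} {upb g : Fin (N + 1) → ℝ} {Dc : Fin N → ℝ → ℝ}
    (hsol : IsWGsol m ε 1 b r f p (fun j t => (U j).eval t) upb (fun j t => (DU j).eval t) Dc)
    (hU : ∀ j, (U j).natDegree ≤ p) (hDU : ∀ j, (DU j).natDegree ≤ p - 1)
    (hq : ∀ j, (q j).natDegree ≤ p) (hg0 : g 0 = 0) (hg1 : g (Fin.last N) = 0)
    (hl : ∀ j, (q j).eval (m.xl j) = g j.castSucc) (hr : ∀ j, (q j).eval (m.xr j) = g j.succ) :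
    ∑ j, cellForm ε b r f (m.xl j) (m.xr j) p (U j) (DU j) (Dc j) (upb j.castSucc) (upb j.succ)
      (q j - U j) ((q j).derivative - DU j) ((q j).eval (m.xl j) - upb j.castSucc)
      ((q j).eval (m.xr j) - upb j.succ) = 0 := by
  obtain ⟨-, h0, h1, hwd, -, hgal⟩ := hsol
  have hdeg : ∀ j, (q j).derivative.natDegree ≤ p - 1 := fun j =>
    (Polynomial.natDegree_derivative_le _).trans (Nat.sub_le_sub_right (hq j) 1)
  have h := hgal (fun j t => (q j - U j).eval t) (fun i => g i - upb i)
    (fun j => ⟨q j - U j, (Polynomial.natDegree_sub_le_of_le (hq j) (hU j)).trans (by simp),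
      fun t => rfl⟩) (by simp [hg0, h0]) (by simp [hg1, h1])
    (fun j t => ((q j).derivative - DU j).eval t) (fun j => by
      have := (hwd j).conforming_sub (hdeg j) (hDU j)
      rwa [hl, hr] at this)
  simp only [Aform, Sform, Scform, stdPen, Mesh.width, one_mul] at h
  simp only [cellForm, Finset.sum_sub_distrib, Finset.sum_add_distrib, ← Finset.mul_sum, hl, hr]
  linarith

/-- The energy norm is bounded by the sum of the cell contributions. -/
theorem normP2_le_sum {N : ℕ} (m : Mesh N) {ε : ℝ} {b : ℝ → ℝ} (hb : ∀ j, 0 ≤ b (m.xr j)) (p : ℕ)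
    (v0 : Fin N → ℝ → ℝ) (vb : Fin (N + 1) → ℝ) (D : Fin N → ℝ → ℝ) :
    normP2 m ε 1 b (stdPen m ε p) v0 vb D ≤
      ∑ j, (ε * (∫ t in (m.xl j)..(m.xr j), D j t ^ 2) + (∫ t in (m.xl j)..(m.xr j), v0 j t ^ 2)
      + ε * (p : ℝ) ^ 2 / (m.xr j - m.xl j) * ((v0 j (m.xr j) - vb j.succ) ^ 2
        + (v0 j (m.xl j) - vb j.castSucc) ^ 2)
      + 2 * (b (m.xr j) * (v0 j (m.xr j) - vb j.succ) ^ 2)) := by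
  have hJ : Jsemi2 m 1 b v0 vb ≤ ∑ j, b (m.xr j) * (v0 j (m.xr j) - vb j.succ) ^ 2 := by
    refine Finset.sum_le_sum fun j _ => ?_
    have h0 : 0 ≤ b (m.xr j) * (v0 j (m.xr j) - vb j.succ) ^ 2 := mul_nonneg (hb j) (sq_nonneg _)
    split_ifs <;> linarith
  have hS : Sform m (stdPen m ε p) v0 vb v0 vb = ∑ j, ε * (p : ℝ) ^ 2 / (m.xr j - m.xl j) *
      ((v0 j (m.xr j) - vb j.succ) ^ 2 + (v0 j (m.xl j) - vb j.castSucc) ^ 2) := by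
    simp only [Sform, stdPen, Mesh.width, sq (_ - _)]
  have hSc : Scform m 1 b v0 vb v0 vb = ∑ j, b (m.xr j) * (v0 j (m.xr j) - vb j.succ) ^ 2 := by
    simp only [Scform, one_mul, sq, mul_assoc]
  simp only [normP2, Finset.sum_add_distrib, hS, hSc, ← Finset.mul_sum]
  linarith

/-- Cellwise form of the error analysis of the weak Galerkin method. -/
theorem galerkin_cell_estimates {N : ℕ} {m : Mesh N} {ε M B B' β γ δ : ℝ} (hε : 0 < ε)
    (hM : 1 ≤ M) (hB : 0 ≤ B) (hB' : 0 ≤ B') (hβ : 0 < β) (hδ : 0 ≤ δ) {b r f u : ℝ → ℝ}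
    (hb : ContDiff ℝ (⊤ : ℕ∞) b) (hr : Continuous r) (hf : Continuous f)
    (hu : ContDiff ℝ (⊤ : ℕ∞) u) (hu0 : u 0 = 0) (hu1 : u 1 = 0)
    (hm : ∀ j, Icc (m.xl j) (m.xr j) ⊆ Icc 0 1)
    (hbB : ∀ x ∈ Icc (0 : ℝ) 1, |b x| ≤ B) (hbB' : ∀ x ∈ Icc (0 : ℝ) 1, |deriv b x| ≤ B')
    (hrB : ∀ x ∈ Icc (0 : ℝ) 1, |r x| ≤ B) (hbβ : ∀ x ∈ Icc (0 : ℝ) 1, β ≤ b x)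
    (hbr : ∀ x ∈ Icc (0 : ℝ) 1, γ ≤ r x - deriv b x / 2)
    (hεM : ∀ j, ε ≤ M * (m.xr j - m.xl j)) {p : ℕ} (hp : 1 ≤ p)
    (hcase : ∀ j, 1 / 2 ≤ m.xr j - m.xl j ∨ m.xr j - m.xl j ≤ p * ε)
    {s : Fin N → ℝ → ℝ} {q : Fin N → Polynomial ℝ}
    (hq : ∀ j, CellApprox ε b r f (m.xl j) (m.xr j) p δ (s j) (q j))
    (hsl : ∀ j, s j (m.xl j) = u (m.xl j)) (hsr : ∀ j, s j (m.xr j) = u (m.xr j))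
    (hus : ∀ j, ∀ x ∈ Icc (m.xl j) (m.xr j), |u x - s j x| ≤ δ)
    (hus' : ∀ j, ε * (∫ x in (m.xl j)..(m.xr j), (deriv u x - deriv (s j) x) ^ 2) ≤ δ ^ 2)
    {up0 : Fin N → ℝ → ℝ} {upb : Fin (N + 1) → ℝ} {Dup Dcup : Fin N → ℝ → ℝ}
    (hsol : IsWGsol m ε 1 b r f p up0 upb Dup Dcup) {D : Fin N → ℝ → ℝ}
    (hD : IsWeakDeriv m (p - 1) (fun j t => u t - up0 j t) (fun i => u (m.pt i) - upb i) D) :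
    ∃ Q : Fin N → ℝ, (∀ j, 0 ≤ Q j) ∧
      (∀ j, (u (m.xr j) - upb j.succ) ^ 2 ≤
        2 * (((p : ℝ) + 1) ^ 2 / (m.xr j - m.xl j) + 1 / β) * Q j) ∧
      min γ (1 / 2) * (∑ j, Q j) + ∑ j, (b (m.xr j) * (u (m.xr j) - upb j.succ) ^ 2
          - b (m.xl j) * (u (m.xl j) - upb j.castSucc) ^ 2) / 2
        ≤ (∑ j, ε * (deriv (s j) (m.xr j) * (u (m.xr j) - upb j.succ)
            - deriv (s j) (m.xl j) * (u (m.xl j) - upb j.castSucc)))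
          + (4 * M + 3 * B + B' + 1) * p * δ * ∑ j, √(Q j) ∧
      normP2 m ε 1 b (stdPen m ε p) (fun j t => u t - up0 j t) (fun i => u (m.pt i) - upb i) D
        ≤ ∑ j, (2 * Q j + 16 * M * δ ^ 2) := by
  have hlt : ∀ j, m.xl j < m.xr j := fun j => m.mono Fin.castSucc_lt_succ
  have hwd1 : ∀ j, m.xr j - m.xl j ≤ 1 := fun j => by
    have h1 := (hm j ⟨le_rfl, (hlt j).le⟩).1
    have h2 := (hm j ⟨(hlt j).le, le_rfl⟩).2
    linarith
  have hb0 : ∀ x ∈ Icc (0 : ℝ) 1, 0 ≤ b x := fun x hx => hβ.le.trans (hbβ x hx)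
  have hxr : ∀ j, m.xr j ∈ Icc (0 : ℝ) 1 := fun j => hm j ⟨(hlt j).le, le_rfl⟩
  choose U hU hUe using hsol.1
  choose DU hDU hDUe using fun j => (hsol.2.2.2.1 j).1
  obtain rfl : up0 = fun j t => (U j).eval t := funext fun j => funext (hUe j)
  obtain rfl : Dup = fun j t => (DU j).eval t := funext fun j => funext (hDUe j)
  have hql : ∀ j, (q j).eval (m.xl j) = u (m.xl j) := fun j => (hq j).left.trans (hsl j)
  have hqr : ∀ j, (q j).eval (m.xr j) = u (m.xr j) := fun j => (hq j).right.trans (hsr j)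
  set Q : Fin N → ℝ := fun j => cellEnergy ε b (m.xl j) (m.xr j) p (q j - U j)
    ((q j).derivative - DU j) (u (m.xl j) - upb j.castSucc) (u (m.xr j) - upb j.succ) with hQ
  have hbounds := fun j => cellEnergy_bounds hε (hlt j) (hb0 _ (hxr j)) p (q j - U j)
    ((q j).derivative - DU j) (u (m.xl j) - upb j.castSucc) (u (m.xr j) - upb j.succ)
  refine ⟨Q, fun j => (hbounds j).1, fun j => ?_, ?_, ?_⟩
  · obtain ⟨-, h1, -, -, h2⟩ := hbounds j
    have hE : (q j - U j).natDegree ≤ p :=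
      (Polynomial.natDegree_sub_le_of_le (hq j).degree (hU j)).trans (by simp)
    have h3 := (Polynomial.sq_eval_endpoints_le hE (hlt j)).1
    have h4 : β * ((q j - U j).eval (m.xr j) - (u (m.xr j) - upb j.succ)) ^ 2 ≤ Q j :=
      (mul_le_mul_of_nonneg_right (hbβ _ (hxr j)) (sq_nonneg _)).trans h2
    have h5 : ((q j - U j).eval (m.xr j) - (u (m.xr j) - upb j.succ)) ^ 2 ≤ 1 / β * Q j := by
      rw [div_mul_eq_mul_div, le_div_iff₀ hβ]; linarith
    have h6 : (q j - U j).eval (m.xr j) ^ 2 ≤ ((p : ℝ) + 1) ^ 2 / (m.xr j - m.xl j) * Q j :=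
      h3.trans (mul_le_mul_of_nonneg_left h1 (div_nonneg (sq_nonneg _) (sub_pos.2 (hlt j)).le))
    nlinarith [sq_nonneg ((q j - U j).eval (m.xr j)
      + ((q j - U j).eval (m.xr j) - (u (m.xr j) - upb j.succ)))]
  · have h1 := sum_cellForm_eq_zero hsol hU hDU (fun j => (hq j).degree)
      (g := fun i => u (m.pt i)) (by simp [m.left, hu0]) (by simp [m.right, hu1]) hql hqr
    have h2 := Finset.sum_le_sum fun j (_ : j ∈ Finset.univ) =>
      cell_error_le hε hM hB hB' hδ hb hr hf (hlt j) (hwd1 j) (fun x hx => hbB x (hm j hx))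
        (fun x hx => hbB' x (hm j hx)) (fun x hx => hrB x (hm j hx))
        (fun x hx => hb0 x (hm j hx)) (fun x hx => hbr x (hm j hx)) (hεM j) hp (hcase j) (hq j)
        (hU j) (hDU j) (hsol.2.2.2.1 j) (hsol.2.2.2.2.1 j)
    simp only [Finset.sum_add_distrib, ← Finset.mul_sum] at h2
    rw [h1] at h2
    simp only [hql, hqr] at h2
    rw [add_zero] at h2
    simpa only [← Finset.mul_sum] using h2
  · refine (normP2_le_sum m (fun j => hb0 _ (hxr j)) p _ _ D).trans
      (Finset.sum_le_sum fun j _ => ?_)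
    have h1 := cell_norm_le hε hM hu (hlt j) (hwd1 j) (hεM j) (hq j) (hDU j)
      (hsol.2.2.2.1 j) (hsl j) (hsr j) (hus j) (hus' j) (hD j)
    simp only [hql, hqr] at h1
    exact h1

theorem add_le_of_mul_add_le_sqrt {μ K x y : ℝ} (hμ : 0 < μ) (hx : 0 ≤ x) (hy : 0 ≤ y)
    (h : μ * (x + y) ≤ K * (√x + √y)) : x + y ≤ 2 * (K / μ) ^ 2 := by
  rw [← Real.sq_sqrt hx, ← Real.sq_sqrt hy] at h ⊢
  rw [Real.sqrt_sq (Real.sqrt_nonneg _), Real.sqrt_sq (Real.sqrt_nonneg _)] at h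
  generalize √x = X at *
  generalize √y = Y at *
  rw [div_pow, ← mul_div_assoc, le_div_iff₀ (by positivity)]
  nlinarith [sq_nonneg (μ * X - K), sq_nonneg (μ * Y - K), mul_le_mul_of_nonneg_left h hμ.le]

/-- The energy norm of the error on the one-cell mesh. -/
theorem normP2_le_one_cell {m : Mesh 1} {ε M B B' β γ δ : ℝ} (hε : 0 < ε) (hε1 : ε ≤ 1)
    (hM : 1 ≤ M) (hB : 0 ≤ B) (hB' : 0 ≤ B') (hβ : 0 < β) (hγ : 0 < γ) (hδ : 0 ≤ δ)
    {b r f u : ℝ → ℝ} (hb : ContDiff ℝ (⊤ : ℕ∞) b) (hr : Continuous r) (hf : Continuous f)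
    (hu : ContDiff ℝ (⊤ : ℕ∞) u) (hu0 : u 0 = 0) (hu1 : u 1 = 0)
    (hbB : ∀ x ∈ Icc (0 : ℝ) 1, |b x| ≤ B) (hbB' : ∀ x ∈ Icc (0 : ℝ) 1, |deriv b x| ≤ B')
    (hrB : ∀ x ∈ Icc (0 : ℝ) 1, |r x| ≤ B) (hbβ : ∀ x ∈ Icc (0 : ℝ) 1, β ≤ b x)
    (hbr : ∀ x ∈ Icc (0 : ℝ) 1, γ ≤ r x - deriv b x / 2) {p : ℕ} (hp : 1 ≤ p)
    {q : Polynomial ℝ} (hq : CellApprox ε b r f 0 1 p δ u q)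
    {up0 : Fin 1 → ℝ → ℝ} {upb : Fin 2 → ℝ} {Dup Dcup : Fin 1 → ℝ → ℝ}
    (hsol : IsWGsol m ε 1 b r f p up0 upb Dup Dcup) {D : Fin 1 → ℝ → ℝ}
    (hD : IsWeakDeriv m (p - 1) (fun j t => u t - up0 j t) (fun i => u (m.pt i) - upb i) D) :
    normP2 m ε 1 b (stdPen m ε p) (fun j t => u t - up0 j t) (fun i => u (m.pt i) - upb i) D
      ≤ 4 * ((4 * M + 3 * B + B' + 1) * p * δ / min γ (1 / 2)) ^ 2 + 16 * M * δ ^ 2 := by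
  have hl : m.xl 0 = 0 := m.left
  have hrr : m.xr 0 = 1 := m.right
  have hb0 : upb (Fin.castSucc 0) = 0 := hsol.2.1
  have hb1 : upb (Fin.succ 0) = 0 := hsol.2.2.1
  obtain ⟨Q, hQ0, -, hQ, hnorm⟩ := galerkin_cell_estimates (s := fun _ => u) (q := fun _ => q)
    hε hM hB hB' hβ hδ hb hr hf hu hu0 hu1
    (by simp [hl, hrr]) hbB hbB' hrB hbβ hbr (by simp [hl, hrr]; linarith) hp
    (by simp [hl, hrr]; norm_num) (by simpa [hl, hrr] using hq) (fun _ => rfl) (fun _ => rfl)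
    (by simpa using fun _ _ _ => hδ) (by simpa using sq_nonneg δ) hsol hD
  simp only [Fin.sum_univ_one, hl, hrr, hb0, hb1, hu0, hu1] at hQ hnorm
  have h1 := add_le_of_mul_add_le_sqrt (μ := min γ (1 / 2))
    (K := (4 * M + 3 * B + B' + 1) * p * δ) (by positivity) (hQ0 0) le_rfl
    (by simpa using hQ)
  linarith

set_option maxHeartbeats 1000000 in
/-- The energy norm of the error on the two-cell boundary layer mesh. -/
theorem normP2_le_two_cells {m : Mesh 2} {τ ε M B B' β γ δ : ℝ} (hτ : m.pt 1 = τ)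
    (hτ2 : 1 / 2 ≤ τ) (hε : 0 < ε) (hε1 : ε ≤ 1)
    (hM : 2 ≤ M) (hB : 0 ≤ B) (hB' : 0 ≤ B') (hβ : 0 < β) (hγ : 0 < γ) (hδ : 0 ≤ δ)
    {b r f u s : ℝ → ℝ} (hb : ContDiff ℝ (⊤ : ℕ∞) b) (hr : Continuous r) (hf : Continuous f)
    (hu : ContDiff ℝ (⊤ : ℕ∞) u) (hu0 : u 0 = 0) (hu1 : u 1 = 0)
    (hbB : ∀ x ∈ Icc (0 : ℝ) 1, |b x| ≤ B) (hbB' : ∀ x ∈ Icc (0 : ℝ) 1, |deriv b x| ≤ B')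
    (hrB : ∀ x ∈ Icc (0 : ℝ) 1, |r x| ≤ B) (hbβ : ∀ x ∈ Icc (0 : ℝ) 1, β ≤ b x)
    (hbr : ∀ x ∈ Icc (0 : ℝ) 1, γ ≤ r x - deriv b x / 2) {p : ℕ} (hp : 1 ≤ p)
    (hεM : ε ≤ M * (1 - τ)) (hpε : 1 - τ ≤ p * ε) {q₁ q₂ : Polynomial ℝ}
    (hq₁ : CellApprox ε b r f 0 τ p δ s q₁) (hq₂ : CellApprox ε b r f τ 1 p δ u q₂)
    (hs0 : s 0 = 0) (hsτ : s τ = u τ) (hjump : ε * |deriv s τ - deriv u τ| ≤ δ)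
    (hus : ∀ x ∈ Icc 0 τ, |u x - s x| ≤ δ)
    (hus' : ε * (∫ x in (0 : ℝ)..τ, (deriv u x - deriv s x) ^ 2) ≤ δ ^ 2)
    {up0 : Fin 2 → ℝ → ℝ} {upb : Fin 3 → ℝ} {Dup Dcup : Fin 2 → ℝ → ℝ}
    (hsol : IsWGsol m ε 1 b r f p up0 upb Dup Dcup) {D : Fin 2 → ℝ → ℝ}
    (hD : IsWeakDeriv m (p - 1) (fun j t => u t - up0 j t) (fun i => u (m.pt i) - upb i) D) :
    normP2 m ε 1 b (stdPen m ε p) (fun j t => u t - up0 j t) (fun i => u (m.pt i) - upb i) D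
      ≤ 4 * ((4 * M + 3 * B + B' + 1 + (16 + 2 / β)) * p * δ / min γ (1 / 2)) ^ 2
        + 32 * M * δ ^ 2 := by
  have hp1 : (1 : ℝ) ≤ p := by exact_mod_cast hp
  have hl0 : m.xl 0 = 0 := m.left
  have hr0 : m.xr 0 = τ := hτ
  have hl1 : m.xl 1 = τ := hτ
  have hr1 : m.xr 1 = 1 := m.right
  have hτ1 : τ < 1 := by
    have h := m.mono (show (1 : Fin 3) < Fin.last 2 by decide)
    rwa [m.right, hτ] at h
  have hb0 : upb (Fin.castSucc 0) = 0 := hsol.2.1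
  have hb1 : upb (Fin.succ 1) = 0 := hsol.2.2.1
  obtain ⟨Q, hQ0, hv, hQ, hnorm⟩ := galerkin_cell_estimates (M := M) (s := ![s, u])
    (q := ![q₁, q₂]) (m := m) (ε := ε)
    hε (by linarith) hB hB' hβ hδ hb hr hf hu hu0 hu1
    (by
      rw [Fin.forall_fin_two, hl0, hr0, hl1, hr1]
      exact ⟨Icc_subset_Icc le_rfl hτ1.le, Icc_subset_Icc (by linarith) le_rfl⟩)
    hbB hbB' hrB hbβ hbr
    (by
      rw [Fin.forall_fin_two, hl0, hr0, hl1, hr1]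
      exact ⟨by nlinarith, hεM⟩) hp
    (by
      rw [Fin.forall_fin_two, hl0, hr0, hl1, hr1]
      exact ⟨Or.inl (by linarith), Or.inr hpε⟩)
    (by
      rw [Fin.forall_fin_two, hl0, hr0, hl1, hr1]
      exact ⟨hq₁, hq₂⟩)
    (by
      rw [Fin.forall_fin_two, hl0, hl1]
      exact ⟨hs0.trans hu0.symm, rfl⟩)
    (by
      rw [Fin.forall_fin_two, hr0, hr1]
      exact ⟨hsτ, rfl⟩)
    (by
      rw [Fin.forall_fin_two, hl0, hr0, hl1, hr1]
      exact ⟨hus, fun x _ => by simpa using hδ⟩)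
    (by
      rw [Fin.forall_fin_two, hl0, hr0, hl1, hr1]
      exact ⟨hus', by simpa using sq_nonneg δ⟩) hsol hD
  have hv0 := hv 0
  have hcs : upb (Fin.castSucc 1) = upb (Fin.succ 0) := rfl
  simp only [Fin.sum_univ_two, hl0, hr0, hl1, hr1, hb0, hb1, hu0, hu1, hcs, Matrix.cons_val_zero,
    Matrix.cons_val_one] at hQ hnorm hv0
  generalize u τ - upb (Fin.succ 0) = v at *
  have hQ00 := hQ0 0
  have hQ01 := hQ0 1
  generalize Q 0 = x at *
  generalize Q 1 = y at *
  set k := 16 + 2 / β with hk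
  have hk1 : 1 ≤ k := by
    have : 0 < 2 / β := by positivity
    linarith
  have hvb : |v| ≤ k * p * √x := by
    refine abs_le_of_sq_le_sq ?_ (by positivity)
    rw [mul_pow, mul_pow, Real.sq_sqrt hQ00]
    refine hv0.trans (mul_le_mul_of_nonneg_right ?_ hQ00)
    have h1 : ((p : ℝ) + 1) ^ 2 / (τ - 0) ≤ 8 * p ^ 2 := by
      rw [div_le_iff₀ (by linarith)]
      nlinarith
    have h2 : 1 / β ≤ 1 / β * (p : ℝ) ^ 2 :=
      le_mul_of_one_le_right (by positivity) (one_le_pow₀ hp1)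
    calc 2 * (((p : ℝ) + 1) ^ 2 / (τ - 0) + 1 / β) ≤ 2 * (8 * p ^ 2 + 1 / β * p ^ 2) := by
          gcongr
      _ = k * p ^ 2 := by rw [hk]; ring
      _ ≤ k ^ 2 * p ^ 2 := by
          gcongr
          nlinarith
  have hkink : ε * (deriv s τ * v) - ε * (deriv u τ * v) ≤ k * p * δ * √x := by
    calc ε * (deriv s τ * v) - ε * (deriv u τ * v) = ε * ((deriv s τ - deriv u τ) * v) := by ring
      _ ≤ ε * (|deriv s τ - deriv u τ| * |v|) := by
          rw [← abs_mul]
          exact mul_le_mul_of_nonneg_left (le_abs_self _) hε.le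
      _ = ε * |deriv s τ - deriv u τ| * |v| := by ring
      _ ≤ δ * (k * p * √x) := by gcongr
      _ = _ := by ring
  have h1 := add_le_of_mul_add_le_sqrt (μ := min γ (1 / 2)) (x := x) (y := y)
    (K := (4 * M + 3 * B + B' + 1 + k) * p * δ) (by positivity) hQ00 hQ01 (by
      have : 0 ≤ k * p * δ * √y := by positivity
      linarith)
  linarith

/-- A common analyticity bound for three families of analytic data. -/
theorem exists_common_analyticBound {b r f : ℝ → ℝ} (hb : AnalyticData b) (hr : AnalyticData r)
    (hf : AnalyticData f) : ∃ B G, 0 < B ∧ 0 < G ∧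
      AnalyticBound B G b ∧ AnalyticBound B G r ∧ AnalyticBound B G f := by
  obtain ⟨hb, C₁, G₁, hC₁, hG₁, h₁⟩ := hb
  obtain ⟨hr, C₂, G₂, hC₂, hG₂, h₂⟩ := hr
  obtain ⟨hf, C₃, G₃, hC₃, hG₃, h₃⟩ := hf
  refine ⟨C₁ + C₂ + C₃, G₁ + G₂ + G₃, by positivity, by positivity, ?_, ?_, ?_⟩
  · exact AnalyticBound.mono ⟨hb, h₁⟩ hC₁.le hG₁.le (by linarith) (by linarith)
  · exact AnalyticBound.mono ⟨hr, h₂⟩ hC₂.le hG₂.le (by linarith) (by linarith)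
  · exact AnalyticBound.mono ⟨hf, h₃⟩ hC₃.le hG₃.le (by linarith) (by linarith)

theorem sqrt_le_exp_of_le_mul_sq {K C c x n : ℝ} (hK : 0 ≤ K) (hC : 0 ≤ C) (hc : 0 < c)
    (hn : 0 ≤ n) (h : x ≤ K * (n * (C * Real.exp (-c * n))) ^ 2) :
    √x ≤ (√K + 1) * C * (2 / c) * Real.exp (-(c / 2) * n) := by
  have hexp : n * Real.exp (-c * n) ≤ 2 / c * Real.exp (-(c / 2) * n) := by
    have h1 : c / 2 * n ≤ Real.exp (c / 2 * n) := by
      linarith [Real.add_one_le_exp (c / 2 * n)]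
    calc n * Real.exp (-c * n) = 2 / c * ((c / 2 * n) * Real.exp (-c * n)) := by
          field_simp
      _ ≤ 2 / c * (Real.exp (c / 2 * n) * Real.exp (-c * n)) := by gcongr
      _ = 2 / c * Real.exp (-(c / 2) * n) := by
          rw [← Real.exp_add]
          ring_nf
  have hs : √x ≤ √K * (n * (C * Real.exp (-c * n))) := by
    refine (Real.sqrt_le_sqrt h).trans_eq ?_
    rw [Real.sqrt_mul hK, Real.sqrt_sq (by positivity)]
  calc √x ≤ √K * (n * (C * Real.exp (-c * n))) := hs
    _ = √K * C * (n * Real.exp (-c * n)) := by ring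
    _ ≤ (√K + 1) * C * (2 / c * Real.exp (-(c / 2) * n)) := by
        gcongr
        linarith
    _ = _ := by ring

theorem energy_le_mul_sq {A A' μ L L' n δ : ℝ} (hA : 0 ≤ A) (hAA' : A ≤ A') (hμ : 0 < μ)
    (hL : 0 ≤ L) (hLL' : L ≤ L') (hn : 1 ≤ n) (hδ : 0 ≤ δ) :
    4 * (A * n * δ / μ) ^ 2 + L * δ ^ 2 ≤ (4 * (A' / μ) ^ 2 + L') * (n * δ) ^ 2 := by
  have h1 : 4 * (A * n * δ / μ) ^ 2 ≤ 4 * (A' * n * δ / μ) ^ 2 := by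
    have : 0 ≤ n := by linarith
    gcongr
  have h2 : L * δ ^ 2 ≤ L' * (n * δ) ^ 2 := by
    have : δ ≤ n * δ := le_mul_of_one_le_left hδ hn
    gcongr
    exact hL.trans hLL'
  calc _ ≤ 4 * (A' * n * δ / μ) ^ 2 + L' * (n * δ) ^ 2 := add_le_add h1 h2
    _ = _ := by ring

/-- Robust exponential convergence in the convection-diffusion regime
`ε₂ = 1`: on the Spectral Boundary Layer mesh `ω_BL(κ,p)` there holds
`|||u − u_p|||_p ≤ C e^{−σ p}`, uniformly in `ε₁` and `p`. -/
theorem statement11 (bb rr ff : ℝ → ℝ)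
    (hb : AnalyticData bb) (hr : AnalyticData rr) (hf : AnalyticData ff)
    (hbpos : ∀ x ∈ Set.Icc (0 : ℝ) 1, 0 < bb x)
    (hrpos : ∀ x ∈ Set.Icc (0 : ℝ) 1, 0 ≤ rr x)
    (γ : ℝ) (hγ : 0 < γ)
    (hγ' : ∀ x ∈ Set.Icc (0 : ℝ) 1, γ ≤ rr x - deriv bb x / 2) :
    ∃ κ σ C : ℝ, 0 < κ ∧ 0 < σ ∧ 0 < C ∧
      ∀ ε₁ : ℝ, 0 < ε₁ → ε₁ ≤ 1 →
      ∀ p : ℕ, 1 ≤ p →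
      ∀ (N : ℕ) (m : Mesh N), IsSBLmeshCD κ p ε₁ m →
      ∀ u : ℝ → ℝ, ContDiff ℝ (⊤ : ℕ∞) u → SolvesBVP ε₁ 1 bb rr ff u →
      ∀ (up0 : Fin N → ℝ → ℝ) (upb : Fin (N + 1) → ℝ) (Dup Dcup : Fin N → ℝ → ℝ),
        IsWGsol m ε₁ 1 bb rr ff p up0 upb Dup Dcup →
      ∀ D : Fin N → ℝ → ℝ,
        IsWeakDeriv m (p - 1) (fun j t => u t - up0 j t)
          (fun i => u (m.pt i) - upb i) D →
        Real.sqrt (normP2 m ε₁ 1 bb (stdPen m ε₁ p)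
            (fun j t => u t - up0 j t) (fun i => u (m.pt i) - upb i) D)
          ≤ C * Real.exp (-σ * p) := by
  obtain ⟨B, G, hB, hG, hb, hr, hf⟩ := exists_common_analyticBound hb hr hf
  obtain ⟨x₀, hx₀, hmin⟩ := isCompact_Icc.exists_isMinOn (nonempty_Icc.2 zero_le_one)
    hb.1.continuous.continuousOn
  have hbβ : ∀ x ∈ Icc (0 : ℝ) 1, bb x₀ ≤ bb x := fun x hx => hmin hx
  have hβ := hbpos x₀ hx₀
  obtain ⟨κ, C, c, hκ, hκ1, hC, hc, happrox⟩ :=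
    exists_boundary_layer_approx hB hG hβ hγ hb hr hf hbβ hrpos hγ'
  set M := 2 + 1 / κ with hM
  have hκ' : 0 < 1 / κ := by positivity
  set K := 4 * ((4 * M + 3 * B + B * G + 1 + (16 + 2 / bb x₀)) / min γ (1 / 2)) ^ 2 + 32 * M
    with hK
  have hM0 : 2 ≤ M := by linarith
  have hK0 : 0 ≤ K := by positivity
  have hβ' : 0 < 2 / bb x₀ := by positivity
  have hBG : 0 < B * G := by positivity
  have hμ : 0 < min γ (1 / 2) := by positivity
  refine ⟨κ, c / 2, (√K + 1) * C * (2 / c), hκ, by positivity, by positivity, ?_⟩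
  intro ε hε hε1 p hp N m hmesh u hu ⟨hu0, hu1, hode⟩ up0 upb Dup Dcup hsol D hD
  have hp1 : (1 : ℝ) ≤ p := by exact_mod_cast hp
  have hpε : ε ≤ p * ε := le_mul_of_one_le_left hε.le hp1
  obtain ⟨hone, htwo⟩ := happrox ε hε hε1 p hp u hu hu0 hu1
    (fun x hx => by simpa [convDiffOp] using hode x hx)
  have hδ : 0 ≤ C * Real.exp (-c * p) := by positivity
  refine sqrt_le_exp_of_le_mul_sq hK0 hC.le hc (by positivity) ?_
  rcases hmesh with ⟨h, rfl⟩ | ⟨h, rfl, hpt⟩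
  · obtain ⟨q, hq⟩ := hone h
    refine (normP2_le_one_cell hε hε1 (M := M) (by linarith) hB.le hBG.le hβ hγ hδ hb.1
      hr.1.continuous hf.1.continuous hu hu0 hu1 hb.abs_le
      hb.abs_deriv_le hr.abs_le hbβ hγ' hp hq hsol hD).trans ?_
    exact energy_le_mul_sq (by linarith) (by linarith) hμ (by linarith) (by linarith) hp1 hδ
  · obtain ⟨s, q₁, q₂, hq₁, hq₂, hs0, hsτ, hjump, hus, hus'⟩ := htwo _ rfl h
    refine (normP2_le_two_cells hpt (by linarith) hε hε1 hM0 hB.le hBG.le hβ hγ hδ hb.1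
      hr.1.continuous hf.1.continuous hu hu0 hu1 hb.abs_le
      hb.abs_deriv_le hr.abs_le hbβ hγ' hp ?_ ?_ hq₁ hq₂ hs0
      hsτ hjump hus hus' hsol hD).trans ?_
    · have h1 : 1 / κ * (κ * p * ε) = p * ε := by field_simp
      have h2 : 0 ≤ κ * p * ε := by positivity
      rw [hM]
      linarith
    · have : κ * (p * ε) ≤ 1 * (p * ε) := by gcongr
      linarith
    · exact energy_le_mul_sq (by linarith) le_rfl hμ (by linarith) le_rfl hp1 hδ
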